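/- arXiv:2501.15312 — 8 statements merged into one kernel-verified Lean document; each statement's English description precedes it below -/
import Mathlib

section
/- For every ε > 0, the probability that the Erdős–Rényi random graph G(n,1/2) contains a clique on at least (2+ε)·log₂ n vertices tends to 0 as n → ∞. -/
open MeasureTheory Filter Topology

open scoped Classical in
/-- The uniform probability measure on a finite type: normalized counting measure. -/
noncomputable def uniformMeasure (α : Type*) [Fintype α] [MeasurableSpace α] :
    Measure α :=
  (Fintype.card α : ENNReal)⁻¹ • Measure.count

/-- `ω : Sym2 (Fin n) → Bool` encodes the edge indicators of a graph on vertex set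
`{0,…,n-1}`; a finite vertex set `S` is a clique if every pair of distinct
vertices of `S` forms an edge. -/
def IsClique (n : ℕ) (ω : Sym2 (Fin n) → Bool) (S : Finset (Fin n)) : Prop :=
  ∀ i ∈ S, ∀ j ∈ S, i ≠ j → ω s(i, j) = true

theorem aux_card {α : Type*} [Fintype α] [DecidableEq α] (E : Finset α) :
    (Fintype.piFinset (fun e : α => if e ∈ E then ({true} : Finset Bool) else Finset.univ)).card
      * 2 ^ E.card = 2 ^ Fintype.card α := by
  rw [Fintype.card_piFinset]
  have h1 : (2 : ℕ) ^ E.card = ∏ e : α, if e ∈ E then 2 else 1 := by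
    rw [Finset.prod_ite_mem]; simp
  have h2 : (2 : ℕ) ^ Fintype.card α = ∏ e : α, 2 := by simp
  rw [h1, h2, ← Finset.prod_mul_distrib]
  refine Finset.prod_congr rfl fun e _ => ?_
  by_cases h : e ∈ E <;> simp [h]

theorem aux_measure (n : ℕ) (S : Finset (Fin n)) :
    uniformMeasure (Sym2 (Fin n) → Bool) {ω | IsClique n ω S}
      ≤ ENNReal.ofReal ((2 : ℝ) ^ (S.card.choose 2))⁻¹ := by
  set E : Finset (Sym2 (Fin n)) := S.offDiag.image Sym2.mk.uncurry with hE
  have hEc : E.card = S.card.choose 2 := by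
    rw [hE]; exact Sym2.card_image_offDiag S
  have hset : {ω | IsClique n ω S} =
      ((Fintype.piFinset (fun e : Sym2 (Fin n) =>
        if e ∈ E then ({true} : Finset Bool) else Finset.univ) : Finset _) :
          Set (Sym2 (Fin n) → Bool)) := by
    ext ω
    simp only [Set.mem_ofPred_eq, Finset.mem_coe, Fintype.mem_piFinset]
    constructor
    · intro h e
      by_cases he : e ∈ E
      · rw [if_pos he]
        rw [hE, Finset.mem_image] at he
        obtain ⟨⟨i, j⟩, hij, rfl⟩ := he
        rw [Finset.mem_offDiag] at hij
        simpa using h i hij.1 j hij.2.1 hij.2.2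
      · simp [he]
    · intro h i hi j hj hij
      have := h s(i, j)
      rw [if_pos] at this
      · simpa using this
      · rw [hE, Finset.mem_image]
        exact ⟨(i, j), by simp [hi, hj, hij], rfl⟩
  have hc := aux_card E
  rw [hEc] at hc
  rw [hset, uniformMeasure, Measure.smul_apply, Measure.count_apply_finset, smul_eq_mul]
  set c := (Fintype.piFinset (fun e : Sym2 (Fin n) =>
        if e ∈ E then ({true} : Finset Bool) else Finset.univ)).card
  have hF : Fintype.card (Sym2 (Fin n) → Bool) = c * 2 ^ (S.card.choose 2) := by
    rw [hc]; simp
  have hc0 : c ≠ 0 := by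
    intro h0
    rw [h0, zero_mul] at hc
    exact absurd hc.symm (by positivity)
  rw [hF]
  apply le_of_eq
  rw [ENNReal.ofReal_inv_of_pos (by positivity), ENNReal.ofReal_pow (by norm_num)]
  push_cast
  rw [ENNReal.mul_inv (by simp) (by simp), mul_right_comm,
    ENNReal.inv_mul_cancel (by exact_mod_cast hc0) (by simp)]
  simp

theorem aux_real (ε : ℝ) (hε : 0 < ε) (n k : ℕ) (hn : 2 ≤ n)
    (hk : (2 + ε) * Real.logb 2 n ≤ k) (h1 : 1 ≤ ε * Real.logb 2 n) :
    (n : ℝ) ^ k * ((2 : ℝ) ^ (k.choose 2))⁻¹ ≤ 2 ^ ((1 - ε * Real.logb 2 n) / 2) := by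
  set L := Real.logb 2 n with hL
  have hn0 : (0 : ℝ) < n := by positivity
  have hLn : (2 : ℝ) ^ L = n := Real.rpow_logb (by norm_num) (by norm_num) hn0
  have hL1 : 1 ≤ L := by
    rw [hL, Real.le_logb_iff_rpow_le (by norm_num) hn0]
    simpa using (by exact_mod_cast hn : (2 : ℝ) ≤ n)
  have hk1 : (1 : ℝ) ≤ k := by nlinarith
  rw [← hLn, ← Real.rpow_natCast, ← Real.rpow_natCast, ← Real.rpow_mul (by norm_num),
    ← Real.rpow_neg (by norm_num), ← Real.rpow_add (by norm_num), Nat.cast_choose_two]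
  apply Real.rpow_le_rpow_of_exponent_le (by norm_num)
  have : 0 ≤ (k : ℝ) * (k - (2 + ε) * L) := mul_nonneg (by linarith) (by linarith)
  nlinarith [mul_nonneg (sub_nonneg.2 hk1) (sub_nonneg.2 h1)]

theorem aux_bound (ε : ℝ) (hε : 0 < ε) (n : ℕ) (hn : 2 ≤ n)
    (h1 : 1 ≤ ε * Real.logb 2 n) :
    uniformMeasure (Sym2 (Fin n) → Bool)
          {ω | ∃ S : Finset (Fin n),
            (2 + ε) * Real.logb 2 n ≤ (S.card : ℝ) ∧ IsClique n ω S}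
      ≤ ENNReal.ofReal (2 ^ ((1 - ε * Real.logb 2 n) / 2)) := by
  set k := ⌈(2 + ε) * Real.logb 2 n⌉₊ with hk
  have hsub : {ω | ∃ S : Finset (Fin n),
            (2 + ε) * Real.logb 2 n ≤ (S.card : ℝ) ∧ IsClique n ω S} ⊆
      ⋃ S ∈ Finset.powersetCard k (Finset.univ : Finset (Fin n)), {ω | IsClique n ω S} := by
    rintro ω ⟨S, hS, hcl⟩
    obtain ⟨T, hTS, hT⟩ := Finset.exists_subset_card_eq (Nat.ceil_le.2 hS)
    simp only [Set.mem_iUnion, Finset.mem_powersetCard]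
    exact ⟨T, ⟨Finset.subset_univ _, hT⟩, fun i hi j hj => hcl i (hTS hi) j (hTS hj)⟩
  refine (measure_mono hsub).trans ((measure_biUnion_finset_le _ _).trans ?_)
  calc _ ≤ ∑ S ∈ Finset.powersetCard k (Finset.univ : Finset (Fin n)),
        ENNReal.ofReal ((2 : ℝ) ^ (k.choose 2))⁻¹ := by
        refine Finset.sum_le_sum fun S hS => ?_
        have := aux_measure n S
        rwa [(Finset.mem_powersetCard.1 hS).2] at this
    _ = ENNReal.ofReal ((n.choose k : ℝ) * ((2 : ℝ) ^ (k.choose 2))⁻¹) := by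
        rw [Finset.sum_const, Finset.card_powersetCard, Finset.card_univ, Fintype.card_fin,
          nsmul_eq_mul, ENNReal.ofReal_mul (by positivity), ENNReal.ofReal_natCast]
    _ ≤ _ := by
        apply ENNReal.ofReal_le_ofReal
        refine le_trans ?_ (aux_real ε hε n k hn (Nat.le_ceil _) h1)
        gcongr
        exact_mod_cast Nat.choose_le_pow n k

/-- for every `ε > 0`, whp the Erdős–Rényi graph `G(n,1/2)` (uniform
measure over all graphs on `n` vertices) contains no clique on at least
`(2+ε)·log₂ n` vertices. -/
theorem clique_number_upper_bound (ε : ℝ) (hε : 0 < ε) :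
    Tendsto
      (fun n : ℕ =>
        uniformMeasure (Sym2 (Fin n) → Bool)
          {ω | ∃ S : Finset (Fin n),
            (2 + ε) * Real.logb 2 n ≤ (S.card : ℝ) ∧ IsClique n ω S})
      atTop (𝓝 0) := by
  have hL : Tendsto (fun n : ℕ => ε * Real.logb 2 n) atTop atTop :=
    ((Real.tendsto_logb_atTop (by norm_num)).comp tendsto_natCast_atTop_atTop).const_mul_atTop hε
  have hlim : Tendsto (fun n : ℕ => ENNReal.ofReal (2 ^ ((1 - ε * Real.logb 2 n) / 2)))
      atTop (𝓝 0) := by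
    rw [← ENNReal.ofReal_zero]
    apply ENNReal.tendsto_ofReal
    have hb : Tendsto (fun x : ℝ => (2 : ℝ) ^ x) atBot (𝓝 0) :=
      tendsto_rpow_atBot_of_base_gt_one 2 (by norm_num)
    refine hb.comp ?_
    refine Tendsto.atBot_div_const (by norm_num) ?_
    exact tendsto_atBot_add_const_left _ 1 (tendsto_neg_atTop_atBot.comp hL)
  refine tendsto_of_tendsto_of_tendsto_of_le_of_le' tendsto_const_nhds hlim
    (Eventually.of_forall fun n => zero_le) ?_
  filter_upwards [hL.eventually_ge_atTop 1, eventually_ge_atTop 2] with n h1 h2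
  exact aux_bound ε hε n h2 h1
end

section
/- For every ε with 0 < ε < 2, the probability that the Erdős–Rényi random graph G(n,1/2) contains a clique on at least (2−ε)·log₂ n vertices tends to 1 as n → ∞. (Combined with the matching upper bound, the clique number of G(n,1/2) equals 2(1+o(1))·log₂ n whp.) -/
open MeasureTheory Filter Topology

section Helpers

open Finset

lemma card_forced {α : Type*} [Fintype α] [DecidableEq α] (E : Finset α) :
    ((univ.filter (fun ω : α → Bool => ∀ e ∈ E, ω e = true)).card : ℝ)
      = (Fintype.card (α → Bool) : ℝ) / 2 ^ E.card := by
  have h1 : (univ.filter (fun ω : α → Bool => ∀ e ∈ E, ω e = true))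
      = Fintype.piFinset (fun e => if e ∈ E then {true} else (univ : Finset Bool)) := by
    ext ω
    simp only [mem_filter, mem_univ, true_and, Fintype.mem_piFinset]
    refine forall_congr' fun e => ?_
    by_cases h : e ∈ E <;> simp [h]
  have h2 : (univ.filter (fun ω : α → Bool => ∀ e ∈ E, ω e = true)).card * 2 ^ E.card
      = Fintype.card (α → Bool) := by
    rw [h1, Fintype.card_piFinset, Fintype.card_fun, Fintype.card_bool]
    have : (2 : ℕ) ^ E.card = ∏ e : α, if e ∈ E then 2 else 1 := by
      rw [Finset.prod_ite_mem, Finset.univ_inter, Finset.prod_const]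
    rw [this, ← Finset.prod_mul_distrib]
    have : ∀ e : α, (if e ∈ E then ({true} : Finset Bool) else univ).card
        * (if e ∈ E then 2 else 1) = 2 := by
      intro e; by_cases h : e ∈ E <;> simp [h]
    simp only [this, Finset.prod_const, Finset.card_univ]
  rw [eq_div_iff (by positivity)]
  exact_mod_cast h2

/-- edges inside `S` -/
def edgesOf {n : ℕ} (S : Finset (Fin n)) : Finset (Sym2 (Fin n)) := S.offDiag.image (Function.uncurry Sym2.mk)

lemma card_edgesOf {n : ℕ} (S : Finset (Fin n)) : (edgesOf S).card = S.card.choose 2 :=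
  Sym2.card_image_offDiag S

lemma mem_edgesOf {n : ℕ} (S : Finset (Fin n)) (i j : Fin n) :
    s(i, j) ∈ edgesOf S ↔ i ∈ S ∧ j ∈ S ∧ i ≠ j := by
  unfold edgesOf
  simp only [mem_image, mem_offDiag, Prod.exists, Function.uncurry]
  constructor
  · rintro ⟨a, b, ⟨ha, hb, hab⟩, h⟩
    rcases Sym2.eq_iff.1 h with ⟨rfl, rfl⟩ | ⟨rfl, rfl⟩
    · exact ⟨ha, hb, hab⟩
    · exact ⟨hb, ha, hab.symm⟩
  · intro h
    exact ⟨i, j, h, rfl⟩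

lemma isClique_iff {n : ℕ} (ω : Sym2 (Fin n) → Bool) (S : Finset (Fin n)) :
    IsClique n ω S ↔ ∀ e ∈ edgesOf S, ω e = true := by
  constructor
  · intro h e
    induction e using Sym2.ind with
    | _ i j =>
      intro he
      obtain ⟨a, b, c⟩ := (mem_edgesOf S i j).1 he
      exact h i a j b c
  · intro h i hi j hj hij
    exact h _ ((mem_edgesOf S i j).2 ⟨hi, hj, hij⟩)

lemma edgesOf_inter {n : ℕ} (S T : Finset (Fin n)) :
    edgesOf S ∩ edgesOf T = edgesOf (S ∩ T) := by
  ext e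
  induction e using Sym2.ind with
  | _ i j =>
    simp only [mem_inter, mem_edgesOf]
    tauto

lemma card_edges_union {n k : ℕ} (S T : Finset (Fin n)) (hS : S.card = k) (hT : T.card = k) :
    (edgesOf S ∪ edgesOf T).card + (S ∩ T).card.choose 2 = k.choose 2 + k.choose 2 := by
  have := Finset.card_union_add_card_inter (edgesOf S) (edgesOf T)
  rw [edgesOf_inter, card_edgesOf, card_edgesOf, card_edgesOf, hS, hT] at this
  exact this

open scoped Classical in
lemma second_moment (n k : ℕ) :
    ((univ.filter (fun ω : Sym2 (Fin n) → Bool =>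
        ∀ S ∈ powersetCard k (univ : Finset (Fin n)), ¬ IsClique n ω S)).card : ℝ)
      * (n.choose k : ℝ) ^ 2
    ≤ (Fintype.card (Sym2 (Fin n) → Bool) : ℝ) *
      ∑ S ∈ powersetCard k (univ : Finset (Fin n)), ∑ T ∈ powersetCard k (univ : Finset (Fin n)),
        ((2 : ℝ) ^ ((S ∩ T).card.choose 2) - 1) := by
  set P := powersetCard k (univ : Finset (Fin n)) with hP
  have hPc : (P.card : ℝ) = n.choose k := by simp [hP]
  set a : ℝ := (Fintype.card (Sym2 (Fin n) → Bool) : ℝ) with ha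
  set p : ℝ := 1 / 2 ^ (k.choose 2) with hp
  have hp0 : 0 < p := by positivity
  set N : ℝ := (n.choose k : ℝ) with hN
  set I : Finset (Fin n) → (Sym2 (Fin n) → Bool) → ℝ :=
    fun S ω => if IsClique n ω S then 1 else 0 with hI
  set X : (Sym2 (Fin n) → Bool) → ℝ := fun ω => ∑ S ∈ P, I S ω with hX
  set B := univ.filter (fun ω : Sym2 (Fin n) → Bool => ∀ S ∈ P, ¬ IsClique n ω S) with hB
  have h1 : ∀ S ∈ P, ∑ ω, I S ω = a * p := by
    intro S hS
    have hc := (mem_powersetCard.1 hS).2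
    have := card_forced (edgesOf S)
    simp only [← isClique_iff, card_edgesOf, hc] at this
    simp only [hI, Finset.sum_boole]
    rw [hp, mul_one_div, ← this]
  have h2 : ∀ S ∈ P, ∀ T ∈ P, ∑ ω, I S ω * I T ω
      = a * p ^ 2 * 2 ^ ((S ∩ T).card.choose 2) := by
    intro S hS T hT
    have hc := card_edges_union S T (mem_powersetCard.1 hS).2 (mem_powersetCard.1 hT).2
    have := card_forced (edgesOf S ∪ edgesOf T)
    have e : ∀ ω, I S ω * I T ω = if (∀ e ∈ edgesOf S ∪ edgesOf T, ω e = true) then 1 else 0 := by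
      intro ω
      simp only [hI, isClique_iff, mem_union, or_imp, forall_and]
      split_ifs <;> simp_all
    simp only [e, Finset.sum_boole]
    have hh : (2 : ℝ) ^ (edgesOf S ∪ edgesOf T).card * 2 ^ ((S ∩ T).card.choose 2)
        = 2 ^ (k.choose 2) * 2 ^ (k.choose 2) := by
      rw [← pow_add, ← pow_add, hc]
    have key : a * p ^ 2 * 2 ^ ((S ∩ T).card.choose 2) = a / 2 ^ (edgesOf S ∪ edgesOf T).card := by
      rw [hp, eq_div_iff (by positivity)]
      field_simp
      rw [mul_comm, mul_comm] at hh
      nlinarith [hh]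
    rw [key, ← this]
  have s1 : ∑ ω, X ω = a * (N * p) := by
    simp only [hX]
    rw [Finset.sum_comm, Finset.sum_congr rfl h1, Finset.sum_const, nsmul_eq_mul, hPc]
    ring
  have s2 : ∑ ω, X ω ^ 2 = a * p ^ 2 * ∑ S ∈ P, ∑ T ∈ P, (2 : ℝ) ^ ((S ∩ T).card.choose 2) := by
    simp only [hX, sq, Finset.sum_mul_sum]
    rw [Finset.sum_comm, Finset.mul_sum]
    refine Finset.sum_congr rfl fun S hS => ?_
    rw [Finset.sum_comm, Finset.mul_sum]
    refine Finset.sum_congr rfl fun T hT => ?_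
    rw [h2 S hS T hT, sq]
  have s3 : ∑ ω, (X ω - N * p) ^ 2 = a * p ^ 2 *
      (∑ S ∈ P, ∑ T ∈ P, (2 : ℝ) ^ ((S ∩ T).card.choose 2) - N ^ 2) := by
    have : ∀ ω, (X ω - N * p) ^ 2 = X ω ^ 2 - (2 * (N * p)) * X ω + (N * p) ^ 2 := by
      intro ω; ring
    simp only [this, Finset.sum_add_distrib, Finset.sum_sub_distrib, ← Finset.mul_sum, s1, s2,
      Finset.sum_const, nsmul_eq_mul, Finset.card_univ, ← ha]
    ring
  have s4 : (B.card : ℝ) * (N * p) ^ 2 ≤ ∑ ω, (X ω - N * p) ^ 2 := by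
    calc (B.card : ℝ) * (N * p) ^ 2 = ∑ ω ∈ B, (N * p) ^ 2 := by simp
      _ = ∑ ω ∈ B, (X ω - N * p) ^ 2 := by
        refine Finset.sum_congr rfl fun ω hω => ?_
        have : X ω = 0 := by
          refine Finset.sum_eq_zero fun S hS => ?_
          simp [hI, (mem_filter.1 hω).2 S hS]
        rw [this]; ring
      _ ≤ _ := Finset.sum_le_sum_of_subset_of_nonneg (subset_univ _) (fun _ _ _ => sq_nonneg _)
  have s5 : ∑ S ∈ P, ∑ T ∈ P, ((2 : ℝ) ^ ((S ∩ T).card.choose 2) - 1)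
      = ∑ S ∈ P, ∑ T ∈ P, (2 : ℝ) ^ ((S ∩ T).card.choose 2) - N ^ 2 := by
    simp only [Finset.sum_sub_distrib, Finset.sum_const, nsmul_eq_mul, hPc]
    ring
  rw [s5]
  rw [s3] at s4
  have hp2 : 0 < p ^ 2 := by positivity
  refine le_of_mul_le_mul_left ?_ hp2
  linarith

lemma card_supersets (n k : ℕ) (A : Finset (Fin n)) :
    ((powersetCard k (univ : Finset (Fin n))).filter (fun T => A ⊆ T)).card
      ≤ (n - A.card).choose (k - A.card) := by
  have : (n - A.card).choose (k - A.card)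
      = (powersetCard (k - A.card) (univ \ A)).card := by
    rw [card_powersetCard, card_sdiff_of_subset (subset_univ _)]; simp
  rw [this]
  refine card_le_card_of_injOn (fun T => T \ A) ?_ ?_
  · intro T hT
    simp only [coe_filter, mem_powersetCard, Set.mem_ofPred_eq] at hT
    simp only [mem_coe, mem_powersetCard]
    refine ⟨sdiff_subset_sdiff (subset_univ _) (le_refl _), ?_⟩
    rw [card_sdiff_of_subset hT.2, hT.1.2]
  · intro T hT U hU h
    simp only [coe_filter, mem_powersetCard, Set.mem_ofPred_eq] at hT hU
    simp only at h
    rw [← sdiff_union_of_subset hT.2, h, sdiff_union_of_subset hU.2]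

lemma card_inter_eq (n k j : ℕ) (hj : j ≤ k) (hk : k ≤ n) (S : Finset (Fin n)) (hS : S.card = k) :
    ((powersetCard k (univ : Finset (Fin n))).filter (fun T => (S ∩ T).card = j)).card
      * n.choose j ≤ k.choose j ^ 2 * n.choose k := by
  have h1 : ((powersetCard k (univ : Finset (Fin n))).filter (fun T => (S ∩ T).card = j)).card
      ≤ k.choose j * (n - j).choose (k - j) := by
    calc _ ≤ ((powersetCard j S).biUnion (fun A =>
            (powersetCard k (univ : Finset (Fin n))).filter (fun T => A ⊆ T))).card := by
          refine card_le_card fun T hT => ?_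
          rw [mem_filter] at hT
          rw [mem_biUnion]
          exact ⟨S ∩ T, mem_powersetCard.2 ⟨inter_subset_left, hT.2⟩,
            mem_filter.2 ⟨hT.1, inter_subset_right⟩⟩
      _ ≤ (powersetCard j S).card * (n - j).choose (k - j) := by
          refine card_biUnion_le_card_mul _ _ _ fun A hA => ?_
          have := card_supersets n k A
          rwa [(mem_powersetCard.1 hA).2] at this
      _ = _ := by rw [card_powersetCard, hS]
  have h2 := Nat.choose_mul (n := n) (k := k) (s := j) hj
  calc _ ≤ k.choose j * (n - j).choose (k - j) * n.choose j := Nat.mul_le_mul_right _ h1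
    _ = k.choose j * (n.choose j * (n - j).choose (k - j)) := by ring
    _ = k.choose j ^ 2 * n.choose k := by rw [← h2]; ring

lemma term_bound (n k j : ℕ) (r : ℝ) (hr : 0 ≤ r) (hn : 0 < n) (hj : j ≤ k) (hk : k ≤ n)
    (h2k : 2 * k ≤ n + 2) (hr2 : (2 : ℝ) ^ (k - 1) ≤ r ^ 2)
    (S : Finset (Fin n)) (hS : S.card = k) :
    (((powersetCard k (univ : Finset (Fin n))).filter (fun T => (S ∩ T).card = j)).card : ℝ)
      * 2 ^ (j.choose 2) ≤ n.choose k * (2 * k ^ 3 * r / n) ^ j := by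
  set c := ((powersetCard k (univ : Finset (Fin n))).filter (fun T => (S ∩ T).card = j)).card
  have h1 : (c : ℝ) * n.choose j ≤ (k.choose j : ℝ) ^ 2 * n.choose k := by
    exact_mod_cast card_inter_eq n k j hj hk S hS
  have hn' : (0 : ℝ) < n := by exact_mod_cast hn
  have hpow : (2 : ℝ) ^ (j.choose 2) ≤ r ^ j := by
    refine le_of_sq_le_sq ?_ (by positivity)
    have e : j.choose 2 * 2 = (j - 1) * j := by
      rw [Nat.choose_two_right, Nat.div_mul_cancel (Nat.even_mul_pred_self j).two_dvd, mul_comm]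
    calc ((2 : ℝ) ^ (j.choose 2)) ^ 2 = (2 ^ (j - 1)) ^ j := by rw [← pow_mul, ← pow_mul, e]
      _ ≤ (2 ^ (k - 1)) ^ j := by
        gcongr
        · norm_num
      _ ≤ (r ^ 2) ^ j := by gcongr
      _ = (r ^ j) ^ 2 := by rw [← pow_mul, ← pow_mul, mul_comm]
  have hlow : ((n : ℝ) / 2) ^ j ≤ (k : ℝ) ^ j * n.choose j := by
    have a1 : (n + 1 - j) ^ j ≤ Nat.factorial j * n.choose j := by
      have := Nat.pow_sub_le_descFactorial n j
      rwa [Nat.descFactorial_eq_factorial_mul_choose] at this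
    have a2 : Nat.factorial j ≤ k ^ j := (Nat.factorial_le_pow j).trans (Nat.pow_le_pow_left hj j)
    have a3 : (n + 1 - j) ^ j ≤ k ^ j * n.choose j := a1.trans (Nat.mul_le_mul_right _ a2)
    have a4 : (n : ℝ) / 2 ≤ ((n + 1 - j : ℕ) : ℝ) := by
      have : n ≤ 2 * (n + 1 - j) := by omega
      have : (n : ℝ) ≤ 2 * ((n + 1 - j : ℕ) : ℝ) := by exact_mod_cast this
      linarith
    calc ((n : ℝ) / 2) ^ j ≤ ((n + 1 - j : ℕ) : ℝ) ^ j := by gcongr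
      _ ≤ _ := by exact_mod_cast a3
  have hch : (k.choose j : ℝ) ≤ (k : ℝ) ^ j := by exact_mod_cast Nat.choose_le_pow k j
  have h3 : (c : ℝ) * ((n : ℝ) / 2) ^ j ≤ (k : ℝ) ^ j * (((k : ℝ) ^ j) ^ 2 * n.choose k) := by
    calc (c : ℝ) * ((n : ℝ) / 2) ^ j ≤ c * ((k : ℝ) ^ j * n.choose j) := by gcongr
      _ = (k : ℝ) ^ j * (c * n.choose j) := by ring
      _ ≤ (k : ℝ) ^ j * ((k.choose j : ℝ) ^ 2 * n.choose k) := by gcongr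
      _ ≤ _ := by gcongr
  have hpos : 0 < ((n : ℝ) / 2) ^ j := by positivity
  refine le_of_mul_le_mul_right ?_ hpos
  have e2 : (2 * (k : ℝ) ^ 3 * r / n) ^ j * ((n : ℝ) / 2) ^ j = (k : ℝ) ^ j * ((k : ℝ) ^ j) ^ 2 * r ^ j := by
    rw [← mul_pow, ← pow_mul, mul_comm j 2, pow_mul, ← mul_pow, ← mul_pow]
    congr 1
    field_simp
  calc (c : ℝ) * 2 ^ (j.choose 2) * ((n : ℝ) / 2) ^ j
      ≤ c * r ^ j * ((n : ℝ) / 2) ^ j := by gcongr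
    _ = (c * ((n : ℝ) / 2) ^ j) * r ^ j := by ring
    _ ≤ (k : ℝ) ^ j * (((k : ℝ) ^ j) ^ 2 * n.choose k) * r ^ j := by gcongr
    _ = n.choose k * ((2 * k ^ 3 * r / n) ^ j * ((n : ℝ) / 2) ^ j) := by rw [e2]; ring
    _ = _ := by ring

lemma inner_bound (n k : ℕ) (r : ℝ) (hr : 0 ≤ r) (hn : 0 < n) (hk : k ≤ n)
    (h2k : 2 * k ≤ n + 2) (hr2 : (2 : ℝ) ^ (k - 1) ≤ r ^ 2) (hq : 2 * k ^ 3 * r / n ≤ 1)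
    (S : Finset (Fin n)) (hS : S.card = k) :
    ∑ T ∈ powersetCard k (univ : Finset (Fin n)), ((2 : ℝ) ^ ((S ∩ T).card.choose 2) - 1)
      ≤ n.choose k * (k * (2 * k ^ 3 * r / n) ^ 2) := by
  have hq0 : 0 ≤ 2 * (k : ℝ) ^ 3 * r / n := by positivity
  calc _ ≤ ∑ T ∈ powersetCard k (univ : Finset (Fin n)), ∑ j ∈ Icc 2 k,
        if (S ∩ T).card = j then (2 : ℝ) ^ (j.choose 2) else 0 := by
        refine Finset.sum_le_sum fun T hT => ?_
        rw [Finset.sum_ite_eq]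
        have hle : (S ∩ T).card ≤ k := hS ▸ card_le_card inter_subset_left
        split_ifs with h
        · linarith
        · have : (S ∩ T).card < 2 := by
            rw [mem_Icc] at h; omega
          rw [Nat.choose_eq_zero_of_lt this]; simp
    _ = ∑ j ∈ Icc 2 k, (((powersetCard k (univ : Finset (Fin n))).filter
          (fun T => (S ∩ T).card = j)).card : ℝ) * 2 ^ (j.choose 2) := by
        rw [Finset.sum_comm]
        refine Finset.sum_congr rfl fun j _ => ?_
        rw [← Finset.sum_filter, Finset.sum_const, nsmul_eq_mul]
    _ ≤ ∑ j ∈ Icc 2 k, (n.choose k : ℝ) * (2 * k ^ 3 * r / n) ^ 2 := by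
        refine Finset.sum_le_sum fun j hj => ?_
        rw [mem_Icc] at hj
        refine (term_bound n k j r hr hn hj.2 hk h2k hr2 S hS).trans ?_
        gcongr ?_ * ?_
        exact pow_le_pow_of_le_one hq0 hq hj.1
    _ = ((k + 1 - 2 : ℕ) : ℝ) * ((n.choose k : ℝ) * (2 * k ^ 3 * r / n) ^ 2) := by
        rw [Finset.sum_const, nsmul_eq_mul, Nat.card_Icc]
    _ ≤ (k : ℝ) * ((n.choose k : ℝ) * (2 * k ^ 3 * r / n) ^ 2) := by
        gcongr
        omega
    _ = _ := by ring

open scoped Classical in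
lemma bad_bound (n k : ℕ) (r : ℝ) (hr : 0 ≤ r) (hn : 0 < n) (hk : k ≤ n)
    (h2k : 2 * k ≤ n + 2) (hr2 : (2 : ℝ) ^ (k - 1) ≤ r ^ 2) (hq : 2 * k ^ 3 * r / n ≤ 1) :
    ((univ.filter (fun ω : Sym2 (Fin n) → Bool =>
        ∀ S ∈ powersetCard k (univ : Finset (Fin n)), ¬ IsClique n ω S)).card : ℝ)
    ≤ (Fintype.card (Sym2 (Fin n) → Bool) : ℝ) * (k * (2 * k ^ 3 * r / n) ^ 2) := by
  have h := second_moment n k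
  have hN : (0 : ℝ) < n.choose k := by exact_mod_cast Nat.choose_pos hk
  have h' : ∑ S ∈ powersetCard k (univ : Finset (Fin n)),
      ∑ T ∈ powersetCard k (univ : Finset (Fin n)), ((2 : ℝ) ^ ((S ∩ T).card.choose 2) - 1)
      ≤ (n.choose k : ℝ) ^ 2 * (k * (2 * k ^ 3 * r / n) ^ 2) := by
    refine (Finset.sum_le_sum fun S hS =>
      inner_bound n k r hr hn hk h2k hr2 hq S (mem_powersetCard.1 hS).2).trans ?_
    rw [Finset.sum_const, nsmul_eq_mul, card_powersetCard, card_univ, Fintype.card_fin]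
    apply le_of_eq; ring
  have hN2 : (0 : ℝ) < (n.choose k : ℝ) ^ 2 := by positivity
  refine le_of_mul_le_mul_right (h.trans ?_) hN2
  calc _ ≤ (Fintype.card (Sym2 (Fin n) → Bool) : ℝ) *
        ((n.choose k : ℝ) ^ 2 * (k * (2 * k ^ 3 * r / n) ^ 2)) := by gcongr
    _ = _ := by ring

open scoped Classical in
lemma uniformMeasure_eq (α : Type*) [Fintype α] [Nonempty α] [MeasurableSpace α]
    [MeasurableSingletonClass α] (p : α → Prop) :
    uniformMeasure α {x | p x}
      = ENNReal.ofReal (1 - ((univ.filter (fun x => ¬ p x)).card : ℝ) / Fintype.card α) := by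
  have hc : (0 : ℝ) < Fintype.card α := by exact_mod_cast Fintype.card_pos
  have e : {x | p x} = ((univ.filter p : Finset α) : Set α) := by ext; simp
  have h : ((univ.filter p).card : ℝ) + ((univ.filter (fun x => ¬ p x)).card : ℝ)
      = Fintype.card α := by
    exact_mod_cast Finset.card_filter_add_card_filter_not (s := (univ : Finset α)) p
  have e2 : 1 - ((univ.filter (fun x => ¬ p x)).card : ℝ) / Fintype.card α
      = (Fintype.card α : ℝ)⁻¹ * (univ.filter p).card := by
    field_simp; linarith
  rw [e2, ENNReal.ofReal_mul (by positivity), ENNReal.ofReal_inv_of_pos hc,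
    ENNReal.ofReal_natCast, ENNReal.ofReal_natCast, uniformMeasure, Measure.smul_apply, e,
    Measure.count_apply_finset, smul_eq_mul]

lemma uniformMeasure_ge (α : Type*) [Fintype α] [Nonempty α] [MeasurableSpace α]
    [MeasurableSingletonClass α] (p : α → Prop) (B : Finset α) (c : ℝ)
    (hB : ∀ x, x ∉ B → p x) (hc : (B.card : ℝ) ≤ Fintype.card α * c) :
    ENNReal.ofReal (1 - c) ≤ uniformMeasure α {x | p x} := by
  classical
  rw [uniformMeasure_eq]
  apply ENNReal.ofReal_le_ofReal
  apply sub_le_sub_left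
  have h0 : (0 : ℝ) < Fintype.card α := by exact_mod_cast Fintype.card_pos
  rw [div_le_iff₀ h0, mul_comm]
  refine le_trans ?_ hc
  refine Nat.cast_le.2 (Finset.card_le_card fun x hx => ?_)
  by_contra h
  exact (Finset.mem_filter.1 hx).2 (hB x h)

lemma uniformMeasure_le (α : Type*) [Fintype α] [Nonempty α] [MeasurableSpace α]
    [MeasurableSingletonClass α] (p : α → Prop) : uniformMeasure α {x | p x} ≤ 1 := by
  classical
  rw [uniformMeasure_eq, ← ENNReal.ofReal_one]
  apply ENNReal.ofReal_le_ofReal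
  apply sub_le_self
  positivity

lemma exists_bad (n k : ℕ) (r : ℝ) (hr : 0 ≤ r) (hn : 0 < n) (hk : k ≤ n)
    (h2k : 2 * k ≤ n + 2) (hr2 : (2 : ℝ) ^ (k - 1) ≤ r ^ 2) (hq : 2 * k ^ 3 * r / n ≤ 1) :
    ∃ B : Finset (Sym2 (Fin n) → Bool),
      (∀ ω, ω ∉ B → ∃ S : Finset (Fin n), S.card = k ∧ IsClique n ω S) ∧
      (B.card : ℝ) ≤ (Fintype.card (Sym2 (Fin n) → Bool) : ℝ) * (k * (2 * k ^ 3 * r / n) ^ 2) := by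
  classical
  refine ⟨_, ?_, bad_bound n k r hr hn hk h2k hr2 hq⟩
  intro ω hω
  by_contra hcon
  refine hω (Finset.mem_filter.2 ⟨Finset.mem_univ _, fun S hS hcl => hcon ⟨S, ?_, hcl⟩⟩)
  exact (Finset.mem_powersetCard.1 hS).2

end Helpers

/-- for every `ε` with `0 < ε < 2`, whp the Erdős–Rényi graph
`G(n,1/2)` (uniform measure over all graphs on `n` vertices) contains a clique
on at least `(2-ε)·log₂ n` vertices. -/
theorem clique_number_lower_bound (ε : ℝ) (hε₀ : 0 < ε) (hε₂ : ε < 2) :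
    Tendsto
      (fun n : ℕ =>
        uniformMeasure (Sym2 (Fin n) → Bool)
          {ω | ∃ S : Finset (Fin n),
            (2 - ε) * Real.logb 2 n ≤ (S.card : ℝ) ∧ IsClique n ω S})
      atTop (𝓝 1) := by
  have hL : Tendsto (fun n : ℕ => (n : ℝ)) atTop atTop := tendsto_natCast_atTop_atTop
  set δ : ℝ := ε / 14 with hδ
  have hδ0 : 0 < δ := by positivity
  set y : ℕ → ℝ := fun n => (n : ℝ) ^ (-δ) with hy
  have hy0 : Tendsto y atTop (𝓝 0) := (tendsto_rpow_neg_atTop hδ0).comp hL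
  set k : ℕ → ℕ := fun n => ⌈(2 - ε) * Real.logb 2 n⌉₊ with hk
  -- k ≤ n^δ eventually
  have hkle : ∀ᶠ n : ℕ in atTop, (k n : ℝ) ≤ (n : ℝ) ^ δ := by
    have h1 := (isLittleO_log_rpow_atTop hδ0).bound
      (c := Real.log 2 / 4) (by have := Real.log_pos one_lt_two; positivity)
    have h2 := (tendsto_rpow_atTop hδ0).eventually_ge_atTop 2
    filter_upwards [hL.eventually h1, hL.eventually h2, eventually_ge_atTop 1] with n h1 h2 h3
    have hn1 : (1 : ℝ) ≤ n := by exact_mod_cast h3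
    have hl2 := Real.log_pos one_lt_two
    have hl := Real.log_nonneg hn1
    have hlb : 0 ≤ Real.logb 2 n := Real.logb_nonneg one_lt_two hn1
    have hp : 0 ≤ (n : ℝ) ^ δ := by positivity
    rw [Real.norm_of_nonneg hl, Real.norm_of_nonneg hp] at h1
    have h4 : Real.logb 2 n ≤ (n : ℝ) ^ δ / 4 := by
      rw [Real.logb, div_le_iff₀ hl2]; linarith
    have h5 := Nat.ceil_lt_add_one (a := (2 - ε) * Real.logb 2 n)
      (mul_nonneg (by linarith) hlb)
    have h6 : (2 - ε) * Real.logb 2 n ≤ 2 * Real.logb 2 n := by nlinarith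
    simp only [hk]
    linarith
  have hyq : ∀ᶠ n : ℕ in atTop, y n < 1 / 2 := hy0.eventually_lt_const (by norm_num)
  have hbad : ∀ᶠ n : ℕ in atTop,
      ENNReal.ofReal (1 - 4 * y n ^ 7) ≤ uniformMeasure (Sym2 (Fin n) → Bool)
          {ω | ∃ S : Finset (Fin n),
            (2 - ε) * Real.logb 2 n ≤ (S.card : ℝ) ∧ IsClique n ω S} := by
    filter_upwards [hkle, hyq, eventually_ge_atTop 1] with n h1 h2 h3
    have hn1 : (1 : ℝ) ≤ n := by exact_mod_cast h3
    have hn0 : (0 : ℝ) < n := by linarith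
    have hyp : 0 < y n := by simp only [hy]; positivity
    have hky : (k n : ℝ) * y n ≤ 1 := by
      calc (k n : ℝ) * y n ≤ (n : ℝ) ^ δ * y n := by gcongr
        _ = 1 := by simp only [hy]; rw [← Real.rpow_add hn0]; simp
    have hksq : (k n : ℝ) ^ 2 ≤ n := by
      calc (k n : ℝ) ^ 2 ≤ ((n : ℝ) ^ δ) ^ 2 := by gcongr
        _ = (n : ℝ) ^ (δ * 2) := by rw [Real.rpow_mul hn0.le]; norm_num
        _ ≤ (n : ℝ) ^ (1 : ℝ) := Real.rpow_le_rpow_of_exponent_le hn1 (by rw [hδ]; linarith)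
        _ = n := Real.rpow_one _
    have hksq' : k n ^ 2 ≤ n := by exact_mod_cast hksq
    have h2k : 2 * k n ≤ n + 2 := by
      have : (2 : ℝ) * k n ≤ n + 2 := by nlinarith [sq_nonneg ((k n : ℝ) - 1)]
      exact_mod_cast this
    have hkn : k n ≤ n := by nlinarith [Nat.le_self_pow (two_ne_zero) (k n)]
    set r : ℝ := (n : ℝ) ^ (1 - ε / 2) with hrdef
    have hr0 : 0 ≤ r := by positivity
    have hlb : 0 ≤ Real.logb 2 n := Real.logb_nonneg one_lt_two hn1
    have hr2 : (2 : ℝ) ^ (k n - 1) ≤ r ^ 2 := by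
      have h5 := Nat.ceil_lt_add_one (a := (2 - ε) * Real.logb 2 n)
        (mul_nonneg (by linarith) hlb)
      have h6 : ((k n - 1 : ℕ) : ℝ) ≤ (2 - ε) * Real.logb 2 n := by
        rcases Nat.eq_zero_or_pos (k n) with h | h
        · rw [h]; simpa using mul_nonneg (by linarith : (0:ℝ) ≤ 2 - ε) hlb
        · rw [Nat.cast_sub h]; simp only [hk]; push_cast; linarith
      calc (2 : ℝ) ^ (k n - 1) = (2 : ℝ) ^ ((k n - 1 : ℕ) : ℝ) := (Real.rpow_natCast _ _).symm
        _ ≤ (2 : ℝ) ^ (Real.logb 2 n * (2 - ε)) :=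
          Real.rpow_le_rpow_of_exponent_le one_le_two (by linarith)
        _ = (n : ℝ) ^ (2 - ε) := by
          rw [Real.rpow_mul (by norm_num), Real.rpow_logb (by norm_num) (by norm_num) hn0]
        _ = r ^ 2 := by
          rw [hrdef, ← Real.rpow_natCast, ← Real.rpow_mul hn0.le]
          congr 1; push_cast; ring
    have hrn : r / n = y n ^ 7 := by
      simp only [hy]
      rw [hrdef, ← Real.rpow_natCast, ← Real.rpow_mul hn0.le, div_eq_mul_inv,
        ← Real.rpow_neg_one, ← Real.rpow_add hn0]
      congr 1; rw [hδ]; push_cast; ring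
    have hqe : 2 * (k n : ℝ) ^ 3 * r / n ≤ 2 * y n ^ 4 := by
      calc 2 * (k n : ℝ) ^ 3 * r / n = 2 * (k n * y n) ^ 3 * y n ^ 4 := by
            rw [mul_div_assoc, hrn]; ring
        _ ≤ 2 * 1 ^ 3 * y n ^ 4 := by gcongr
        _ = _ := by ring
    have hq : 2 * (k n : ℝ) ^ 3 * r / n ≤ 1 := by
      refine hqe.trans ?_
      calc 2 * y n ^ 4 ≤ 2 * (1 / 2) ^ 4 := by gcongr
        _ ≤ 1 := by norm_num
    obtain ⟨B, hB, hb⟩ := exists_bad n (k n) r hr0 h3 hkn h2k hr2 hq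
    have hfin : (k n : ℝ) * (2 * (k n : ℝ) ^ 3 * r / n) ^ 2 ≤ 4 * y n ^ 7 := by
      calc (k n : ℝ) * (2 * (k n : ℝ) ^ 3 * r / n) ^ 2 ≤ k n * (2 * y n ^ 4) ^ 2 := by gcongr
        _ = 4 * (k n * y n) * y n ^ 7 := by ring
        _ ≤ 4 * 1 * y n ^ 7 := by gcongr
        _ = _ := by ring
    refine uniformMeasure_ge _ _ _ _ ?_ (hb.trans (mul_le_mul_of_nonneg_left hfin (by positivity)))
    intro ω hω
    obtain ⟨S, hS, hcl⟩ := hB ω hω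
    refine ⟨S, ?_, hcl⟩
    rw [hS]
    exact Nat.le_ceil _
  refine tendsto_of_tendsto_of_tendsto_of_le_of_le' (g := fun n => ENNReal.ofReal (1 - 4 * y n ^ 7))
    (h := fun _ => 1) ?_ tendsto_const_nhds hbad
    (Eventually.of_forall fun n => uniformMeasure_le _ _)
  rw [← ENNReal.ofReal_one]
  refine ENNReal.tendsto_ofReal ?_
  have := ((hy0.pow 7).const_mul 4).const_sub 1
  simpa using this
end

section
/- Let C_n denote the output of the greedy clique algorithm applied to the Erdős–Rényi random graph G(n,1/2). Then |C_n| / log₂ n converges to 1 in probability as n → ∞; in particular, for every ε > 0, whp the greedy algorithm produces a clique of size at least (1−ε)·log₂ n, i.e., roughly half of the optimal clique size 2(1+o(1))·log₂ n. -/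
open MeasureTheory Filter Topology

open scoped Classical in
/-- The greedy clique algorithm: process the vertices `0,1,…,n-1` in increasing
order, maintaining a clique `C` initialized to `∅`, and add vertex `v` to `C`
iff `v` is adjacent to every vertex currently in `C`.  Here
`ω : Sym2 (Fin n) → Bool` encodes the edge indicators of the graph. -/
noncomputable def greedyClique (n : ℕ) (ω : Sym2 (Fin n) → Bool) : Finset (Fin n) :=
  (List.finRange n).foldl
    (fun C v => if ∀ u ∈ C, ω s(u, v) = true then insert v C else C) ∅


section Helpers

open scoped Classical in
noncomputable def gcStep (n : ℕ) (ω : Sym2 (Fin n) → Bool) (C : Finset (Fin n)) (v : Fin n) :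
    Finset (Fin n) :=
  if ∀ u ∈ C, ω s(u, v) = true then insert v C else C

noncomputable def gcPart (n : ℕ) (ω : Sym2 (Fin n) → Bool) (k : ℕ) : Finset (Fin n) :=
  ((List.finRange n).take k).foldl (gcStep n ω) ∅

lemma gcPart_full (n : ℕ) (ω : Sym2 (Fin n) → Bool) : greedyClique n ω = gcPart n ω n := by
  unfold gcPart
  rw [List.take_of_length_le (by simp)]
  rfl

lemma gcPart_zero (n : ℕ) (ω : Sym2 (Fin n) → Bool) : gcPart n ω 0 = ∅ := by
  simp [gcPart]

lemma gcPart_succ (n : ℕ) (ω : Sym2 (Fin n) → Bool) (k : ℕ) (hk : k < n) :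
    gcPart n ω (k + 1) = gcStep n ω (gcPart n ω k) ⟨k, hk⟩ := by
  unfold gcPart
  rw [List.take_add_one]
  simp [hk]

lemma gcPart_lt (n : ℕ) (ω : Sym2 (Fin n) → Bool) (k : ℕ) (hk : k ≤ n) :
    ∀ u ∈ gcPart n ω k, (u : ℕ) < k := by
  induction k with
  | zero => simp [gcPart_zero]
  | succ k ih =>
    intro u hu
    rw [gcPart_succ n ω k hk] at hu
    unfold gcStep at hu
    split_ifs at hu
    · rcases Finset.mem_insert.1 hu with h | h
      · subst h; simp
      · exact (ih (by omega) u h).trans (by omega)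
    · exact (ih (by omega) u hu).trans (by omega)

lemma gcPart_congr (n : ℕ) (ω ω' : Sym2 (Fin n) → Bool) (k : ℕ) (hk : k ≤ n)
    (h : ∀ a b : Fin n, (a : ℕ) < k → (b : ℕ) < k → ω s(a, b) = ω' s(a, b)) :
    gcPart n ω k = gcPart n ω' k := by
  induction k with
  | zero => simp [gcPart_zero]
  | succ k ih =>
    have e := ih (by omega) (fun a b ha hb => h a b (by omega) (by omega))
    rw [gcPart_succ n ω k hk, gcPart_succ n ω' k hk, e]
    unfold gcStep
    have : (∀ u ∈ gcPart n ω' k, ω s(u, ⟨k, hk⟩) = true) ↔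
        (∀ u ∈ gcPart n ω' k, ω' s(u, ⟨k, hk⟩) = true) := by
      refine forall₂_congr fun u hu => ?_
      have := gcPart_lt n ω' k (by omega) u hu
      rw [h u ⟨k, hk⟩ (by omega) (by simp)]
    simp only [this]

open scoped Classical in
lemma half_count {ι : Type*} [Fintype ι] [DecidableEq ι] (A : Finset (ι → Bool)) (T : Finset ι)
    (hA : ∀ ω ∈ A, ∀ t ∈ T, ∀ b, Function.update ω t b ∈ A) :
    (A.filter (fun ω => ∀ t ∈ T, ω t = true)).card * 2 ^ T.card = A.card := by
  induction T using Finset.induction_on with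
  | empty => simp
  | insert t T ht ih =>
    have ih' := ih (fun ω hω s hs b => hA ω hω s (Finset.mem_insert_of_mem hs) b)
    rw [Finset.card_insert_of_notMem ht, ← ih', pow_succ, ← mul_assoc, mul_right_comm]
    congr 1
    set B := A.filter (fun ω => ∀ t ∈ T, ω t = true) with hB
    have h1 : A.filter (fun ω => ∀ s ∈ insert t T, ω s = true)
        = B.filter (fun ω => ω t = true) := by
      ext ω
      simp only [hB, Finset.mem_filter, Finset.mem_insert, forall_eq_or_imp]
      tauto
    have hBt : ∀ ω ∈ B, ∀ b, Function.update ω t b ∈ B := by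
      intro ω hω b
      simp only [hB, Finset.mem_filter] at hω ⊢
      refine ⟨hA ω hω.1 t (Finset.mem_insert_self _ _) b, fun s hs => ?_⟩
      rw [Function.update_of_ne (by rintro rfl; exact ht hs)]
      exact hω.2 s hs
    have h2 : (B.filter (fun ω => ω t = true)).card = (B.filter (fun ω => ¬ ω t = true)).card := by
      refine Finset.card_bij' (fun ω _ => Function.update ω t false)
        (fun ω _ => Function.update ω t true) ?_ ?_ ?_ ?_
      · intro ω hω
        simp only [Finset.mem_filter] at hω ⊢
        exact ⟨hBt ω hω.1 _, by simp⟩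
      · intro ω hω
        simp only [Finset.mem_filter] at hω ⊢
        exact ⟨hBt ω hω.1 _, by simp⟩
      · intro ω hω
        simp only [Finset.mem_filter] at hω
        simp [← hω.2]
      · intro ω hω
        simp only [Finset.mem_filter, Bool.not_eq_true] at hω
        simp [← hω.2]
    have h3 := Finset.card_filter_add_card_filter_not (s := B) (fun ω => ω t = true)
    rw [h1]
    omega

lemma sum_step (n k : ℕ) (hk : k < n) (F : ℕ → ℝ) :
    ∑ ω : Sym2 (Fin n) → Bool, F (gcPart n ω (k + 1)).card =
      ∑ ω : Sym2 (Fin n) → Bool, (F (gcPart n ω k).card + (1 / 2) ^ (gcPart n ω k).card *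
        (F ((gcPart n ω k).card + 1) - F (gcPart n ω k).card)) := by
  classical
  rw [← Finset.sum_fiberwise (s := Finset.univ) (g := fun ω => gcPart n ω k),
    ← Finset.sum_fiberwise (s := Finset.univ) (g := fun ω => gcPart n ω k)]
  refine Finset.sum_congr rfl fun C _ => ?_
  set A := Finset.univ.filter (fun ω : Sym2 (Fin n) → Bool => gcPart n ω k = C) with hA
  rcases A.eq_empty_or_nonempty with h0 | ⟨ω₀, hω₀⟩
  · simp [h0]
  have hCω : gcPart n ω₀ k = C := by simpa [hA] using hω₀
  have hC : ∀ u ∈ C, (u : ℕ) < k := by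
    rw [← hCω]; exact gcPart_lt n ω₀ k hk.le
  have hcount := half_count A (C.image (fun u => s(u, (⟨k, hk⟩ : Fin n)))) (by
    intro ω hω t ht b
    simp only [hA, Finset.mem_filter, Finset.mem_univ, true_and] at hω ⊢
    rw [← hω]
    apply gcPart_congr n _ _ k hk.le
    intro a c ha hc
    rw [Function.update_of_ne]
    rintro rfl
    obtain ⟨u, hu, hut⟩ := Finset.mem_image.1 ht
    rcases Sym2.eq_iff.1 hut with ⟨_, h⟩ | ⟨_, h⟩
    · rw [← h] at hc; simp at hc
    · rw [← h] at ha; simp at ha)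
  rw [Finset.card_image_of_injective _ (by
    intro a b hab
    rcases Sym2.eq_iff.1 hab with ⟨h, _⟩ | ⟨h, h'⟩
    · exact h
    · exact h.trans h')] at hcount
  simp only [Finset.forall_mem_image] at hcount
  have hkC : (⟨k, hk⟩ : Fin n) ∉ C := fun h => by simpa using hC _ h
  have e1 : ∑ ω ∈ A, F (gcPart n ω (k + 1)).card = ∑ ω ∈ A, (F C.card +
      if (∀ u ∈ C, ω s(u, ⟨k, hk⟩) = true) then (F (C.card + 1) - F C.card) else 0) := by
    refine Finset.sum_congr rfl fun ω hω => ?_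
    have : gcPart n ω k = C := by simpa [hA] using hω
    rw [gcPart_succ n ω k hk, this, gcStep]
    split_ifs
    · rw [Finset.card_insert_of_notMem hkC]; ring
    · ring
  have e2 : ∑ ω ∈ A, (F (gcPart n ω k).card + (1 / 2) ^ (gcPart n ω k).card *
        (F ((gcPart n ω k).card + 1) - F (gcPart n ω k).card)) =
      ∑ ω ∈ A, (F C.card + (1 / 2) ^ C.card * (F (C.card + 1) - F C.card)) := by
    refine Finset.sum_congr rfl fun ω hω => ?_
    have : gcPart n ω k = C := by simpa [hA] using hω
    rw [this]
  rw [e1, e2, Finset.sum_add_distrib, Finset.sum_add_distrib, ← Finset.sum_filter,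
    Finset.sum_const, Finset.sum_const, Finset.sum_const]
  congr 1
  rw [nsmul_eq_mul, nsmul_eq_mul, ← hcount]
  push_cast
  rw [one_div, inv_pow]
  field_simp

lemma sum_pos_moment (n k : ℕ) (hk : k ≤ n) :
    ∑ ω : Sym2 (Fin n) → Bool, (2 : ℝ) ^ (gcPart n ω k).card =
      (k + 1) * (Fintype.card (Sym2 (Fin n) → Bool) : ℝ) := by
  induction k with
  | zero => simp [gcPart_zero]
  | succ k ih =>
    rw [sum_step n k hk (fun c => (2 : ℝ) ^ c)]
    have : ∀ ω : Sym2 (Fin n) → Bool, ((2 : ℝ) ^ (gcPart n ω k).card +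
        (1 / 2) ^ (gcPart n ω k).card * ((2 : ℝ) ^ ((gcPart n ω k).card + 1) -
          (2 : ℝ) ^ (gcPart n ω k).card)) = (2 : ℝ) ^ (gcPart n ω k).card + 1 := by
      intro ω
      rw [one_div, inv_pow, pow_succ]
      field_simp
      ring
    simp only [this]
    rw [Finset.sum_add_distrib, ih (by omega)]
    simp only [Finset.sum_const, nsmul_eq_mul, Finset.card_univ]
    push_cast
    ring

lemma sum_neg_moment (n k : ℕ) (hk : k ≤ n) :
    (∑ ω : Sym2 (Fin n) → Bool, (1 / 2 : ℝ) ^ (gcPart n ω k).card) * (k + 2) ≤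
      2 * (Fintype.card (Sym2 (Fin n) → Bool) : ℝ) := by
  induction k with
  | zero => simp [gcPart_zero, mul_comm]
  | succ k ih =>
    have ih := ih (by omega)
    rw [sum_step n k hk (fun c => (1 / 2 : ℝ) ^ c)]
    have : ∀ ω : Sym2 (Fin n) → Bool, ((1 / 2 : ℝ) ^ (gcPart n ω k).card +
        (1 / 2) ^ (gcPart n ω k).card * ((1 / 2 : ℝ) ^ ((gcPart n ω k).card + 1) -
          (1 / 2 : ℝ) ^ (gcPart n ω k).card)) = (1 / 2 : ℝ) ^ (gcPart n ω k).card
          - (1 / 2) * ((1 / 2 : ℝ) ^ (gcPart n ω k).card) ^ 2 := by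
      intro ω
      rw [pow_succ]
      ring
    simp only [this]
    rw [Finset.sum_sub_distrib, ← Finset.mul_sum]
    have cs := sq_sum_le_card_mul_sum_sq (s := (Finset.univ : Finset (Sym2 (Fin n) → Bool)))
      (f := fun ω => (1 / 2 : ℝ) ^ (gcPart n ω k).card)
    have hS : 0 ≤ ∑ ω : Sym2 (Fin n) → Bool, (1 / 2 : ℝ) ^ (gcPart n ω k).card :=
      Finset.sum_nonneg fun _ _ => by positivity
    have hN : 0 < (Fintype.card (Sym2 (Fin n) → Bool) : ℝ) := by
      exact_mod_cast Fintype.card_pos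
    rw [Finset.card_univ] at cs
    generalize (Fintype.card (Sym2 (Fin n) → Bool) : ℝ) = N at *
    generalize ∑ ω : Sym2 (Fin n) → Bool, (1 / 2 : ℝ) ^ (gcPart n ω k).card = S at *
    generalize ∑ ω : Sym2 (Fin n) → Bool, ((1 / 2 : ℝ) ^ (gcPart n ω k).card) ^ 2 = Q at *
    push_cast
    have hk0 : (0 : ℝ) ≤ k := Nat.cast_nonneg k
    generalize (k : ℝ) = x at *
    have h1 : N * ((S - 1 / 2 * Q) * (x + 1 + 2)) ≤ (N * S - S ^ 2 / 2) * (x + 3) := by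
      nlinarith
    have h2 : (N * S - S ^ 2 / 2) * (x + 3) ≤ N * (2 * N) := by
      -- with d = 2N - S(x+2) nonnegative
      have hd : 0 ≤ 2 * N - S * (x + 2) := by linarith
      have : 2 * N * (2 * N) - 2 * ((N * S - S ^ 2 / 2) * (x + 3)) =
        (2 * N - S) * (2 * N - S * (x + 2)) + S ^ 2 := by ring
      have h3 : 0 ≤ 2 * N - S := by nlinarith
      nlinarith [mul_nonneg h3 hd, sq_nonneg S]
    exact le_of_mul_le_mul_left (h1.trans h2) hN

lemma uniform_markov {α : Type*} [Fintype α] [Nonempty α] [MeasurableSpace α]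
    [MeasurableSingletonClass α] (s : Set α) (f : α → ℝ) (hf : ∀ a, 0 ≤ f a)
    (hs : ∀ a ∈ s, 1 ≤ f a) :
    uniformMeasure α s ≤ ENNReal.ofReal ((∑ a, f a) / Fintype.card α) := by
  classical
  have hN : 0 < (Fintype.card α : ℝ) := by exact_mod_cast Fintype.card_pos
  have h1 : ((Finset.univ.filter (· ∈ s)).card : ℝ) ≤ ∑ a, f a := by
    calc ((Finset.univ.filter (· ∈ s)).card : ℝ) = ∑ a ∈ Finset.univ.filter (· ∈ s), (1 : ℝ) := by
          simp
      _ ≤ ∑ a ∈ Finset.univ.filter (· ∈ s), f a :=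
          Finset.sum_le_sum fun a ha => hs a (by simpa using ha)
      _ ≤ _ := Finset.sum_le_sum_of_subset_of_nonneg (Finset.filter_subset _ _)
          fun a _ _ => hf a
  have h2 : Measure.count s = ((Finset.univ.filter (· ∈ s)).card : ENNReal) := by
    rw [← Measure.count_apply_finset]
    congr 1
    ext; simp
  rw [uniformMeasure, Measure.smul_apply, h2, smul_eq_mul, ENNReal.ofReal_div_of_pos hN,
    ENNReal.ofReal_natCast, mul_comm, ← div_eq_mul_inv]
  gcongr
  rw [← ENNReal.ofReal_natCast]
  exact ENNReal.ofReal_le_ofReal h1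

lemma uniform_prob {α : Type*} [Fintype α] [Nonempty α] [MeasurableSpace α]
    [MeasurableSingletonClass α] : IsProbabilityMeasure (uniformMeasure α) := by
  constructor
  rw [uniformMeasure, Measure.smul_apply, smul_eq_mul]
  have : Measure.count (Set.univ : Set α) = (Fintype.card α : ENNReal) := by
    rw [← Finset.coe_univ, Measure.count_apply_finset, Finset.card_univ]
  rw [this]
  exact ENNReal.inv_mul_cancel (by simp) (by simp)

lemma main_bound (n : ℕ) (hn : 2 ≤ n) (ε : ℝ) :
    uniformMeasure (Sym2 (Fin n) → Bool)
      {ω | (1 + ε) * Real.logb 2 n ≤ ((greedyClique n ω).card : ℝ) ∨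
        ((greedyClique n ω).card : ℝ) ≤ (1 - ε) * Real.logb 2 n} ≤
      ENNReal.ofReal (4 * (n : ℝ) ^ (-ε)) := by
  have hn0 : (0 : ℝ) < n := by exact_mod_cast (by omega : 0 < n)
  have hn1 : (1 : ℝ) ≤ n := by exact_mod_cast (by omega : 1 ≤ n)
  have hlog : ∀ c : ℝ, (2 : ℝ) ^ (c * Real.logb 2 n) = (n : ℝ) ^ c := by
    intro c
    rw [mul_comm, Real.rpow_mul (by norm_num), Real.rpow_logb (by norm_num) (by norm_num) hn0]
  refine (uniform_markov _ (fun ω => (2 : ℝ) ^ (gcPart n ω n).card * (n : ℝ) ^ (-(1 + ε)) +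
    (1 / 2 : ℝ) ^ (gcPart n ω n).card * (n : ℝ) ^ (1 - ε)) (fun ω => by positivity) ?_).trans ?_
  · intro ω hω
    simp only [Set.mem_ofPred_eq, gcPart_full] at hω
    have p1 : (0 : ℝ) ≤ (2 : ℝ) ^ (gcPart n ω n).card * (n : ℝ) ^ (-(1 + ε)) := by positivity
    have p2 : (0 : ℝ) ≤ (1 / 2 : ℝ) ^ (gcPart n ω n).card * (n : ℝ) ^ (1 - ε) := by positivity
    rcases hω with h | h
    · have := Real.rpow_le_rpow_of_exponent_le (x := 2) (by norm_num) h
      rw [hlog, Real.rpow_natCast] at this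
      have h3 : 1 ≤ (2 : ℝ) ^ (gcPart n ω n).card * (n : ℝ) ^ (-(1 + ε)) := by
        rw [Real.rpow_neg hn0.le, ← div_eq_mul_inv, one_le_div (by positivity)]
        exact this
      linarith
    · have := Real.rpow_le_rpow_of_exponent_le (x := 2) (by norm_num) h
      rw [hlog, Real.rpow_natCast] at this
      have h3 : 1 ≤ (1 / 2 : ℝ) ^ (gcPart n ω n).card * (n : ℝ) ^ (1 - ε) := by
        rw [one_div, inv_pow, mul_comm, ← div_eq_mul_inv, one_le_div (by positivity)]
        exact this
      linarith
  · apply ENNReal.ofReal_le_ofReal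
    have hN : 0 < (Fintype.card (Sym2 (Fin n) → Bool) : ℝ) := by
      exact_mod_cast Fintype.card_pos
    rw [div_le_iff₀ hN, Finset.sum_add_distrib, ← Finset.sum_mul, ← Finset.sum_mul,
      sum_pos_moment n n le_rfl]
    have h2 := sum_neg_moment n n le_rfl
    have hS : 0 ≤ ∑ ω : Sym2 (Fin n) → Bool, (1 / 2 : ℝ) ^ (gcPart n ω n).card :=
      Finset.sum_nonneg fun _ _ => by positivity
    have e1 : (n : ℝ) ^ (-(1 + ε)) * n = (n : ℝ) ^ (-ε) := by
      rw [← Real.rpow_add_one hn0.ne']; congr 1; ring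
    have e2 : (n : ℝ) ^ (1 - ε) = (n : ℝ) ^ (-ε) * n := by
      rw [← Real.rpow_add_one hn0.ne']; congr 1; ring
    have hp : 0 < (n : ℝ) ^ (-(1 + ε)) := by positivity
    have hq : 0 < (n : ℝ) ^ (-ε) := by positivity
    rw [e2]
    generalize (Fintype.card (Sym2 (Fin n) → Bool) : ℝ) = N at *
    generalize ∑ ω : Sym2 (Fin n) → Bool, (1 / 2 : ℝ) ^ (gcPart n ω n).card = S at *
    generalize (n : ℝ) ^ (-(1 + ε)) = p at *
    generalize (n : ℝ) ^ (-ε) = q at *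
    generalize (n : ℝ) = x at *
    have a1 : (x + 1) * N * p ≤ 2 * q * N := by
      have : (x + 1) * p ≤ 2 * q := by nlinarith
      nlinarith
    have a2 : S * (q * x) ≤ 2 * q * N := by
      have : S * x ≤ 2 * N := by nlinarith
      nlinarith
    linarith

lemma bound_tendsto (ε : ℝ) (hε : 0 < ε) :
    Tendsto (fun n : ℕ => ENNReal.ofReal (4 * (n : ℝ) ^ (-ε))) atTop (𝓝 0) := by
  have h := ((tendsto_rpow_neg_atTop hε).comp tendsto_natCast_atTop_atTop).const_mul (4 : ℝ)
  have := ENNReal.tendsto_ofReal h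
  simpa using this

end Helpers

/-- the size of the clique produced by the greedy algorithm on
`G(n,1/2)` (uniform measure over all graphs on `n` vertices), divided by
`log₂ n`, converges to `1` in probability; in particular for every `ε > 0`,
whp the greedy clique has size at least `(1-ε)·log₂ n`. -/
theorem greedy_clique_half_optimal :
    (∀ ε : ℝ, 0 < ε →
      Tendsto
        (fun n : ℕ =>
          uniformMeasure (Sym2 (Fin n) → Bool)
            {ω | ε < |((greedyClique n ω).card : ℝ) / Real.logb 2 n - 1|})
        atTop (𝓝 0)) ∧
    (∀ ε : ℝ, 0 < ε →
      Tendsto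
        (fun n : ℕ =>
          uniformMeasure (Sym2 (Fin n) → Bool)
            {ω | (1 - ε) * Real.logb 2 n ≤ ((greedyClique n ω).card : ℝ)})
        atTop (𝓝 1)) := by
  have key : ∀ ε : ℝ, 0 < ε → Tendsto (fun n : ℕ => uniformMeasure (Sym2 (Fin n) → Bool)
      {ω | (1 + ε) * Real.logb 2 n ≤ ((greedyClique n ω).card : ℝ) ∨
        ((greedyClique n ω).card : ℝ) ≤ (1 - ε) * Real.logb 2 n}) atTop (𝓝 0) := by
    intro ε hε
    refine tendsto_of_tendsto_of_tendsto_of_le_of_le' tendsto_const_nhds (bound_tendsto ε hε)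
      (Eventually.of_forall fun n => zero_le) ?_
    filter_upwards [eventually_ge_atTop 2] with n hn
    exact main_bound n hn ε
  constructor
  · intro ε hε
    refine tendsto_of_tendsto_of_tendsto_of_le_of_le' tendsto_const_nhds (key ε hε)
      (Eventually.of_forall fun n => zero_le) ?_
    filter_upwards [eventually_ge_atTop 2] with n hn
    apply measure_mono
    intro ω hω
    simp only [Set.mem_ofPred_eq] at hω ⊢
    have hL : 0 < Real.logb 2 n :=
      Real.logb_pos (by norm_num) (by exact_mod_cast (by omega : 1 < n))
    rcases lt_abs.1 hω with h | h
    · left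
      rw [← le_div_iff₀ hL]
      linarith
    · right
      rw [← div_le_iff₀ hL]
      linarith
  · intro ε hε
    have h1 : Tendsto (fun n : ℕ => 1 - uniformMeasure (Sym2 (Fin n) → Bool)
      {ω | (1 + ε) * Real.logb 2 n ≤ ((greedyClique n ω).card : ℝ) ∨
        ((greedyClique n ω).card : ℝ) ≤ (1 - ε) * Real.logb 2 n}) atTop (𝓝 1) := by
      have := ENNReal.Tendsto.sub (tendsto_const_nhds (x := (1 : ENNReal))) (key ε hε)
        (Or.inl ENNReal.one_ne_top)
      simpa using this
    refine tendsto_of_tendsto_of_tendsto_of_le_of_le h1 tendsto_const_nhds ?_ ?_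
    · intro n
      have := uniform_prob (α := Sym2 (Fin n) → Bool)
      dsimp only
      rw [← prob_compl_eq_one_sub (Set.toFinite _).measurableSet]
      apply measure_mono
      intro ω hω
      simp only [Set.mem_compl_iff, Set.mem_ofPred_eq, not_or, not_le] at hω ⊢
      exact hω.2.le
    · intro n
      have := uniform_prob (α := Sym2 (Fin n) → Bool)
      exact prob_le_one
end

section
/- For every ε > 0 there exists d₀ such that for every real d ≥ d₀ the following holds: whp as n → ∞, the independence number α(G(n,d/n)) of the sparse Erdős–Rényi random graph satisfies (2−ε)·(log d / d)·n ≤ α(G(n,d/n)) ≤ (2+ε)·(log d / d)·n, where log denotes the natural logarithm. -/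
open MeasureTheory Filter Topology

/-- The Bernoulli measure on `Bool` with success probability `p`
(a probability measure whenever `0 ≤ p ≤ 1`). -/
noncomputable def bernoulliMeasure (p : ℝ) : Measure Bool :=
  ENNReal.ofReal p • Measure.dirac true + ENNReal.ofReal (1 - p) • Measure.dirac false

/-- The Erdős–Rényi measure `G(n,p)`: each of the unordered pairs of vertices is an
edge independently with probability `p`; `ω : Sym2 (Fin n) → Bool` records the
edge indicators. -/
noncomputable def erdosRenyi (n : ℕ) (p : ℝ) : Measure (Sym2 (Fin n) → Bool) :=
  Measure.pi fun _ => bernoulliMeasure p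

/-- A finite vertex set `S` is an independent set of the graph encoded by `ω` if
no pair of distinct vertices of `S` forms an edge. -/
def IsIndepSet (n : ℕ) (ω : Sym2 (Fin n) → Bool) (S : Finset (Fin n)) : Prop :=
  ∀ i ∈ S, ∀ j ∈ S, i ≠ j → ω s(i, j) = false

open scoped Classical in
/-- The independence number: the maximum cardinality of an independent set. -/
noncomputable def independenceNumber (n : ℕ) (ω : Sym2 (Fin n) → Bool) : ℕ :=
  (Finset.univ.filter (fun S : Finset (Fin n) => IsIndepSet n ω S)).sup Finset.card



lemma hoeff_fin {Y : Type*} [Fintype Y] (w : Y → ℝ) (hw : ∀ y, 0 ≤ w y) (h1 : ∑ y, w y = 1)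
    (F : Y → ℝ) (hF : ∀ y y', |F y - F y'| ≤ 1) (l : ℝ) :
    ∑ y, w y * Real.exp (l * F y) ≤ Real.exp (l * (∑ y, w y * F y) + l ^ 2 / 2) := by
  set M := ∑ y, w y * F y with hM
  have hd : ∀ y, |F y - M| ≤ 1 := by
    intro y
    have : F y - M = ∑ y', w y' * (F y - F y') := by
      simp only [mul_sub, Finset.sum_sub_distrib, ← Finset.sum_mul, h1, one_mul, hM]
    rw [this]
    refine (Finset.abs_sum_le_sum_abs _ _).trans ?_
    rw [← h1]
    refine Finset.sum_le_sum fun y' _ => ?_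
    rw [abs_mul, abs_of_nonneg (hw y')]
    exact mul_le_of_le_one_right (hw y') (hF y y')
  have key : ∀ y, Real.exp (l * F y) ≤
      Real.exp (l * M) * (Real.cosh l + (F y - M) * Real.sinh l) := by
    intro y
    have := Real.exp_mul_le_cosh_add_mul_sinh (hd y) l
    have h2 : Real.exp (l * F y) = Real.exp (l * M) * Real.exp (l * (F y - M)) := by
      rw [← Real.exp_add]; ring_nf
    rw [h2]
    exact mul_le_mul_of_nonneg_left (by simpa [mul_comm] using this) (Real.exp_pos _).le
  calc ∑ y, w y * Real.exp (l * F y)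
      ≤ ∑ y, w y * (Real.exp (l * M) * (Real.cosh l + (F y - M) * Real.sinh l)) :=
        Finset.sum_le_sum fun y _ => mul_le_mul_of_nonneg_left (key y) (hw y)
    _ = Real.exp (l * M) * Real.cosh l * (∑ y, w y)
        + Real.exp (l * M) * Real.sinh l * (∑ y, w y * F y - M * ∑ y, w y) := by
        simp only [Finset.mul_sum, ← Finset.sum_sub_distrib, ← Finset.sum_add_distrib]
        refine Finset.sum_congr rfl fun y _ => ?_
        ring
    _ = Real.exp (l * M) * Real.cosh l := by rw [h1, ← hM]; ring
    _ ≤ Real.exp (l * M) * Real.exp (l ^ 2 / 2) :=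
        mul_le_mul_of_nonneg_left (Real.cosh_le_exp_half_sq l) (Real.exp_pos _).le
    _ = _ := by rw [Real.exp_add]

lemma sum_cons_eq {N : ℕ} {Y : Fin (N + 1) → Type} [∀ i, Fintype (Y i)]
    (h : (∀ i, Y i) → ℝ) :
    ∑ y, h y = ∑ a, ∑ z, h (Fin.cons a z) := by
  rw [← Fintype.sum_prod_type' (f := fun a z => h (Fin.cons a z))]
  exact (Fintype.sum_equiv (Fin.consEquiv Y) _ _ (fun x => rfl)).symm

lemma sum_prod_one {N : ℕ} {Y : Fin N → Type} [∀ i, Fintype (Y i)]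
    (w : ∀ i, Y i → ℝ) (h1 : ∀ i, ∑ y, w i y = 1) :
    ∑ y : ∀ i, Y i, ∏ i, w i (y i) = 1 := by
  classical
  have := Finset.prod_univ_sum (fun i => (Finset.univ : Finset (Y i))) w
  rw [Fintype.piFinset_univ] at this
  rw [← this]; simp [h1]

lemma mcdiarmid_fin (l : ℝ) : ∀ (N : ℕ) (Y : Fin N → Type) [∀ i, Fintype (Y i)]
    (w : ∀ i, Y i → ℝ) (_ : ∀ i y, 0 ≤ w i y) (_ : ∀ i, ∑ y, w i y = 1)
    (f : (∀ i, Y i) → ℝ)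
    (_ : ∀ i y y', (∀ j, j ≠ i → y j = y' j) → |f y - f y'| ≤ 1),
    ∑ y, (∏ i, w i (y i)) * Real.exp (l * f y) ≤
      Real.exp (l * (∑ y, (∏ i, w i (y i)) * f y) + N * (l ^ 2 / 2)) := by
  intro N
  induction N with
  | zero => intro Y _ w hw h1 f hf; simp
  | succ N ih =>
    intro Y _ w hw h1 f hf
    have hsum := sum_prod_one (fun i : Fin N => w i.succ) (fun i => h1 i.succ)
    have hnn : ∀ z : (∀ i : Fin N, Y i.succ), 0 ≤ ∏ i, w i.succ (z i) :=
      fun z => Finset.prod_nonneg fun i _ => hw _ _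
    set F : Y 0 → ℝ := fun a => ∑ z : (∀ i : Fin N, Y i.succ),
      (∏ i, w i.succ (z i)) * f (Fin.cons a z) with hFdef
    have e1 : ∀ g : (∀ i, Y i) → ℝ, ∑ y, (∏ i, w i (y i)) * g y =
        ∑ a, w 0 a * ∑ z : (∀ i : Fin N, Y i.succ), (∏ i, w i.succ (z i)) * g (Fin.cons a z) := by
      intro g
      rw [sum_cons_eq]
      refine Finset.sum_congr rfl fun a _ => ?_
      rw [Finset.mul_sum]
      refine Finset.sum_congr rfl fun z _ => ?_
      rw [Fin.prod_univ_succ]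
      simp [mul_assoc]
    rw [e1, e1]
    have hFlip : ∀ a a', |F a - F a'| ≤ 1 := by
      intro a a'
      simp only [hFdef, ← Finset.sum_sub_distrib, ← mul_sub]
      refine (Finset.abs_sum_le_sum_abs _ _).trans ?_
      rw [← hsum]
      refine Finset.sum_le_sum fun z _ => ?_
      rw [abs_mul, abs_of_nonneg (hnn z)]
      refine mul_le_of_le_one_right (hnn z) (hf 0 _ _ ?_)
      intro j hj
      obtain ⟨j', rfl⟩ := Fin.exists_succ_eq.mpr hj
      simp
    have hin : ∀ a, ∑ z : (∀ i : Fin N, Y i.succ),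
        (∏ i, w i.succ (z i)) * Real.exp (l * f (Fin.cons a z)) ≤
        Real.exp (l * F a) * Real.exp (N * (l ^ 2 / 2)) := by
      intro a
      rw [← Real.exp_add]
      refine ih (fun i => Y i.succ) (fun i => w i.succ) (fun i => hw i.succ) (fun i => h1 i.succ)
        (fun z => f (Fin.cons a z)) ?_
      intro i z z' hz
      refine hf i.succ _ _ ?_
      intro j hj
      refine Fin.cases ?_ (fun j' => ?_) j hj
      · simp
      · intro hj'
        simpa using hz j' (fun h => hj' (by rw [h]))
    calc _ ≤ ∑ a, w 0 a * (Real.exp (l * F a) * Real.exp (N * (l ^ 2 / 2))) :=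
          Finset.sum_le_sum fun a _ => mul_le_mul_of_nonneg_left (hin a) (hw 0 a)
      _ = (∑ a, w 0 a * Real.exp (l * F a)) * Real.exp (N * (l ^ 2 / 2)) := by
          rw [Finset.sum_mul]; simp only [mul_assoc]
      _ ≤ Real.exp (l * (∑ a, w 0 a * F a) + l ^ 2 / 2) * Real.exp (N * (l ^ 2 / 2)) :=
          mul_le_mul_of_nonneg_right (hoeff_fin (w 0) (hw 0) (h1 0) F hFlip l) (Real.exp_pos _).le
      _ = _ := by
          rw [← Real.exp_add]; congr 1; push_cast; ring

/-- Bernoulli product weight -/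
noncomputable def bw {E : Type} [Fintype E] (p : ℝ) (ω : E → Bool) : ℝ :=
  ∏ e, (if ω e then p else 1 - p)

lemma bw_nonneg {E : Type} [Fintype E] {p : ℝ} (h0 : 0 ≤ p) (h1 : p ≤ 1) (ω : E → Bool) :
    0 ≤ bw p ω := by
  refine Finset.prod_nonneg fun e _ => ?_
  split_ifs <;> linarith

lemma bw_false {E : Type} [Fintype E] [DecidableEq E] (p : ℝ) (F : Finset E) :
    ∑ ω : E → Bool, bw p ω * (if ∀ e ∈ F, ω e = false then 1 else 0) = (1 - p) ^ F.card := by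
  have h := Finset.prod_univ_sum (fun _ : E => (Finset.univ : Finset Bool))
    (fun e b => (if b then p else 1 - p) * (if e ∈ F → b = false then (1 : ℝ) else 0))
  rw [Fintype.piFinset_univ] at h
  have h2 : ∀ ω : E → Bool, bw p ω * (if ∀ e ∈ F, ω e = false then 1 else 0) =
      ∏ e, ((if ω e then p else 1 - p) * (if e ∈ F → ω e = false then (1 : ℝ) else 0)) := by
    intro ω
    rw [Finset.prod_mul_distrib, bw, Finset.prod_ite_zero]
    simp
  simp only [h2]
  rw [← h]
  rw [← Finset.prod_const, ← Finset.prod_subset (Finset.subset_univ F)]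
  · refine Finset.prod_congr rfl fun e he => ?_
    simp [he]
  · intro e _ he
    simp [he]

lemma bw_sum {E : Type} [Fintype E] [DecidableEq E] (p : ℝ) : ∑ ω : E → Bool, bw p ω = 1 := by
  have := bw_false p (∅ : Finset E)
  simpa using this

lemma mcdiarmid_bool {E : Type} [Fintype E] [DecidableEq E] {p : ℝ} (h0 : 0 ≤ p) (h1 : p ≤ 1) {N : ℕ}
    (g : E → Fin N) (f : (E → Bool) → ℝ)
    (hf : ∀ i ω ω', (∀ e, g e ≠ i → ω e = ω' e) → |f ω - f ω'| ≤ 1) (l : ℝ) :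
    ∑ ω, bw p ω * Real.exp (l * f ω) ≤
      Real.exp (l * (∑ ω, bw p ω * f ω) + N * (l ^ 2 / 2)) := by
  let Y : Fin N → Type := fun i => {e // g e = i} → Bool
  let Φ : (E → Bool) ≃ (∀ i, Y i) :=
    { toFun := fun ω i e => ω e.1
      invFun := fun y e => y (g e) ⟨e, rfl⟩
      left_inv := fun ω => rfl
      right_inv := fun y => by
        funext i ⟨e, he⟩
        subst he
        rfl }
  have hw : ∀ ω : E → Bool, bw p ω = ∏ i, bw p (Φ ω i) := by
    intro ω
    unfold bw
    rw [← Finset.prod_fiberwise (s := Finset.univ) (g := g)]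
    refine Finset.prod_congr rfl fun i _ => ?_
    rw [Finset.prod_subtype (p := fun e => g e = i) _ (by simp)]
    rfl
  have key := mcdiarmid_fin l N Y (fun i y => bw p y) (fun i y => bw_nonneg h0 h1 y)
    (fun i => bw_sum p) (fun y => f (Φ.symm y)) (by
      intro i y y' hy
      refine hf i _ _ fun e he => ?_
      change y (g e) ⟨e, rfl⟩ = y' (g e) ⟨e, rfl⟩
      rw [hy _ he])
  have e1 : ∀ h : (E → Bool) → ℝ, ∑ ω, bw p ω * h ω =
      ∑ y : ∀ i, Y i, (∏ i, bw p (y i)) * h (Φ.symm y) := by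
    intro h
    refine Fintype.sum_equiv Φ _ _ fun ω => ?_
    rw [hw]; simp
  rw [e1, e1]
  exact key

open scoped Classical in
/-- probability of an event under the Bernoulli product weight -/
noncomputable def pr {E : Type} [Fintype E] [DecidableEq E] (p : ℝ) (Q : (E → Bool) → Prop) : ℝ :=
  ∑ ω, bw p ω * (if Q ω then 1 else 0)

/-- two-sided concentration in product form -/
lemma two_tail {E : Type} [Fintype E] [DecidableEq E] {p : ℝ} (h0 : 0 ≤ p) (h1 : p ≤ 1) {N : ℕ} (hN : 0 < N)
    (g : E → Fin N) (f : (E → Bool) → ℝ)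
    (hf : ∀ i ω ω', (∀ e, g e ≠ i → ω e = ω' e) → |f ω - f ω'| ≤ 1) (a t : ℝ) (ht : 0 ≤ t)
    (A B : (E → Bool) → Prop)
    (hA : ∀ ω, A ω → f ω ≤ a) (hB : ∀ ω, B ω → a + t ≤ f ω) :
    pr p A * pr p B ≤
      Real.exp (- t ^ 2 / (4 * N)) := by
  have hN' : (0 : ℝ) < N := by exact_mod_cast hN
  set l : ℝ := t / (2 * N) with hl
  have hl0 : 0 ≤ l := by positivity
  set M := ∑ ω, bw p ω * f ω
  have bA : pr p A ≤
      Real.exp (l * a) * Real.exp (-l * M + N * (l ^ 2 / 2)) := by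
    have := mcdiarmid_bool h0 h1 g f hf (-l)
    rw [neg_sq] at this
    refine le_trans ?_ (mul_le_mul_of_nonneg_left this (Real.exp_pos _).le)
    rw [pr, Finset.mul_sum]
    refine Finset.sum_le_sum fun ω _ => ?_
    have hb := bw_nonneg h0 h1 ω
    split_ifs with h
    · have : 1 ≤ Real.exp (l * a) * Real.exp (-l * f ω) := by
        rw [← Real.exp_add, Real.one_le_exp_iff]
        nlinarith [hA ω h]
      nlinarith
    · have : 0 ≤ bw p ω * Real.exp (-l * f ω) := by positivity
      simp only [mul_zero]; positivity
  have bB : pr p B ≤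
      Real.exp (-l * (a + t)) * Real.exp (l * M + N * (l ^ 2 / 2)) := by
    have := mcdiarmid_bool h0 h1 g f hf l
    refine le_trans ?_ (mul_le_mul_of_nonneg_left this (Real.exp_pos _).le)
    rw [pr, Finset.mul_sum]
    refine Finset.sum_le_sum fun ω _ => ?_
    have hb := bw_nonneg h0 h1 ω
    split_ifs with h
    · have : 1 ≤ Real.exp (-l * (a + t)) * Real.exp (l * f ω) := by
        rw [← Real.exp_add, Real.one_le_exp_iff]
        nlinarith [hB ω h]
      nlinarith
    · have : 0 ≤ bw p ω * Real.exp (l * f ω) := by positivity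
      simp only [mul_zero]; positivity
  have nB : 0 ≤ pr p B :=
    Finset.sum_nonneg fun ω _ => mul_nonneg (bw_nonneg h0 h1 ω) (by split_ifs <;> norm_num)
  refine (mul_le_mul bA bB nB (by positivity)).trans ?_
  rw [← Real.exp_add, ← Real.exp_add, ← Real.exp_add, Real.exp_le_exp]
  apply le_of_eq
  rw [hl]
  field_simp
  ring

lemma pr_nonneg {E : Type} [Fintype E] [DecidableEq E] {p : ℝ} (h0 : 0 ≤ p) (h1 : p ≤ 1)
    (Q : (E → Bool) → Prop) : 0 ≤ pr p Q :=
  Finset.sum_nonneg fun ω _ => mul_nonneg (bw_nonneg h0 h1 ω) (by split_ifs <;> norm_num)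

lemma pr_mono {E : Type} [Fintype E] [DecidableEq E] {p : ℝ} (h0 : 0 ≤ p) (h1 : p ≤ 1)
    {Q R : (E → Bool) → Prop} (h : ∀ ω, Q ω → R ω) : pr p Q ≤ pr p R := by
  refine Finset.sum_le_sum fun ω _ => mul_le_mul_of_nonneg_left ?_ (bw_nonneg h0 h1 ω)
  by_cases hQ : Q ω
  · simp [hQ, h ω hQ]
  · simp only [hQ, if_false]; split_ifs <;> norm_num

lemma pr_and_ge {E : Type} [Fintype E] [DecidableEq E] {p : ℝ} (h0 : 0 ≤ p) (h1 : p ≤ 1)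
    (Q R : (E → Bool) → Prop) :
    (1 : ℝ) - pr p (fun ω => ¬ Q ω) - pr p (fun ω => ¬ R ω) ≤ pr p (fun ω => Q ω ∧ R ω) := by
  unfold pr
  have hs := bw_sum (E := E) p
  refine (congrArg (fun x : ℝ => x - _ - _) hs.symm).le.trans ?_
  beta_reduce
  rw [← Finset.sum_sub_distrib, ← Finset.sum_sub_distrib]
  clear hs
  refine Finset.sum_le_sum fun ω _ => ?_
  have := bw_nonneg h0 h1 ω
  by_cases hQ : Q ω <;> by_cases hR : R ω <;> simp [hQ, hR] <;> exact this

lemma pr_exists_le {E : Type} [Fintype E] [DecidableEq E] {p : ℝ} (h0 : 0 ≤ p) (h1 : p ≤ 1)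
    {ι : Type*} (s : Finset ι) (Q : ι → (E → Bool) → Prop) :
    pr p (fun ω => ∃ i ∈ s, Q i ω) ≤ ∑ i ∈ s, pr p (Q i) := by
  classical
  unfold pr
  rw [Finset.sum_comm]
  refine Finset.sum_le_sum fun ω _ => ?_
  rw [← Finset.mul_sum]
  refine mul_le_mul_of_nonneg_left ?_ (bw_nonneg h0 h1 ω)
  split_ifs with h
  · obtain ⟨i, hi, hQ⟩ := h
    refine le_trans (by simp [hQ]) (Finset.single_le_sum
      (f := fun i => if Q i ω then (1 : ℝ) else 0) (fun j _ => by split_ifs <;> norm_num) hi)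
  · exact Finset.sum_nonneg fun j _ => by split_ifs <;> norm_num

lemma pr_false {E : Type} [Fintype E] [DecidableEq E] (p : ℝ) (F : Finset E) :
    pr p (fun ω : E → Bool => ∀ e ∈ F, ω e = false) = (1 - p) ^ F.card := by
  rw [← bw_false, pr]
  refine Finset.sum_congr rfl fun ω _ => ?_
  congr

lemma second_moment_s5 {E : Type} [Fintype E] [DecidableEq E] {p : ℝ} (h0 : 0 ≤ p) (h1 : p ≤ 1)
    {ι : Type*} [Fintype ι] (F : ι → Finset E) :
    (∑ i, (1 - p) ^ (F i).card) ^ 2 ≤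
      pr p (fun ω : E → Bool => ∃ i, ∀ e ∈ F i, ω e = false) *
        ∑ i, ∑ j, (1 - p) ^ (F i ∪ F j).card := by
  classical
  set X : (E → Bool) → ℝ := fun ω => ∑ i, if ∀ e ∈ F i, ω e = false then (1 : ℝ) else 0 with hX
  have e1 : ∑ i, (1 - p) ^ (F i).card = ∑ ω, bw p ω * X ω := by
    simp only [← bw_false, hX, Finset.mul_sum]
    rw [Finset.sum_comm]
  have e2 : ∑ i, ∑ j, (1 - p) ^ (F i ∪ F j).card = ∑ ω, bw p ω * X ω ^ 2 := by
    have : ∀ ω, bw p ω * X ω ^ 2 = ∑ i, ∑ j, bw p ω *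
        ((if ∀ e ∈ F i, ω e = false then (1 : ℝ) else 0) *
          (if ∀ e ∈ F j, ω e = false then (1 : ℝ) else 0)) := by
      intro ω
      simp only [hX, sq]
      rw [Finset.sum_mul_sum]
      simp only [Finset.mul_sum]
    simp only [this, ← bw_false]
    rw [Finset.sum_comm (s := (Finset.univ : Finset (E → Bool)))]
    refine Finset.sum_congr rfl fun i _ => ?_
    rw [Finset.sum_comm (s := (Finset.univ : Finset (E → Bool)))]
    refine Finset.sum_congr rfl fun j _ => ?_
    refine Finset.sum_congr rfl fun ω _ => ?_
    congr 1
    simp only [Finset.mem_union, or_imp, forall_and, mul_ite, mul_one, mul_zero]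
    split_ifs <;> first | rfl | tauto
  rw [e1, e2, pr]
  refine Finset.sum_sq_le_sum_mul_sum_of_sq_le_mul _ (fun ω _ => ?_) (fun ω _ => ?_) (fun ω _ => ?_)
  · exact mul_nonneg (bw_nonneg h0 h1 ω) (by split_ifs <;> norm_num)
  · exact mul_nonneg (bw_nonneg h0 h1 ω) (sq_nonneg _)
  · split_ifs with h
    · apply le_of_eq; ring
    · have : X ω = 0 := by
        push Not at h
        refine Finset.sum_eq_zero fun i _ => ?_
        rw [if_neg]
        push Not
        exact h i
      rw [this]; simp

/-- edges inside a vertex set -/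
def edgesIn {n : ℕ} (S : Finset (Fin n)) : Finset (Sym2 (Fin n)) := S.offDiag.image (Function.uncurry Sym2.mk)

lemma mem_edgesIn {n : ℕ} (S : Finset (Fin n)) (a b : Fin n) :
    s(a, b) ∈ edgesIn S ↔ a ∈ S ∧ b ∈ S ∧ a ≠ b := by
  simp only [edgesIn, Finset.mem_image, Finset.mem_offDiag, Prod.exists, Function.uncurry, Sym2.eq_iff]
  constructor
  · rintro ⟨x, y, ⟨hx, hy, hxy⟩, (⟨rfl, rfl⟩ | ⟨rfl, rfl⟩)⟩
    · exact ⟨hx, hy, hxy⟩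
    · exact ⟨hy, hx, hxy.symm⟩
  · rintro ⟨ha, hb, hab⟩
    exact ⟨a, b, ⟨ha, hb, hab⟩, Or.inl ⟨rfl, rfl⟩⟩

lemma card_edgesIn {n : ℕ} (S : Finset (Fin n)) : (edgesIn S).card = S.card.choose 2 :=
  Sym2.card_image_offDiag S

lemma edgesIn_inter {n : ℕ} (S T : Finset (Fin n)) :
    edgesIn S ∩ edgesIn T = edgesIn (S ∩ T) := by
  ext e
  induction e with
  | _ a b =>
    simp only [Finset.mem_inter, mem_edgesIn]
    tauto

lemma isIndepSet_iff {n : ℕ} (ω : Sym2 (Fin n) → Bool) (S : Finset (Fin n)) :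
    IsIndepSet n ω S ↔ ∀ e ∈ edgesIn S, ω e = false := by
  constructor
  · intro h e
    induction e with
    | _ a b =>
      rw [mem_edgesIn]
      rintro ⟨ha, hb, hab⟩
      exact h a ha b hb hab
  · intro h i hi j hj hij
    exact h _ ((mem_edgesIn S i j).2 ⟨hi, hj, hij⟩)

lemma sum_agree (k m : ℕ) (D : ℝ) (σ : Fin k → Fin m) :
    ∑ τ : Fin k → Fin m, D ^ (Finset.univ.filter fun i => σ i = τ i).card
      = ((m : ℝ) - 1 + D) ^ k := by
  have h := Finset.prod_univ_sum (fun _ : Fin k => (Finset.univ : Finset (Fin m)))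
    (fun i b => if σ i = b then D else 1)
  rw [Fintype.piFinset_univ] at h
  have h3 : ∀ i, ∑ b, (if σ i = b then D else 1) = (m : ℝ) - 1 + D := by
    intro i
    have : ∀ b, (if σ i = b then D else 1) = 1 + if σ i = b then D - 1 else 0 := by
      intro b; split_ifs <;> ring
    simp only [this, Finset.sum_add_distrib, Finset.sum_ite_eq, Finset.mem_univ, if_true]
    simp; ring
  simp only [h3, Finset.prod_const, Finset.card_univ, Fintype.card_fin] at h
  rw [h]
  refine Finset.sum_congr rfl fun τ _ => ?_
  rw [Finset.prod_ite]
  simp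

lemma transversal_prob {n k m : ℕ} (hm : 0 < m) {p D : ℝ} (h0 : 0 ≤ p) (h1 : p < 1)
    (φ : Fin k → Fin m → Fin n) (hφ : ∀ i a j b, φ i a = φ j b → i = j ∧ a = b)
    (hD0 : 0 ≤ D)
    (hD : ∀ l ≤ k, ((1 - p)⁻¹) ^ (l.choose 2) ≤ D ^ l) :
    1 ≤ pr p (fun ω => ∃ σ : Fin k → Fin m,
      IsIndepSet n ω (Finset.univ.image fun i => φ i (σ i))) * (1 + D / m) ^ k := by
  set V : (Fin k → Fin m) → Finset (Fin n) := fun σ => Finset.univ.image fun i => φ i (σ i) with hV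
  set q := 1 - p with hq
  have hq0 : 0 < q := by linarith
  have hm' : (0 : ℝ) < m := by exact_mod_cast hm
  have hVc : ∀ σ, (V σ).card = k := by
    intro σ
    rw [hV, Finset.card_image_of_injective _ (fun i j h => (hφ _ _ _ _ h).1)]
    simp
  have hVi : ∀ σ τ, (V σ ∩ V τ).card = (Finset.univ.filter fun i => σ i = τ i).card := by
    intro σ τ
    rw [← Finset.card_image_of_injective (Finset.univ.filter fun i => σ i = τ i)
      (f := fun i => φ i (σ i)) (fun i j h => (hφ _ _ _ _ h).1)]
    congr 1
    ext v
    simp only [hV, Finset.mem_inter, Finset.mem_image, Finset.mem_univ, true_and,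
      Finset.mem_filter]
    constructor
    · rintro ⟨⟨i, rfl⟩, ⟨j, hj⟩⟩
      obtain ⟨rfl, h2⟩ := hφ _ _ _ _ hj
      exact ⟨j, h2.symm, rfl⟩
    · rintro ⟨i, hi, rfl⟩
      exact ⟨⟨i, rfl⟩, ⟨i, by rw [hi]⟩⟩
  have sm := second_moment_s5 (p := p) h0 h1.le (fun σ => edgesIn (V σ))
  simp only [card_edgesIn, hVc, ← isIndepSet_iff, ← hq] at sm
  have hu : ∀ σ τ, q ^ (edgesIn (V σ) ∪ edgesIn (V τ)).card ≤
      (q ^ (k.choose 2)) ^ 2 * D ^ (Finset.univ.filter fun i => σ i = τ i).card := by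
    intro σ τ
    have c := Finset.card_union_add_card_inter (edgesIn (V σ)) (edgesIn (V τ))
    rw [edgesIn_inter, card_edgesIn, card_edgesIn, card_edgesIn, hVi, hVc, hVc] at c
    set l := (Finset.univ.filter fun i => σ i = τ i).card
    have hl : l ≤ k := (Finset.card_le_univ _).trans (by simp)
    have e : q ^ (edgesIn (V σ) ∪ edgesIn (V τ)).card =
        (q ^ (k.choose 2)) ^ 2 * (q⁻¹) ^ (l.choose 2) := by
      rw [inv_pow, eq_mul_inv_iff_mul_eq₀ (by positivity), ← pow_add, c]
      ring
    rw [e]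
    exact mul_le_mul_of_nonneg_left (hD l hl) (by positivity)
  have hs : ∑ σ, ∑ τ, q ^ (edgesIn (V σ) ∪ edgesIn (V τ)).card ≤
      (m : ℝ) ^ k * ((q ^ (k.choose 2)) ^ 2 * ((m : ℝ) + D) ^ k) := by
    calc _ ≤ ∑ _σ : Fin k → Fin m, (q ^ (k.choose 2)) ^ 2 * ((m : ℝ) + D) ^ k := by
          refine Finset.sum_le_sum fun σ _ => ?_
          refine (Finset.sum_le_sum fun τ _ => hu σ τ).trans ?_
          rw [← Finset.mul_sum, sum_agree]
          refine mul_le_mul_of_nonneg_left ?_ (by positivity)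
          have : (1 : ℝ) ≤ m := by exact_mod_cast hm
          exact pow_le_pow_left₀ (by linarith) (by linarith) _
      _ = _ := by simp
  have hP := pr_nonneg h0 h1.le (fun ω => ∃ σ, IsIndepSet n ω (V σ))
  set P := pr p (fun ω => ∃ σ, IsIndepSet n ω (V σ))
  have h5 := sm.trans (mul_le_mul_of_nonneg_left hs hP)
  have e3 : (1 + D / m) ^ k = ((m : ℝ) + D) ^ k / (m : ℝ) ^ k := by
    rw [← div_pow]; congr 1; field_simp
  rw [e3]
  simp only [Finset.sum_const, Finset.card_univ, Fintype.card_fun, Fintype.card_fin,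
    nsmul_eq_mul, Nat.cast_pow] at h5
  have hpos : 0 < ((m : ℝ) ^ k * q ^ k.choose 2) ^ 2 := by positivity
  rw [← mul_le_mul_iff_right₀ hpos, mul_one]
  refine h5.trans (le_of_eq ?_)
  field_simp

/-- maximum size of an independent set with at most one vertex per block -/
noncomputable def blockInd {n k : ℕ} (blk : Fin n → Fin k) (ω : Sym2 (Fin n) → Bool) : ℕ := by
  classical
  exact (Finset.univ.filter (fun S : Finset (Fin n) =>
    IsIndepSet n ω S ∧ Set.InjOn blk S)).sup Finset.card

lemma le_blockInd {n k : ℕ} (blk : Fin n → Fin k) (ω : Sym2 (Fin n) → Bool) (S : Finset (Fin n))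
    (h1 : IsIndepSet n ω S) (h2 : Set.InjOn blk S) : S.card ≤ blockInd blk ω := by
  classical
  unfold blockInd
  exact Finset.le_sup (f := Finset.card) (by simp [h1, h2])

lemma exists_blockInd {n k : ℕ} (blk : Fin n → Fin k) (ω : Sym2 (Fin n) → Bool) :
    ∃ S : Finset (Fin n), IsIndepSet n ω S ∧ Set.InjOn blk S ∧ S.card = blockInd blk ω := by
  classical
  obtain ⟨S, hS, h⟩ := Finset.exists_mem_eq_sup (Finset.univ.filter (fun S : Finset (Fin n) =>
    IsIndepSet n ω S ∧ Set.InjOn blk S)) ⟨∅, Finset.mem_filter.2 ⟨Finset.mem_univ _, by simp [IsIndepSet]⟩⟩ Finset.card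
  simp only [Finset.mem_filter, Finset.mem_univ, true_and] at hS
  exact ⟨S, hS.1, hS.2, by unfold blockInd; exact h.symm⟩

lemma le_indepNum {n : ℕ} (ω : Sym2 (Fin n) → Bool) (S : Finset (Fin n))
    (h1 : IsIndepSet n ω S) : S.card ≤ independenceNumber n ω := by
  classical
  unfold independenceNumber
  exact Finset.le_sup (f := Finset.card) (by simp [h1])

lemma exists_indepNum {n : ℕ} (ω : Sym2 (Fin n) → Bool) :
    ∃ S : Finset (Fin n), IsIndepSet n ω S ∧ S.card = independenceNumber n ω := by
  classical
  obtain ⟨S, hS, h⟩ := Finset.exists_mem_eq_sup (Finset.univ.filter (fun S : Finset (Fin n) =>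
    IsIndepSet n ω S)) ⟨∅, Finset.mem_filter.2 ⟨Finset.mem_univ _, by simp [IsIndepSet]⟩⟩ Finset.card
  simp only [Finset.mem_filter, Finset.mem_univ, true_and] at hS
  exact ⟨S, hS, by unfold independenceNumber; exact h.symm⟩

lemma blockInd_le {n k : ℕ} (blk : Fin n → Fin k) (ω : Sym2 (Fin n) → Bool) :
    blockInd blk ω ≤ independenceNumber n ω := by
  obtain ⟨S, h, _, h3⟩ := exists_blockInd blk ω
  rw [← h3]; exact le_indepNum ω S h

/-- group of an edge -/
def edgeGroup {n k : ℕ} (blk : Fin n → Fin k) : Sym2 (Fin n) → Fin k :=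
  Sym2.lift ⟨fun u v => max (blk u) (blk v), fun u v => max_comm _ _⟩

lemma blockInd_lip {n k : ℕ} (blk : Fin n → Fin k) (i : Fin k) (ω ω' : Sym2 (Fin n) → Bool)
    (h : ∀ e, edgeGroup blk e ≠ i → ω e = ω' e) : blockInd blk ω ≤ blockInd blk ω' + 1 := by
  obtain ⟨S, h1, h2, h3⟩ := exists_blockInd blk ω
  have hc : (S.filter fun v => blk v = i).card ≤ 1 := by
    rw [Finset.card_le_one]
    intro a ha b hb
    simp only [Finset.mem_filter] at ha hb
    exact h2 ha.1 hb.1 (ha.2.trans hb.2.symm)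
  have hsum := Finset.card_filter_add_card_filter_not (s := S) (fun v => blk v = i)
  have := le_blockInd blk ω' (S.filter fun v => ¬ blk v = i) (by
    intro a ha b hb hab
    simp only [Finset.mem_filter] at ha hb
    rw [← h]
    · exact h1 a ha.1 b hb.1 hab
    · change max (blk a) (blk b) ≠ i
      rcases max_choice (blk a) (blk b) with h | h <;> rw [h]
      exacts [ha.2, hb.2]) (h2.mono (by intro x hx; simp at hx; exact hx.1))
  omega

lemma exists_blocks {n k m : ℕ} (hk : 0 < k) (hm : 0 < m) (h : k * m ≤ n) :
    ∃ (φ : Fin k → Fin m → Fin n) (blk : Fin n → Fin k),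
      (∀ i a j b, φ i a = φ j b → i = j ∧ a = b) ∧ ∀ i a, blk (φ i a) = i := by
  let ψ : Fin k × Fin m → Fin n := fun x => Fin.castLE h (finProdFinEquiv x)
  have hψ : Function.Injective ψ := (Fin.castLE_injective h).comp finProdFinEquiv.injective
  have : Nonempty (Fin k × Fin m) := ⟨(⟨0, hk⟩, ⟨0, hm⟩)⟩
  refine ⟨fun i a => ψ (i, a), fun v => (Function.invFun ψ v).1, ?_, ?_⟩
  · intro i a j b hh
    simpa using hψ hh
  · intro i a
    simp [Function.leftInverse_invFun hψ (i, a)]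

lemma lower_tail {n k m : ℕ} (hk : 0 < k) (hm : 0 < m) (hkm : k * m ≤ n) {p D : ℝ} (h0 : 0 ≤ p)
    (h1 : p < 1) (hD0 : 0 ≤ D) (hD : ∀ l ≤ k, ((1 - p)⁻¹) ^ (l.choose 2) ≤ D ^ l)
    (ε : ℝ) (hε : 0 ≤ ε) (hDm : D / m ≤ ε ^ 2 / 8) :
    pr p (fun ω => ¬ ((1 - ε) * k ≤ (independenceNumber n ω : ℝ))) ≤
      Real.exp (-(ε ^ 2 / 8) * k) := by
  obtain ⟨φ, blk, hφ, hblk⟩ := exists_blocks hk hm hkm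
  have hk' : (0 : ℝ) < k := by exact_mod_cast hk
  have hB := transversal_prob hm h0 h1 φ hφ hD0 hD
  set B : (Sym2 (Fin n) → Bool) → Prop := fun ω => ∃ σ : Fin k → Fin m,
      IsIndepSet n ω (Finset.univ.image fun i => φ i (σ i)) with hBdef
  set A : (Sym2 (Fin n) → Bool) → Prop :=
    fun ω => ¬ ((1 - ε) * k ≤ (independenceNumber n ω : ℝ)) with hAdef
  have tt := two_tail h0 h1.le hk (edgeGroup blk) (fun ω => (blockInd blk ω : ℝ)) (by
      intro i ω ω' h
      have a1 := blockInd_lip blk i ω ω' h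
      have a2 := blockInd_lip blk i ω' ω (fun e he => (h e he).symm)
      have a1' : (blockInd blk ω : ℝ) ≤ blockInd blk ω' + 1 := by exact_mod_cast a1
      have a2' : (blockInd blk ω' : ℝ) ≤ blockInd blk ω + 1 := by exact_mod_cast a2
      rw [abs_le]; constructor <;> linarith) ((1 - ε) * k) (ε * k) (by positivity) A B (by
      intro ω hω
      have : (blockInd blk ω : ℝ) ≤ independenceNumber n ω := by exact_mod_cast blockInd_le blk ω
      simp only [hAdef, not_le] at hω
      linarith) (by
      rintro ω ⟨σ, hσ⟩
      have := le_blockInd blk ω _ hσ (by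
        intro a ha b hb hab
        simp only [Finset.coe_image, Set.mem_image, Finset.mem_coe, Finset.mem_univ, true_and]
          at ha hb
        obtain ⟨i, rfl⟩ := ha
        obtain ⟨j, rfl⟩ := hb
        rw [hblk, hblk] at hab
        rw [hab])
      rw [Finset.card_image_of_injective _ (fun i j h => (hφ _ _ _ _ h).1)] at this
      simp only [Finset.card_univ, Fintype.card_fin] at this
      have : (k : ℝ) ≤ blockInd blk ω := by exact_mod_cast this
      linarith)
  have hA0 := pr_nonneg h0 h1.le A
  have hB0 := pr_nonneg h0 h1.le B
  have hgrow : (1 + D / m) ^ k ≤ Real.exp ((ε ^ 2 / 8) * k) := by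
    calc (1 + D / m) ^ k ≤ (Real.exp (ε ^ 2 / 8)) ^ k := by
          refine pow_le_pow_left₀ (by positivity) ?_ _
          linarith [Real.add_one_le_exp (ε ^ 2 / 8)]
      _ = _ := by rw [← Real.exp_nat_mul]; ring_nf
  calc pr p A ≤ pr p A * (pr p B * (1 + D / m) ^ k) := le_mul_of_one_le_right hA0 hB
    _ = (pr p A * pr p B) * (1 + D / m) ^ k := by ring
    _ ≤ Real.exp (- (ε * k) ^ 2 / (4 * k)) * Real.exp ((ε ^ 2 / 8) * k) :=
        mul_le_mul tt hgrow (by positivity) (Real.exp_pos _).le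
    _ = _ := by
        rw [← Real.exp_add]; congr 1; field_simp; ring

lemma upper_tail {n k : ℕ} (hk : 0 < k) {p : ℝ} (h0 : 0 ≤ p) (h1 : p ≤ 1) :
    pr p (fun ω => k ≤ independenceNumber n ω) ≤
      Real.exp (k * (1 + Real.log (n / k) - p * (k - 1) / 2)) := by
  have hk' : (0 : ℝ) < k := by exact_mod_cast hk
  by_cases hkn : n < k
  · refine le_trans (le_of_eq ?_) (Real.exp_pos _).le
    unfold pr
    refine Finset.sum_eq_zero fun ω _ => ?_
    rw [if_neg, mul_zero]
    obtain ⟨S, _, hS⟩ := exists_indepNum ω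
    have := S.card_le_univ
    simp only [Fintype.card_fin] at this
    omega
  have hn' : (0 : ℝ) < n := by exact_mod_cast (by omega : 0 < n)
  have s1 : pr p (fun ω => k ≤ independenceNumber n ω) ≤
      pr p (fun ω => ∃ S ∈ (Finset.univ : Finset (Fin n)).powersetCard k,
        ∀ e ∈ edgesIn S, ω e = false) := by
    refine pr_mono h0 h1 fun ω hω => ?_
    obtain ⟨S, hS, hc⟩ := exists_indepNum ω
    obtain ⟨T, hT, hTc⟩ := Finset.exists_subset_card_eq (hω.trans hc.ge)
    refine ⟨T, by simp [Finset.mem_powersetCard, hTc], ?_⟩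
    rw [← isIndepSet_iff]
    exact fun i hi j hj => hS i (hT hi) j (hT hj)
  refine s1.trans ((pr_exists_le h0 h1 _ _).trans ?_)
  have s2 : ∀ S ∈ (Finset.univ : Finset (Fin n)).powersetCard k,
      pr p (fun ω => ∀ e ∈ edgesIn S, ω e = false) = (1 - p) ^ (k.choose 2) := by
    intro S hS
    rw [pr_false, card_edgesIn, (Finset.mem_powersetCard.1 hS).2]
  rw [Finset.sum_congr rfl s2, Finset.sum_const, Finset.card_powersetCard, Finset.card_univ,
    Fintype.card_fin, nsmul_eq_mul]
  have c1 : ((n.choose k : ℕ) : ℝ) ≤ Real.exp (k * (1 + Real.log (n / k))) := by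
    have a := Nat.choose_le_pow_div (α := ℝ) k n
    have b := Real.pow_div_factorial_le_exp (k : ℝ) hk'.le k
    have hf : (0 : ℝ) < k.factorial := by exact_mod_cast k.factorial_pos
    have e : Real.exp (k * (1 + Real.log (n / k))) = Real.exp k * ((n : ℝ) / k) ^ k := by
      rw [mul_add, Real.exp_add, mul_one, Real.exp_nat_mul (Real.log _), Real.exp_log (by positivity)]
    rw [e]
    refine a.trans ?_
    calc (n : ℝ) ^ k / k.factorial = (k : ℝ) ^ k / k.factorial * ((n : ℝ) / k) ^ k := by
          rw [div_pow]; field_simp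
      _ ≤ _ := mul_le_mul_of_nonneg_right b (by positivity)
  have c2 : (1 - p) ^ (k.choose 2) ≤ Real.exp (k * (- (p * (k - 1) / 2))) := by
    calc (1 - p) ^ (k.choose 2) ≤ (Real.exp (-p)) ^ (k.choose 2) :=
          pow_le_pow_left₀ (by linarith) (Real.one_sub_le_exp_neg p) _
      _ = _ := by
          rw [← Real.exp_nat_mul, Nat.cast_choose_two]; congr 1; ring
  calc _ ≤ _ := mul_le_mul c1 c2 (pow_nonneg (by linarith) _) (Real.exp_pos _).le
    _ = _ := by rw [← Real.exp_add]; congr 1; ring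

lemma erdosRenyi_eq {n : ℕ} {p : ℝ} (h0 : 0 ≤ p) (h1 : p ≤ 1) (Q : (Sym2 (Fin n) → Bool) → Prop) :
    erdosRenyi n p {ω | Q ω} = ENNReal.ofReal (pr p Q) := by
  classical
  have : IsFiniteMeasure (bernoulliMeasure p) := by
    unfold bernoulliMeasure
    constructor
    simp
  have hb : ∀ b : Bool, bernoulliMeasure p {b} = ENNReal.ofReal (if b then p else 1 - p) := by
    intro b
    cases b <;> simp [bernoulliMeasure]
  have hs : ∀ ω : Sym2 (Fin n) → Bool, erdosRenyi n p {ω} = ENNReal.ofReal (bw p ω) := by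
    intro ω
    rw [erdosRenyi, Measure.pi_singleton, bw, ENNReal.ofReal_prod_of_nonneg]
    · simp only [hb]
    · intro e _; split_ifs <;> linarith
  have : {ω | Q ω} = ((Finset.univ.filter Q : Finset (Sym2 (Fin n) → Bool)) : Set _) := by
    ext; simp
  rw [this, ← sum_measure_singleton, pr, Finset.sum_filter]
  rw [ENNReal.ofReal_sum_of_nonneg
    (fun ω _ => mul_nonneg (bw_nonneg h0 h1 ω) (by split_ifs <;> norm_num))]
  refine Finset.sum_congr rfl fun ω _ => ?_
  rw [hs]
  split_ifs <;> simp


lemma choose_bound {η p L : ℝ} {k l : ℕ} (hη : 0 < η) (hη1 : η ≤ 1) (hp0 : 0 < p)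
    (hp : p ≤ η / 8) (hL0 : 0 ≤ L) (hpk : p * k / 2 ≤ (1 - η / 4) * L) (hl : l ≤ k) :
    ((1 - p)⁻¹) ^ (l.choose 2) ≤ Real.exp ((1 - η / 8) * L) ^ l := by
  have hq : 0 < 1 - p := by linarith
  have i1 : (1 - p)⁻¹ ≤ Real.exp (p / (1 - p)) := by
    have := Real.add_one_le_exp (p / (1 - p))
    refine le_trans (le_of_eq ?_) this
    field_simp; ring
  calc ((1 - p)⁻¹) ^ (l.choose 2) ≤ (Real.exp (p / (1 - p))) ^ (l.choose 2) :=
        pow_le_pow_left₀ (by positivity) i1 _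
    _ = Real.exp ((l.choose 2 : ℕ) * (p / (1 - p))) := by rw [← Real.exp_nat_mul]
    _ ≤ Real.exp (l * ((1 - η / 8) * L)) := by
        rw [Real.exp_le_exp, Nat.cast_choose_two]
        have hlk : (l : ℝ) ≤ k := by exact_mod_cast hl
        have hl0 : (0 : ℝ) ≤ l := by positivity
        have j1 : (l : ℝ) * (l - 1) / 2 * (p / (1 - p)) ≤ l * ((p * k / 2) / (1 - p)) := by
          have : (l : ℝ) * (l - 1) / 2 * (p / (1 - p)) = l * ((p * (l - 1) / 2) / (1 - p)) := by
            ring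
          rw [this]
          gcongr
          linarith
        refine j1.trans (mul_le_mul_of_nonneg_left ?_ hl0)
        rw [div_le_iff₀ hq]
        refine hpk.trans ?_
        have h5 : (1 - η / 4) ≤ (1 - η / 8) * (1 - p) := by nlinarith
        have := mul_le_mul_of_nonneg_right h5 hL0
        linarith
    _ = _ := by rw [Real.exp_nat_mul]

set_option maxHeartbeats 1000000 in
lemma lower_part (η d : ℝ) (hη : 0 < η) (hη1 : η ≤ 1) (hd : 0 < d) (hL : 1 ≤ Real.log d)
    (h2 : (2 - η / 2) * (Real.log d / d) ≤ η / 16)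
    (h3 : 2 * (Real.log d * Real.exp (-(η / 8) * Real.log d)) ≤ (η / 8) ^ 2 / 8) :
    Tendsto (fun n : ℕ => pr (d / n)
      (fun ω => ¬ ((2 - η) * (Real.log d / d) * n ≤ (independenceNumber n ω : ℝ))))
      atTop (𝓝 0) := by
  set L := Real.log d with hLd
  have hdL : d = Real.exp L := (Real.exp_log hd).symm
  set c := L / d with hc
  have hc0 : 0 < c := by positivity
  set u := (2 - η / 2) * c with hu
  have hu0 : 0 < u := mul_pos (by linarith) hc0
  set m := ⌈u⁻¹⌉₊ with hmdef
  have hm : 0 < m := Nat.ceil_pos.2 (by positivity)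
  have hm' : (0 : ℝ) < m := by exact_mod_cast hm
  have hm1 : u⁻¹ ≤ m := Nat.le_ceil _
  have hm2 : (m : ℝ) < u⁻¹ + 1 := Nat.ceil_lt_add_one (by positivity)
  have hinv1 : (m : ℝ)⁻¹ ≤ u := inv_le_of_inv_le₀ hu0 hm1
  have hinv2 : u * (1 - u) ≤ (m : ℝ)⁻¹ := by
    rw [le_inv_comm₀ (mul_pos hu0 (by linarith)) hm']
    refine hm2.le.trans ?_
    have h1u : 0 < 1 - u := by linarith
    rw [← sub_nonneg]
    have : (u * (1 - u))⁻¹ - (u⁻¹ + 1) = u / (1 - u) := by field_simp; ring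
    rw [this]; positivity
  have hb : Tendsto (fun n : ℕ => Real.exp (-((η / 8) ^ 2 / 8) * ((n / m : ℕ) : ℝ)))
      atTop (𝓝 0) := by
    refine Real.tendsto_exp_atBot.comp ?_
    refine Tendsto.const_mul_atTop_of_neg (by have : 0 < η ^ 2 := by positivity
                                              nlinarith) ?_
    exact tendsto_natCast_atTop_atTop.comp (Nat.tendsto_div_const_atTop hm.ne')
  have ev1 : ∀ᶠ n : ℕ in atTop, max (8 * d / η) (8 / (c * η)) ≤ (n : ℝ) :=
    tendsto_natCast_atTop_atTop.eventually_ge_atTop _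
  refine squeeze_zero' ?_ ?_ hb
  · filter_upwards [ev1, eventually_ge_atTop m] with n hn hnm
    have hn0 : (0 : ℝ) < n := by exact_mod_cast (by omega : 0 < n)
    have hp : d / n ≤ η / 8 := by
      have := (le_max_left _ _).trans hn
      rw [div_le_iff₀ hη] at this
      rw [div_le_iff₀ hn0]; linarith
    exact pr_nonneg (by positivity) (by linarith) _
  · filter_upwards [ev1, eventually_ge_atTop m] with n hn hnm
    have hn0 : (0 : ℝ) < n := by exact_mod_cast (by omega : 0 < n)
    have hp : d / n ≤ η / 8 := by
      have := (le_max_left _ _).trans hn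
      rw [div_le_iff₀ hη] at this
      rw [div_le_iff₀ hn0]; linarith
    have hn2 : 1 ≤ n * c * (η / 8) := by
      have := (le_max_right _ _).trans hn
      rw [div_le_iff₀ (by positivity)] at this
      linarith
    set p := d / n with hpd
    have hp0 : 0 < p := by positivity
    set k := n / m with hk
    have hkpos : 0 < k := Nat.div_pos hnm hm
    have hkm : k * m ≤ n := Nat.div_mul_le_self n m
    have hk1 : (k : ℝ) ≤ n * u := by
      have : (k : ℝ) * m ≤ n := by exact_mod_cast hkm
      calc (k : ℝ) ≤ n * (m : ℝ)⁻¹ := by rw [← div_eq_mul_inv, le_div_iff₀ hm']; exact this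
        _ ≤ _ := mul_le_mul_of_nonneg_left hinv1 hn0.le
    have hk2 : n * (u * (1 - u)) - 1 ≤ (k : ℝ) := by
      have h : n < m * (k + 1) := Nat.lt_mul_div_succ n hm
      have h' : (n : ℝ) < m * (k + 1) := by exact_mod_cast h
      have : n * (m : ℝ)⁻¹ ≤ k + 1 := by
        rw [← div_eq_mul_inv, div_le_iff₀ hm']; linarith
      have := mul_le_mul_of_nonneg_left hinv2 hn0.le
      linarith
    have hpk : p * k / 2 ≤ (1 - η / 4) * L := by
      have : p * k ≤ p * (n * u) := mul_le_mul_of_nonneg_left hk1 hp0.le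
      have e : p * (n * u) = (2 - η / 2) * L := by
        rw [hpd, hu, hc]; field_simp
      rw [e] at this
      linarith
    refine le_trans (pr_mono hp0.le (by linarith) ?_)
      (lower_tail hkpos hm hkm (D := Real.exp ((1 - η / 8) * L)) hp0.le (by linarith)
        (Real.exp_pos _).le ?_ (η / 8) (by positivity) ?_)
    · intro ω h h'
      refine h (le_trans ?_ h')
      have e1 : (1 - η / 8) * (n * (u * (1 - u)) - 1) ≤ (1 - η / 8) * k :=
        mul_le_mul_of_nonneg_left hk2 (by linarith)
      refine le_trans ?_ e1
      have e2 : n * (u * (1 - η / 16)) ≤ n * (u * (1 - u)) :=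
        mul_le_mul_of_nonneg_left (mul_le_mul_of_nonneg_left (by linarith) hu0.le) hn0.le
      have e3 : (1 - η / 8) * (n * (u * (1 - η / 16)) - 1) ≤
          (1 - η / 8) * (n * (u * (1 - u)) - 1) :=
        mul_le_mul_of_nonneg_left (by linarith) (by linarith)
      refine le_trans ?_ e3
      have e4 : (1 - η / 8) * (n * (u * (1 - η / 16)) - 1) =
          (n * c) * ((1 - η / 8) * (2 - η / 2) * (1 - η / 16)) - (1 - η / 8) := by
        rw [hu]; ring
      have e5 : 2 - 7 * η / 8 ≤ (1 - η / 8) * (2 - η / 2) * (1 - η / 16) := by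
        have a1 : 0 ≤ η ^ 2 * (1 - η) := mul_nonneg (by positivity) (by linarith)
        have a2 : 0 ≤ η ^ 2 := by positivity
        nlinarith
      have e6 := mul_le_mul_of_nonneg_left e5 (by positivity : (0 : ℝ) ≤ n * c)
      rw [e4]
      nlinarith
    · intro l hl
      exact choose_bound hη hη1 hp0 hp (by linarith) hpk hl
    · refine le_trans ?_ h3
      have hD : Real.exp ((1 - η / 8) * L) = d * Real.exp (-(η / 8) * L) := by
        rw [hdL, ← Real.exp_add]; congr 1; ring
      rw [div_eq_mul_inv]
      calc Real.exp ((1 - η / 8) * L) * (m : ℝ)⁻¹ ≤ Real.exp ((1 - η / 8) * L) * (2 * c) := by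
            refine mul_le_mul_of_nonneg_left (hinv1.trans ?_) (Real.exp_pos _).le
            rw [hu]; nlinarith
        _ = _ := by
            rw [hD, hc]; field_simp

lemma upper_part (η d : ℝ) (hη : 0 < η) (hd : 0 < d) (hL : 1 ≤ Real.log d)
    (h2 : 3 ≤ η / 2 * Real.log d) :
    Tendsto (fun n : ℕ => pr (d / n)
      (fun ω => ¬ ((independenceNumber n ω : ℝ) ≤ (2 + η) * (Real.log d / d) * n)))
      atTop (𝓝 0) := by
  set L := Real.log d with hLd
  set c := L / d with hc
  have hc0 : 0 < c := by positivity
  set v := (2 + η) * c with hv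
  have hv0 : 0 < v := by positivity
  have hb : Tendsto (fun n : ℕ => Real.exp (-v * (n : ℝ))) atTop (𝓝 0) :=
    Real.tendsto_exp_atBot.comp
      (Tendsto.const_mul_atTop_of_neg (by linarith) tendsto_natCast_atTop_atTop)
  have ev1 : ∀ᶠ n : ℕ in atTop, d ≤ (n : ℝ) :=
    tendsto_natCast_atTop_atTop.eventually_ge_atTop _
  refine squeeze_zero' ?_ ?_ hb
  · filter_upwards [ev1] with n hn
    have hn0 : (0 : ℝ) < n := by linarith
    exact pr_nonneg (by positivity) (by rw [div_le_one hn0]; exact hn) _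
  · filter_upwards [ev1] with n hn
    have hn0 : (0 : ℝ) < n := by linarith
    set p := d / n with hpd
    have hp0 : 0 < p := by positivity
    have hp1 : p ≤ 1 := by rw [hpd, div_le_one hn0]; exact hn
    set k := ⌈v * n⌉₊ with hk
    have hk1 : v * n ≤ k := Nat.le_ceil _
    have hkpos : 0 < k := Nat.ceil_pos.2 (by positivity)
    have hk0 : (0 : ℝ) < k := by exact_mod_cast hkpos
    refine le_trans (pr_mono hp0.le hp1 ?_) ((upper_tail hkpos hp0.le hp1).trans ?_)
    · intro ω h
      rw [not_le] at h
      exact Nat.ceil_le.2 h.le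
    · rw [Real.exp_le_exp]
      have a1 : Real.log (n / k) ≤ L := by
        refine Real.log_le_log (by positivity) ?_
        rw [div_le_iff₀ hk0]
        have : d * (v * n) ≤ d * k := mul_le_mul_of_nonneg_left hk1 hd.le
        have e : d * (v * n) = (2 + η) * L * n := by rw [hv, hc]; field_simp
        rw [e] at this
        have : 1 * (n : ℝ) ≤ (2 + η) * L * n := mul_le_mul_of_nonneg_right (by nlinarith) hn0.le
        linarith
      have a2 : (2 + η) * L - 1 ≤ p * (k - 1) := by
        have : p * (v * n) ≤ p * k := mul_le_mul_of_nonneg_left hk1 hp0.le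
        have e : p * (v * n) = (2 + η) * L := by rw [hv, hc, hpd]; field_simp
        linarith
      have a3 : 1 + Real.log (n / k) - p * (k - 1) / 2 ≤ -1 := by nlinarith
      have := mul_le_mul_of_nonneg_left a3 hk0.le
      linarith

lemma exists_d0 (η : ℝ) (hη : 0 < η) : ∃ d₀ : ℝ, ∀ d, d₀ ≤ d → 0 < d ∧ 1 ≤ Real.log d ∧
    (2 - η / 2) * (Real.log d / d) ≤ η / 16 ∧
    2 * (Real.log d * Real.exp (-(η / 8) * Real.log d)) ≤ (η / 8) ^ 2 / 8 ∧
    3 ≤ η / 2 * Real.log d := by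
  rw [← eventually_atTop]
  have t1 : Tendsto (fun d : ℝ => (2 - η / 2) * (Real.log d / d)) atTop (𝓝 0) := by
    have := (Real.isLittleO_log_id_atTop).tendsto_div_nhds_zero.const_mul (2 - η / 2)
    simpa using this
  have t2 : Tendsto (fun d : ℝ => 2 * (Real.log d * Real.exp (-(η / 8) * Real.log d)))
      atTop (𝓝 0) := by
    have h := (tendsto_rpow_mul_exp_neg_mul_atTop_nhds_zero 1 (η / 8) (by positivity)).comp
      Real.tendsto_log_atTop
    have := h.const_mul 2
    simpa [Function.comp_def] using this
  have t3 : Tendsto (fun d : ℝ => η / 2 * Real.log d) atTop atTop :=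
    Real.tendsto_log_atTop.const_mul_atTop (by positivity)
  filter_upwards [eventually_gt_atTop 0, Real.tendsto_log_atTop.eventually_ge_atTop 1,
    t1.eventually_le_const (by positivity : (0 : ℝ) < η / 16),
    t2.eventually_le_const (by positivity : (0 : ℝ) < (η / 8) ^ 2 / 8),
    t3.eventually_ge_atTop 3] with d a b c e f
  exact ⟨a, b, c, e, f⟩

/-- for every `ε > 0` there is `d₀` such that for all `d ≥ d₀`, whp as
`n → ∞` the independence number of `G(n,d/n)` lies between `(2-ε)·(log d/d)·n`
and `(2+ε)·(log d/d)·n`. -/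
theorem independence_number_sparse_er (ε : ℝ) (hε : 0 < ε) :
    ∃ d₀ : ℝ, ∀ d : ℝ, d₀ ≤ d →
      Tendsto
        (fun n : ℕ =>
          erdosRenyi n (d / n)
            {ω | (2 - ε) * (Real.log d / d) * n ≤ (independenceNumber n ω : ℝ) ∧
                 (independenceNumber n ω : ℝ) ≤ (2 + ε) * (Real.log d / d) * n})
        atTop (𝓝 1) := by
  set η := min ε 1 with hη
  have hη0 : 0 < η := lt_min hε one_pos
  have hη1 : η ≤ 1 := min_le_right _ _
  have hηε : η ≤ ε := min_le_left _ _
  obtain ⟨d₀, hd₀⟩ := exists_d0 η hη0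
  refine ⟨d₀, fun d hd => ?_⟩
  obtain ⟨hdpos, hL, h2, h3, h4⟩ := hd₀ d hd
  have hlow := lower_part η d hη0 hη1 hdpos hL h2 h3
  have hupp := upper_part η d hη0 hdpos hL h4
  have hlim : Tendsto (fun n : ℕ => ENNReal.ofReal (1
      - pr (d / n) (fun ω : Sym2 (Fin n) → Bool =>
          ¬ ((2 - η) * (Real.log d / d) * n ≤ (independenceNumber n ω : ℝ)))
      - pr (d / n) (fun ω : Sym2 (Fin n) → Bool =>
          ¬ ((independenceNumber n ω : ℝ) ≤ (2 + η) * (Real.log d / d) * n))))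
      atTop (𝓝 1) := by
    have := ENNReal.tendsto_ofReal ((tendsto_const_nhds (x := (1 : ℝ))).sub hlow |>.sub hupp)
    simpa using this
  have ev1 : ∀ᶠ n : ℕ in atTop, d ≤ (n : ℝ) :=
    tendsto_natCast_atTop_atTop.eventually_ge_atTop _
  have hcn : ∀ n : ℕ, 0 ≤ Real.log d / d * n := fun n => by positivity
  refine tendsto_of_tendsto_of_tendsto_of_le_of_le' hlim tendsto_const_nhds ?_ ?_
  · filter_upwards [ev1] with n hn
    have hn0 : (0 : ℝ) < n := by linarith
    have hp0 : 0 ≤ d / n := by positivity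
    have hp1 : d / n ≤ 1 := by rw [div_le_one hn0]; exact hn
    rw [erdosRenyi_eq hp0 hp1]
    refine ENNReal.ofReal_le_ofReal ((pr_and_ge hp0 hp1 _ _).trans (pr_mono hp0 hp1 ?_))
    rintro ω ⟨a, b⟩
    have := mul_le_mul_of_nonneg_right hηε (hcn n)
    constructor <;> nlinarith
  · filter_upwards [ev1] with n hn
    have hn0 : (0 : ℝ) < n := by linarith
    have hp0 : 0 ≤ d / n := by positivity
    have hp1 : d / n ≤ 1 := by rw [div_le_one hn0]; exact hn
    rw [erdosRenyi_eq hp0 hp1, ← ENNReal.ofReal_one]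
    refine ENNReal.ofReal_le_ofReal ?_
    rw [← bw_sum (E := Sym2 (Fin n)) (d / n), pr]
    refine Finset.sum_le_sum fun ω _ => mul_le_of_le_one_right (bw_nonneg hp0 hp1 ω) ?_
    split_ifs <;> norm_num
end

section
/- For every ε > 0 there exists d₀ such that for every d ≥ d₀ there exist constants 0 < ν₁ < ν₂ < 1 with the following property: whp as n → ∞, for every two independent sets I and J of the random graph G(n,d/n), each of cardinality at least (1 + 1/√2 + ε)·(log d / d)·n, the size of the symmetric difference |I Δ J| does not lie in the open interval (ν₁·n, ν₂·n). (This is the Overlap Gap Property for independent sets at the multiplicative factor 1/2 + 1/(2√2) of the optimal size 2(1+o_d(1))(log d/d)n.) -/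
open MeasureTheory Filter Topology

lemma key_real (ε γ x y : ℝ) (hε : 0 < ε) (s L : ℝ) (hs : s = 1 + 1 / Real.sqrt 2 + ε)
    (hL : 3 / ε ≤ L)
    (hx : s ≤ γ + x) (hy : s ≤ γ + y)
    (h1 : 2 * (s - 1) ≤ x + y) (h2 : x + y ≤ 2 * (s - 1) + 2 * ε) :
    γ + x + y + 4 / L ^ 2 ≤ ((γ + x) ^ 2 + (γ + y) ^ 2 - γ ^ 2) / 2 := by
  have hL2 : 4 / L ^ 2 ≤ ε ^ 2 / 2 := by
    have h3 : 3 ≤ L * ε := by rwa [div_le_iff₀ hε] at hL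
    have hLpos : 0 < L := lt_of_lt_of_le (by positivity) hL
    rw [div_le_iff₀ (by positivity)]
    nlinarith
  have hq : (1 / Real.sqrt 2) ^ 2 = 1 / 2 := by
    rw [div_pow, Real.sq_sqrt (by norm_num)]; norm_num
  have hq0 : 0 < 1 / Real.sqrt 2 := by positivity
  set q := 1 / Real.sqrt 2
  have hs2 : ε ^ 2 + 1 / 2 ≤ (s - 1) ^ 2 := by
    rw [hs]; nlinarith [mul_pos hq0 hε]
  obtain ⟨σ, hσ⟩ : ∃ σ, σ = x + y := ⟨_, rfl⟩
  obtain ⟨h, hh⟩ : ∃ h, h = γ - (s - σ / 2) := ⟨_, rfl⟩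
  obtain ⟨τ, hτ⟩ : ∃ τ, τ = σ / 2 - (s - 1) := ⟨_, rfl⟩
  have hh0 : 0 ≤ h := by linarith
  have hτ0 : 0 ≤ τ := by linarith
  have hτ1 : τ ≤ ε := by linarith
  have e1 : ((γ + x) ^ 2 + (γ + y) ^ 2 - γ ^ 2) / 2
      = γ ^ 2 / 2 + γ * σ + σ ^ 2 / 4 + (x - y) ^ 2 / 4 := by rw [hσ]; ring
  have e2 : γ ^ 2 / 2 + γ * σ + σ ^ 2 / 4 - γ - σ
      = (s - 1) ^ 2 - 1 / 2 - τ ^ 2 / 2 + h ^ 2 / 2 + h * (s + σ / 2 - 1) := by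
    rw [hh, hτ]; ring
  have hs1 : 0 ≤ s - 1 := by rw [hs]; linarith
  have e3 : 0 ≤ h * (s + σ / 2 - 1) := mul_nonneg hh0 (by linarith)
  have e4 : τ ^ 2 ≤ ε ^ 2 := by nlinarith
  nlinarith [sq_nonneg (x - y), sq_nonneg h]

lemma key_scaled (ε d n c x y M : ℝ) (hε : 0 < ε) (hd : 1 < d) (hn : 0 < n) (s : ℝ)
    (hs : s = 1 + 1 / Real.sqrt 2 + ε) (hL : 3 / ε ≤ Real.log d)
    (hx : s * (Real.log d / d) * n ≤ c + x) (hy : s * (Real.log d / d) * n ≤ c + y)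
    (h1 : 2 * (s - 1) * (Real.log d / d) * n ≤ x + y)
    (h2 : x + y ≤ (2 * (s - 1) + 2 * ε) * (Real.log d / d) * n)
    (hu : c + x + y ≤ n)
    (hM : 2 * M = (c + x) ^ 2 + (c + y) ^ 2 - c ^ 2 - (c + x + y)) :
    Real.exp (-(d / n * M)) ≤ Real.exp (d / 2) * Real.exp (-(4 * n / d)) *
      Real.exp (-(Real.log d * (c + x + y))) := by
  rw [← Real.exp_add, ← Real.exp_add, Real.exp_le_exp]
  have hd0 : 0 < d := by linarith
  have hLpos : 0 < Real.log d := Real.log_pos hd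
  set L := Real.log d
  have hr : 0 < L / d * n := by positivity
  obtain ⟨r, hrd⟩ : ∃ r, r = L / d * n := ⟨_, rfl⟩
  rw [mul_assoc, ← hrd] at hx hy h1 h2
  rw [← hrd] at hr
  have key := key_real ε (c / r) (x / r) (y / r) hε s L hs hL
    (by rw [← add_div, le_div_iff₀ hr]; exact hx)
    (by rw [← add_div, le_div_iff₀ hr]; exact hy)
    (by rw [← add_div, le_div_iff₀ hr]; exact h1)
    (by rw [← add_div, div_le_iff₀ hr]; exact h2)
  have hMe : M = ((c + x) ^ 2 + (c + y) ^ 2 - c ^ 2) / 2 - (c + x + y) / 2 := by linarith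
  have k2 := mul_le_mul_of_nonneg_left key (show 0 ≤ L * r by positivity)
  have e1 : L * r * (c / r + x / r + y / r + 4 / L ^ 2) = L * (c + x + y) + 4 * n / d := by
    have : 4 * n / d = 4 * r / L := by rw [hrd]; field_simp
    rw [this]; field_simp
  have e2 : L * r * (((c / r + x / r) ^ 2 + (c / r + y / r) ^ 2 - (c / r) ^ 2) / 2)
      = d / n * (((c + x) ^ 2 + (c + y) ^ 2 - c ^ 2) / 2) := by
    have h3 : d / n = L / r := by rw [hrd]; field_simp
    rw [h3]; field_simp
  rw [e1, e2] at k2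
  have e3 : d / n * ((c + x + y) / 2) ≤ d / 2 := by
    have : d / n * ((c + x + y) / 2) ≤ d / n * (n / 2) :=
      mul_le_mul_of_nonneg_left (by linarith) (by positivity)
    refine this.trans (le_of_eq ?_)
    field_simp
  rw [hMe, mul_sub]
  linarith

lemma sum_pairs (n : ℕ) (t : ℝ) :
    ∑ P : Finset (Fin n) × Finset (Fin n), t ^ (P.1 ∪ P.2).card = (1 + 3 * t) ^ n := by
  have h := Fintype.sum_pow (fun k : Bool × Bool => if k.1 || k.2 then t else 1) n
  have h4 : (∑ k : Bool × Bool, if k.1 || k.2 then t else 1) = 1 + 3 * t := by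
    simp [Fintype.sum_prod_type]; ring
  rw [h4] at h
  rw [h]
  refine Finset.sum_bij' (fun P _ => fun i => (decide (i ∈ P.1), decide (i ∈ P.2)))
    (fun g _ => (Finset.univ.filter fun i => (g i).1 = true,
      Finset.univ.filter fun i => (g i).2 = true)) ?_ ?_ ?_ ?_ ?_
  · simp
  · simp
  · intro P _; ext <;> simp
  · intro g _; ext <;> simp
  · intro P _
    rw [Finset.prod_ite]
    simp only [Finset.prod_const, one_pow, mul_one]
    congr 1
    apply congrArg Finset.card
    ext i; simp

/-- Edges inside `S`. -/
def insideEdges {n : ℕ} (S : Finset (Fin n)) : Finset (Sym2 (Fin n)) :=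
  S.sym2.filter fun e => ¬ e.IsDiag

lemma card_insideEdges {n : ℕ} (S : Finset (Fin n)) :
    (2 * (insideEdges S).card : ℝ) = (S.card : ℝ) ^ 2 - S.card := by
  have h : insideEdges S = S.offDiag.image (fun p => s(p.1, p.2)) := by
    ext e
    induction e using Sym2.ind with
    | _ a b =>
      simp [insideEdges]
      grind
  have h2 := Sym2.card_image_offDiag S
  have h3 : (insideEdges S).card = S.card.choose 2 := by rw [h]; exact h2
  rw [h3, Nat.cast_choose_two]; ring

lemma inter_insideEdges {n : ℕ} (S T : Finset (Fin n)) :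
    insideEdges S ∩ insideEdges T = insideEdges (S ∩ T) := by
  ext e
  induction e using Sym2.ind with
  | _ a b =>
    simp [insideEdges]
    grind

lemma indep_false {n : ℕ} (ω : Sym2 (Fin n) → Bool) (S : Finset (Fin n))
    (h : IsIndepSet n ω S) : ∀ e ∈ insideEdges S, ω e = false := by
  intro e
  induction e using Sym2.ind with
  | _ a b =>
    intro he
    simp [insideEdges] at he
    exact h a he.1.1 b he.1.2 he.2

lemma bernoulli_prob (p : ℝ) (h0 : 0 ≤ p) (h1 : p ≤ 1) :
    IsProbabilityMeasure (bernoulliMeasure p) := by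
  constructor
  simp [bernoulliMeasure]
  rw [← ENNReal.ofReal_add h0 (by linarith)]
  simp

lemma measure_false (n : ℕ) (p : ℝ) (h0 : 0 ≤ p) (h1 : p ≤ 1) (F : Finset (Sym2 (Fin n))) :
    erdosRenyi n p {ω | ∀ e ∈ F, ω e = false} ≤ ENNReal.ofReal (Real.exp (-(p * F.card))) := by
  haveI := bernoulli_prob p h0 h1
  have hset : {ω : Sym2 (Fin n) → Bool | ∀ e ∈ F, ω e = false}
      = Set.pi Set.univ (fun e => if e ∈ F then {false} else Set.univ) := by
    ext ω
    simp only [Set.mem_setOf_eq, Set.mem_pi, Set.mem_univ, true_implies]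
    refine forall_congr' fun e => ?_
    by_cases he : e ∈ F <;> simp [he]
  rw [hset, erdosRenyi, Measure.pi_pi]
  have hv : ∀ e, bernoulliMeasure p (if e ∈ F then {false} else Set.univ)
      = if e ∈ F then ENNReal.ofReal (1 - p) else 1 := by
    intro e
    by_cases he : e ∈ F
    · simp [he, bernoulliMeasure]
    · rw [if_neg he, if_neg he]; exact measure_univ
  simp only [hv]
  rw [Finset.prod_ite]
  simp only [Finset.prod_const, one_pow, mul_one, Finset.filter_mem_eq_inter,
    Finset.univ_inter]
  rw [← ENNReal.ofReal_pow (by linarith)]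
  apply ENNReal.ofReal_le_ofReal
  have h := Real.add_one_le_exp (-p)
  calc (1 - p) ^ F.card ≤ (Real.exp (-p)) ^ F.card :=
        pow_le_pow_left₀ (by linarith) (by linarith) _
    _ = _ := by rw [← Real.exp_nat_mul]; congr 1; ring

/-- The bad event for a pair `(I, J)` is unlikely. -/
lemma pair_bound (n : ℕ) (ε d : ℝ) (hε : 0 < ε) (hd : 1 < d) (hn : d ≤ n) (s : ℝ)
    (hs : s = 1 + 1 / Real.sqrt 2 + ε) (hL : 3 / ε ≤ Real.log d) (I J : Finset (Fin n))
    (hI : s * (Real.log d / d) * n ≤ (I.card : ℝ)) (hJ : s * (Real.log d / d) * n ≤ (J.card : ℝ))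
    (h1 : 2 * (s - 1) * (Real.log d / d) * n ≤ ((symmDiff I J).card : ℝ))
    (h2 : ((symmDiff I J).card : ℝ) ≤ (2 * (s - 1) + 2 * ε) * (Real.log d / d) * n) :
    erdosRenyi n (d / n) {ω | IsIndepSet n ω I ∧ IsIndepSet n ω J} ≤
      ENNReal.ofReal (Real.exp (d / 2) * Real.exp (-(4 * n / d)) * (1 / d) ^ (I ∪ J).card) := by
  have hn0 : (0 : ℝ) < n := by linarith
  have hsub : {ω : Sym2 (Fin n) → Bool | IsIndepSet n ω I ∧ IsIndepSet n ω J} ⊆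
      {ω | ∀ e ∈ insideEdges I ∪ insideEdges J, ω e = false} := by
    rintro ω ⟨hi, hj⟩ e he
    rcases Finset.mem_union.1 he with he | he
    · exact indep_false ω I hi e he
    · exact indep_false ω J hj e he
  refine (measure_mono hsub).trans ((measure_false n (d / n) (by positivity)
    ((div_le_one hn0).2 hn) _).trans (ENNReal.ofReal_le_ofReal ?_))
  have cI : (I.card : ℝ) = (I ∩ J).card + (I \ J).card := by
    have := Finset.card_inter_add_card_sdiff I J
    exact_mod_cast this.symm
  have cJ : (J.card : ℝ) = (I ∩ J).card + (J \ I).card := by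
    have := Finset.card_inter_add_card_sdiff J I
    rw [Finset.inter_comm] at this
    exact_mod_cast this.symm
  have cU : ((I ∪ J).card : ℝ) = (I ∩ J).card + (I \ J).card + (J \ I).card := by
    have := Finset.card_union_add_card_inter I J
    have h : ((I ∪ J).card : ℝ) + (I ∩ J).card = I.card + J.card := by exact_mod_cast this
    linarith
  have cS : ((symmDiff I J).card : ℝ) = (I \ J).card + (J \ I).card := by
    have : (symmDiff I J).card = (I \ J).card + (J \ I).card := by
      rw [symmDiff_def]
      exact Finset.card_union_of_disjoint disjoint_sdiff_sdiff
    exact_mod_cast this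
  have cn : ((I ∪ J).card : ℝ) ≤ n := by
    have := Finset.card_le_univ (I ∪ J)
    rw [Fintype.card_fin] at this
    exact_mod_cast this
  have cM : ((insideEdges I ∪ insideEdges J).card : ℝ) + (insideEdges (I ∩ J)).card
      = (insideEdges I).card + (insideEdges J).card := by
    rw [← inter_insideEdges]
    exact_mod_cast Finset.card_union_add_card_inter _ _
  have m1 := card_insideEdges I
  have m2 := card_insideEdges J
  have m3 := card_insideEdges (I ∩ J)
  have hpow : (1 / d) ^ (I ∪ J).card = Real.exp (-(Real.log d * (I ∪ J).card)) := by
    rw [mul_comm, ← mul_neg, Real.exp_nat_mul, Real.exp_neg, Real.exp_log (by linarith), one_div]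
  rw [hpow]
  have := key_scaled ε d n (I ∩ J).card (I \ J).card (J \ I).card
    (insideEdges I ∪ insideEdges J).card hε hd hn0 s hs hL (by rw [← cI]; exact hI)
    (by rw [← cJ]; exact hJ) (by rw [← cS]; exact h1) (by rw [← cS]; exact h2)
    (by rw [← cU]; exact cn) (by rw [← cU, ← cI, ← cJ]; linarith)
  rw [cU]
  exact this

/-- Overlap Gap Property for independent sets: for every `ε > 0`
there is `d₀` such that for every `d ≥ d₀` there are `0 < ν₁ < ν₂ < 1` with the
following property, whp as `n → ∞` in `G(n,d/n)`: any two independent sets `I, J`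
of cardinality at least `(1 + 1/√2 + ε)·(log d/d)·n` have symmetric difference
whose size does not lie in the open interval `(ν₁·n, ν₂·n)`. -/
theorem overlap_gap_property_independent_sets (ε : ℝ) (hε : 0 < ε) :
    ∃ d₀ : ℝ, ∀ d : ℝ, d₀ ≤ d →
      ∃ ν₁ ν₂ : ℝ, 0 < ν₁ ∧ ν₁ < ν₂ ∧ ν₂ < 1 ∧
        Tendsto
          (fun n : ℕ =>
            erdosRenyi n (d / n)
              {ω | ∀ I J : Finset (Fin n),
                IsIndepSet n ω I → IsIndepSet n ω J →
                (1 + 1 / Real.sqrt 2 + ε) * (Real.log d / d) * n ≤ (I.card : ℝ) →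
                (1 + 1 / Real.sqrt 2 + ε) * (Real.log d / d) * n ≤ (J.card : ℝ) →
                ((symmDiff I J).card : ℝ) ∉ Set.Ioo (ν₁ * n) (ν₂ * n)})
          atTop (𝓝 1) := by
  set s : ℝ := 1 + 1 / Real.sqrt 2 + ε with hs
  have hq0 : 0 < 1 / Real.sqrt 2 := by positivity
  have hlim : Tendsto (fun d : ℝ => (2 * (s - 1) + 2 * ε) * (Real.log d / d)) atTop (𝓝 0) := by
    have h := Real.isLittleO_log_id_atTop.tendsto_div_nhds_zero
    simpa using h.const_mul (2 * (s - 1) + 2 * ε)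
  have hev : ∀ᶠ d : ℝ in atTop, 1 < d ∧ 3 / ε ≤ Real.log d ∧
      (2 * (s - 1) + 2 * ε) * (Real.log d / d) < 1 :=
    (eventually_gt_atTop 1).and ((Real.tendsto_log_atTop.eventually_ge_atTop _).and
      (hlim.eventually_lt_const one_pos))
  obtain ⟨d₀, hd₀⟩ := eventually_atTop.1 hev
  refine ⟨d₀, fun d hdd => ?_⟩
  obtain ⟨hd, hL, hν⟩ := hd₀ d hdd
  have hd0 : 0 < d := by linarith
  have hLd : 0 < Real.log d / d := div_pos (Real.log_pos hd) hd0
  have hs1 : 0 < s - 1 := by rw [hs]; linarith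
  refine ⟨2 * (s - 1) * (Real.log d / d), (2 * (s - 1) + 2 * ε) * (Real.log d / d),
    by positivity, by nlinarith [mul_pos hε hLd], hν, ?_⟩
  have hbound : Tendsto (fun n : ℕ => 1 - ENNReal.ofReal
      (Real.exp (d / 2) * Real.exp (-((n : ℝ) / d)))) atTop (𝓝 1) := by
    have h1 : Tendsto (fun n : ℕ => Real.exp (d / 2) * Real.exp (-((n : ℝ) / d))) atTop (𝓝 0) := by
      have h2 : Tendsto (fun n : ℕ => (n : ℝ) / d) atTop atTop :=
        tendsto_natCast_atTop_atTop.atTop_div_const hd0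
      simpa using (Real.tendsto_exp_neg_atTop_nhds_zero.comp h2).const_mul (Real.exp (d / 2))
    have h3 := ENNReal.tendsto_ofReal h1
    have h4 := ENNReal.Tendsto.sub (tendsto_const_nhds (x := (1 : ENNReal)) (f := atTop)) h3
      (Or.inl ENNReal.one_ne_top)
    simpa using h4
  have hlarge : ∀ᶠ n : ℕ in atTop, d ≤ n :=
    tendsto_natCast_atTop_atTop.eventually_ge_atTop d
  have hprob : ∀ n : ℕ, d ≤ n → IsProbabilityMeasure (erdosRenyi n (d / n)) := by
    intro n hn
    have hn0 : (0 : ℝ) < n := by linarith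
    haveI := bernoulli_prob (d / n) (by positivity) ((div_le_one hn0).2 hn)
    unfold erdosRenyi
    infer_instance
  refine tendsto_of_tendsto_of_tendsto_of_le_of_le' hbound tendsto_const_nhds ?_ ?_
  swap
  · filter_upwards [hlarge] with n hn
    haveI := hprob n hn
    exact prob_le_one
  filter_upwards [hlarge] with n hn
  haveI := hprob n hn
  set A := {ω : Sym2 (Fin n) → Bool | ∀ I J : Finset (Fin n),
                IsIndepSet n ω I → IsIndepSet n ω J →
                s * (Real.log d / d) * n ≤ (I.card : ℝ) →
                s * (Real.log d / d) * n ≤ (J.card : ℝ) →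
                ((symmDiff I J).card : ℝ) ∉ Set.Ioo (2 * (s - 1) * (Real.log d / d) * n)
                  ((2 * (s - 1) + 2 * ε) * (Real.log d / d) * n)} with hA
  suffices hbad : erdosRenyi n (d / n) Aᶜ ≤
      ENNReal.ofReal (Real.exp (d / 2) * Real.exp (-((n : ℝ) / d))) by
    have hmeas : MeasurableSet A := (Set.toFinite A).measurableSet
    rw [tsub_le_iff_right]
    calc (1 : ENNReal) = erdosRenyi n (d / n) A + erdosRenyi n (d / n) Aᶜ :=
          (prob_add_prob_compl hmeas).symm
      _ ≤ _ := by gcongr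
  classical
  let B : Finset (Fin n) × Finset (Fin n) → Set (Sym2 (Fin n) → Bool) := fun P =>
    if s * (Real.log d / d) * n ≤ (P.1.card : ℝ) ∧ s * (Real.log d / d) * n ≤ (P.2.card : ℝ) ∧
      ((symmDiff P.1 P.2).card : ℝ) ∈ Set.Ioo (2 * (s - 1) * (Real.log d / d) * n)
                  ((2 * (s - 1) + 2 * ε) * (Real.log d / d) * n)
    then {ω | IsIndepSet n ω P.1 ∧ IsIndepSet n ω P.2} else ∅
  have hsub : Aᶜ ⊆ ⋃ P, B P := by
    intro ω hω
    simp only [hA, Set.mem_compl_iff, Set.mem_setOf_eq] at hω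
    push Not at hω
    obtain ⟨I, J, hi, hj, hI, hJ, hm⟩ := hω
    refine Set.mem_iUnion.2 ⟨(I, J), ?_⟩
    simp only [B]
    rw [if_pos ⟨hI, hJ, hm⟩]
    exact ⟨hi, hj⟩
  have hB : ∀ P, erdosRenyi n (d / n) (B P) ≤ ENNReal.ofReal
      (Real.exp (d / 2) * Real.exp (-(4 * n / d)) * (1 / d) ^ (P.1 ∪ P.2).card) := by
    intro P
    simp only [B]
    split_ifs with h
    · exact pair_bound n ε d hε hd hn s hs hL P.1 P.2 h.1 h.2.1 h.2.2.1.le h.2.2.2.le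
    · simp
  calc erdosRenyi n (d / n) Aᶜ ≤ erdosRenyi n (d / n) (⋃ P, B P) := measure_mono hsub
    _ ≤ ∑ P, erdosRenyi n (d / n) (B P) := measure_iUnion_fintype_le _ _
    _ ≤ ∑ P : Finset (Fin n) × Finset (Fin n), ENNReal.ofReal
      (Real.exp (d / 2) * Real.exp (-(4 * n / d)) * (1 / d) ^ (P.1 ∪ P.2).card) :=
        Finset.sum_le_sum fun P _ => hB P
    _ = ENNReal.ofReal (Real.exp (d / 2) * Real.exp (-(4 * n / d)) * (1 + 3 * (1 / d)) ^ n) := by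
        rw [← ENNReal.ofReal_sum_of_nonneg (fun _ _ => by positivity), ← Finset.mul_sum,
          sum_pairs]
    _ ≤ _ := by
        apply ENNReal.ofReal_le_ofReal
        rw [mul_assoc]
        apply mul_le_mul_of_nonneg_left _ (Real.exp_pos _).le
        have h := Real.add_one_le_exp (3 * (1 / d))
        calc Real.exp (-(4 * n / d)) * (1 + 3 * (1 / d)) ^ n
            ≤ Real.exp (-(4 * n / d)) * (Real.exp (3 * (1 / d))) ^ n := by
              gcongr
              linarith
          _ = _ := by
              rw [← Real.exp_nat_mul, ← Real.exp_add]
              congr 1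
              field_simp
              ring
end

section
/- Let G_n denote the output of the greedy independent set algorithm applied to G(n,d/n). For every ε > 0 there exists d₀ such that for every d ≥ d₀, whp as n → ∞ the greedy algorithm produces an independent set of size at least (1−ε)·(log d / d)·n, i.e., roughly half of the optimal independent set size 2(1+o_d(1))·(log d/d)·n. -/
open MeasureTheory Filter Topology

open scoped Classical in
/-- The greedy independent set algorithm: process the vertices `0,1,…,n-1` in
increasing order, maintaining an independent set `I` initialized to `∅`, and add
vertex `v` to `I` iff `v` is adjacent to no vertex currently in `I`. -/
noncomputable def greedyIndepSet (n : ℕ) (ω : Sym2 (Fin n) → Bool) : Finset (Fin n) :=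
  (List.finRange n).foldl
    (fun I v => if ∀ u ∈ I, ω s(u, v) = false then insert v I else I) ∅

namespace GreedyAux

open scoped Classical in
/-- One-by-one greedy run along an arbitrary list of vertices. -/
noncomputable def run {n : ℕ} (ω : Sym2 (Fin n) → Bool) (l : List (Fin n)) : Finset (Fin n) :=
  l.foldl (fun I v => if ∀ u ∈ I, ω s(u, v) = false then insert v I else I) ∅

open scoped Classical in
lemma run_append {n : ℕ} (ω : Sym2 (Fin n) → Bool) (l : List (Fin n)) (v : Fin n) :
    run ω (l ++ [v]) =
      if ∀ u ∈ run ω l, ω s(u, v) = false then insert v (run ω l) else run ω l := by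
  simp only [run, List.foldl_append, List.foldl_cons, List.foldl_nil]
  congr

lemma run_subset {n : ℕ} (ω : Sym2 (Fin n) → Bool) (l : List (Fin n)) :
    ∀ u ∈ run ω l, u ∈ l := by
  induction l using List.reverseRecOn with
  | nil => simp [run]
  | append_singleton l v ih =>
    intro u hu
    rw [run_append] at hu
    split_ifs at hu
    · rcases Finset.mem_insert.1 hu with h | h
      · simp [h]
      · simp [ih u h]
    · simp [ih u hu]

lemma run_congr {n : ℕ} (ω ω' : Sym2 (Fin n) → Bool) (l : List (Fin n))
    (h : ∀ u ∈ l, ∀ v ∈ l, ω s(u, v) = ω' s(u, v)) : run ω l = run ω' l := by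
  induction l using List.reverseRecOn with
  | nil => simp [run]
  | append_singleton l v ih =>
    have ih' := ih (fun u hu w hw => h u (by simp [hu]) w (by simp [hw]))
    rw [run_append, run_append, ih']
    have : (∀ u ∈ run ω' l, ω s(u, v) = false) ↔ (∀ u ∈ run ω' l, ω' s(u, v) = false) := by
      refine forall₂_congr fun u hu => ?_
      rw [h u (by simp [run_subset ω' l u hu]) v (by simp)]
    simp only [this]

lemma isProb_bernoulli {p : ℝ} (h0 : 0 ≤ p) (h1 : p ≤ 1) :
    IsProbabilityMeasure (bernoulliMeasure p) := by
  constructor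
  simp only [bernoulliMeasure, Measure.coe_add, Measure.coe_smul, Pi.add_apply, Pi.smul_apply,
    measure_univ, smul_eq_mul, mul_one]
  rw [← ENNReal.ofReal_add h0 (by linarith)]
  simp

lemma isProb_er {p : ℝ} (h0 : 0 ≤ p) (h1 : p ≤ 1) (n : ℕ) :
    IsProbabilityMeasure (erdosRenyi n p) := by
  have := isProb_bernoulli h0 h1
  unfold erdosRenyi
  infer_instance

lemma indep_events {p : ℝ} (h0 : 0 ≤ p) (h1 : p ≤ 1) (n : ℕ) (S T : Finset (Sym2 (Fin n)))
    (hST : Disjoint S T) (A B : Set (Sym2 (Fin n) → Bool))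
    (hA : ∀ ω ω', (∀ e ∈ S, ω e = ω' e) → ω ∈ A → ω' ∈ A)
    (hB : ∀ ω ω', (∀ e ∈ T, ω e = ω' e) → ω ∈ B → ω' ∈ B) :
    erdosRenyi n p (A ∩ B) = erdosRenyi n p A * erdosRenyi n p B := by
  have := isProb_bernoulli h0 h1
  have hi : ProbabilityTheory.iIndepFun (fun (e : Sym2 (Fin n)) (ω : Sym2 (Fin n) → Bool) => ω e)
      (erdosRenyi n p) :=
    ProbabilityTheory.iIndepFun_pi (X := fun _ b => b) (fun _ => aemeasurable_id)
  have hI := hi.indepFun_finset S T hST (fun e => measurable_pi_apply e)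
  have key : ∀ (U : Finset (Sym2 (Fin n))) (A : Set (Sym2 (Fin n) → Bool)),
      (∀ ω ω', (∀ e ∈ U, ω e = ω' e) → ω ∈ A → ω' ∈ A) →
      (fun (ω : Sym2 (Fin n) → Bool) (i : U) => ω i) ⁻¹'
        ((fun (ω : Sym2 (Fin n) → Bool) (i : U) => ω i) '' A) = A := by
    intro U A hA
    ext ω
    constructor
    · rintro ⟨ω', h', he⟩
      exact hA ω' ω (fun e he' => congrFun he ⟨e, he'⟩) h'
    · intro h
      exact ⟨ω, h, rfl⟩
  have := hI.measure_inter_preimage_eq_mul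
    ((fun (ω : Sym2 (Fin n) → Bool) (i : S) => ω i) '' A)
    ((fun (ω : Sym2 (Fin n) → Bool) (i : T) => ω i) '' B)
    (Set.Finite.measurableSet (Set.toFinite _)) (Set.Finite.measurableSet (Set.toFinite _))
  rwa [key S A hA, key T B hB] at this

lemma prob_box {p : ℝ} (h0 : 0 ≤ p) (h1 : p ≤ 1) (n : ℕ) (T : Finset (Sym2 (Fin n))) :
    erdosRenyi n p {ω | ∀ e ∈ T, ω e = false} = ENNReal.ofReal (1 - p) ^ T.card := by
  classical
  have := isProb_bernoulli h0 h1
  have hs : {ω : Sym2 (Fin n) → Bool | ∀ e ∈ T, ω e = false} =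
      Set.pi Set.univ (fun e => if e ∈ T then {false} else Set.univ) := by
    ext ω
    simp only [Set.mem_setOf_eq, Set.mem_pi, Set.mem_univ, true_implies]
    refine forall_congr' fun e => ?_
    by_cases h : e ∈ T <;> simp [h]
  have hv : ∀ e, bernoulliMeasure p (if e ∈ T then {false} else Set.univ) =
      if e ∈ T then ENNReal.ofReal (1 - p) else 1 := by
    intro e
    split_ifs
    · simp [bernoulliMeasure]
    · exact measure_univ
  rw [hs, erdosRenyi, Measure.pi_pi]
  simp only [hv]
  simp [Finset.prod_ite_mem]

lemma prob_step {p : ℝ} (h0 : 0 ≤ p) (h1 : p ≤ 1) (n : ℕ) (l : List (Fin n)) (v : Fin n)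
    (hv : v ∉ l) (S : Finset (Fin n)) :
    (erdosRenyi n p).real {ω | run ω l = S ∧ ∀ u ∈ S, ω s(u, v) = false} =
      (erdosRenyi n p).real {ω | run ω l = S} * (1 - p) ^ S.card := by
  classical
  by_cases hS : ∀ u ∈ S, u ∈ l
  · have hB : {ω : Sym2 (Fin n) → Bool | ∀ u ∈ S, ω s(u, v) = false} =
        {ω | ∀ e ∈ S.image (fun u => s(u, v)), ω e = false} := by
      ext ω; simp
    have hcard : (S.image (fun u => s(u, v))).card = S.card := by
      apply Finset.card_image_of_injective
      intro a b hab
      have hab' : a = b ∨ a = v ∧ v = b := by simpa using hab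
      rcases hab' with h | ⟨h, h'⟩
      · exact h
      · exact h.trans h'
    have h := indep_events h0 h1 n
      ((l.toFinset ×ˢ l.toFinset).image (fun x => s(x.1, x.2)))
      (S.image (fun u => s(u, v))) ?_ {ω | run ω l = S}
      {ω | ∀ u ∈ S, ω s(u, v) = false} ?_ ?_
    · rw [Set.setOf_and, measureReal_def, h, ENNReal.toReal_mul, hB, prob_box h0 h1, hcard,
        ENNReal.toReal_pow, ENNReal.toReal_ofReal (by linarith), measureReal_def]
    · rw [Finset.disjoint_left]
      intro e he he'
      simp only [Finset.mem_image, Finset.mem_product, List.mem_toFinset, Prod.exists] at he he'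
      obtain ⟨a, b, ⟨ha, hb⟩, rfl⟩ := he
      obtain ⟨u, hu, h⟩ := he'
      rw [Sym2.eq_iff] at h
      rcases h with ⟨_, h⟩ | ⟨_, h⟩ <;> subst h <;> contradiction
    · intro ω ω' hh hω
      simp only [Set.mem_setOf_eq] at hω ⊢
      rw [← hω]
      symm
      apply run_congr
      intro u hu w hw
      apply hh
      simp only [Finset.mem_image, Finset.mem_product, List.mem_toFinset, Prod.exists]
      exact ⟨u, w, ⟨hu, hw⟩, rfl⟩
    · intro ω ω' hh hω u hu
      rw [← hh _ (Finset.mem_image_of_mem _ hu)]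
      exact hω u hu
  · have h1 : ∀ ω, run ω l ≠ S := by
      rintro ω rfl
      exact hS (run_subset ω l)
    simp [h1]

open scoped Classical in
lemma integral_step {p : ℝ} (h0 : 0 ≤ p) (h1 : p ≤ 1) (n : ℕ) (l : List (Fin n)) (v : Fin n)
    (hv : v ∉ l) (h : ℕ → ℝ) :
    ∫ ω, (if ∀ u ∈ run ω l, ω s(u, v) = false then h (run ω l).card else 0) ∂(erdosRenyi n p) =
      ∫ ω, h (run ω l).card * (1 - p) ^ (run ω l).card ∂(erdosRenyi n p) := by
  have := isProb_er h0 h1 n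
  have e1 : ∀ ω : Sym2 (Fin n) → Bool,
      (if ∀ u ∈ run ω l, ω s(u, v) = false then h (run ω l).card else 0) =
      ∑ S : Finset (Fin n), Set.indicator
        {ω | run ω l = S ∧ ∀ u ∈ S, ω s(u, v) = false} (fun _ => h S.card) ω := by
    intro ω
    rw [Finset.sum_eq_single (run ω l)]
    · simp [Set.indicator_apply]
    · intro S _ hS
      simp [Set.indicator_apply, hS.symm]
    · simp
  have e2 : ∀ ω : Sym2 (Fin n) → Bool,
      h (run ω l).card * (1 - p) ^ (run ω l).card =
      ∑ S : Finset (Fin n), Set.indicator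
        {ω | run ω l = S} (fun _ => h S.card * (1 - p) ^ S.card) ω := by
    intro ω
    rw [Finset.sum_eq_single (run ω l)]
    · simp [Set.indicator_apply]
    · intro S _ hS
      simp [Set.indicator_apply, hS.symm]
    · simp
  simp_rw [e1, e2]
  rw [integral_finset_sum _ (fun _ _ => Integrable.of_finite),
    integral_finset_sum _ (fun _ _ => Integrable.of_finite)]
  refine Finset.sum_congr rfl fun S _ => ?_
  rw [integral_indicator_const _ (Set.Finite.measurableSet (Set.toFinite _)),
    integral_indicator_const _ (Set.Finite.measurableSet (Set.toFinite _)),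
    prob_step h0 h1 n l v hv S]
  simp only [smul_eq_mul]
  ring

/-- One step recursion for exponential moments. -/
lemma moment_step {p : ℝ} (h0 : 0 ≤ p) (h1 : p ≤ 1) (n : ℕ) (l : List (Fin n)) (v : Fin n)
    (hv : v ∉ l) (r : ℝ) :
    ∫ ω, r ^ (run ω (l ++ [v])).card ∂(erdosRenyi n p) =
      ∫ ω, r ^ (run ω l).card ∂(erdosRenyi n p) +
      (r - 1) * ∫ ω, (r * (1 - p)) ^ (run ω l).card ∂(erdosRenyi n p) := by
  classical
  have := isProb_er h0 h1 n
  have hs := integral_step h0 h1 n l v hv (fun k => r ^ k)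
  simp_rw [mul_pow]
  rw [← hs, ← integral_const_mul, ← integral_add Integrable.of_finite Integrable.of_finite]
  congr 1
  ext ω
  rw [run_append]
  have hnot : v ∉ run ω l := fun h => hv (run_subset ω l v h)
  split_ifs
  · rw [Finset.card_insert_of_notMem hnot]
    ring
  · simp

lemma moment_one {p : ℝ} (h0 : 0 ≤ p) (h1 : p < 1) (n : ℕ) (l : List (Fin n)) (hl : l.Nodup)
    (a : ℝ) (ha : (1 + a) * (1 - p) = 1) :
    ∫ ω, (1 + a) ^ (run ω l).card ∂(erdosRenyi n p) = 1 + l.length * a := by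
  have := isProb_er h0 h1.le n
  induction l using List.reverseRecOn with
  | nil => simp [run]
  | append_singleton l v ih =>
    have hv : v ∉ l := by
      intro h
      exact (List.nodup_append.1 hl).2.2 v h v (by simp) rfl
    rw [moment_step h0 h1.le n l v hv, ih (List.nodup_append.1 hl).1, ha]
    simp
    ring

lemma moment_two {p : ℝ} (h0 : 0 ≤ p) (h1 : p < 1) (n : ℕ) (l : List (Fin n)) (hl : l.Nodup)
    (a : ℝ) (ha : (1 + a) * (1 - p) = 1) :
    ∫ ω, ((1 + a) ^ 2) ^ (run ω l).card ∂(erdosRenyi n p) =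
      (1 + l.length * a) ^ 2 + a ^ 3 * (l.length * (l.length - 1) / 2) := by
  have := isProb_er h0 h1.le n
  induction l using List.reverseRecOn with
  | nil => simp [run]
  | append_singleton l v ih =>
    have hv : v ∉ l := by
      intro h
      exact (List.nodup_append.1 hl).2.2 v h v (by simp) rfl
    have hl' := (List.nodup_append.1 hl).1
    have e : (1 + a) ^ 2 * (1 - p) = 1 + a := by rw [pow_two, mul_assoc, ha, mul_one]
    rw [moment_step h0 h1.le n l v hv, ih hl', e, moment_one h0 h1 n l hl' a ha]
    simp
    ring

lemma prob_bad {d : ℝ} (hd : 0 < d) (n : ℕ) (hn : 2 * d ≤ n) (L : ℝ)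
    (hL : Real.exp (d / (1 - d / n) * (L / n)) ≤ d + 1 / 2) :
    erdosRenyi n (d / n) {ω | L ≤ ((greedyIndepSet n ω).card : ℝ)}ᶜ ≤
      ENNReal.ofReal (16 * d ^ 3 / n) := by
  have hn0 : (0 : ℝ) < n := by linarith
  have hp0 : 0 ≤ d / n := by positivity
  have hp2 : d / n ≤ 1 / 2 := by rw [div_le_div_iff₀ hn0 (by norm_num)]; linarith
  have hp1 : d / n < 1 := by linarith
  have := isProb_er hp0 hp1.le n
  set p := d / n with hp
  set a := p / (1 - p) with ha
  have hq : 0 < 1 - p := by linarith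
  have ha1 : (1 + a) * (1 - p) = 1 := by rw [ha]; field_simp; ring
  have ha0 : 0 ≤ a := by positivity
  have hap : p ≤ a := by rw [ha, le_div_iff₀ hq]; nlinarith
  have hap2 : a ≤ 2 * p := by rw [ha, div_le_iff₀ hq]; nlinarith
  have hpn : p * n = d := by rw [hp]; field_simp
  let Y : (Sym2 (Fin n) → Bool) → ℝ := fun ω => (1 + a) ^ (run ω (List.finRange n)).card
  have hmem : MemLp Y 2 (erdosRenyi n p) := MemLp.of_discrete
  have m1 : ∫ ω, Y ω ∂(erdosRenyi n p) = 1 + n * a := by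
    have := moment_one hp0 hp1 n (List.finRange n) (List.nodup_finRange n) a ha1
    simpa using this
  have m2 : ∫ ω, (Y ^ 2) ω ∂(erdosRenyi n p) = (1 + n * a) ^ 2 + a ^ 3 * (n * (n - 1) / 2) := by
    have := moment_two hp0 hp1 n (List.finRange n) (List.nodup_finRange n) a ha1
    simp only [List.length_finRange] at this
    rw [← this]
    congr 1
    ext ω
    simp only [Y, Pi.pow_apply]
    rw [← pow_mul, ← pow_mul, mul_comm]
  have hvar : ProbabilityTheory.variance Y (erdosRenyi n p) = a ^ 3 * (n * (n - 1) / 2) := by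
    rw [ProbabilityTheory.variance_eq_sub hmem, m1, m2]
    ring
  have hch := ProbabilityTheory.meas_ge_le_variance_div_sq hmem (c := 1 / 2) (by norm_num)
  rw [m1, hvar] at hch
  refine (measure_mono ?_).trans (hch.trans (ENNReal.ofReal_le_ofReal ?_))
  · intro ω hω
    simp only [Set.mem_compl_iff, Set.mem_setOf_eq, not_le] at hω ⊢
    have hI : greedyIndepSet n ω = run ω (List.finRange n) := rfl
    rw [hI] at hω
    have hY : Y ω ≤ d + 1 / 2 := by
      refine le_trans ?_ hL
      calc Y ω ≤ (Real.exp a) ^ (run ω (List.finRange n)).card := by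
            apply pow_le_pow_left₀ (by linarith)
            linarith [Real.add_one_le_exp a]
        _ = Real.exp ((run ω (List.finRange n)).card * a) := by rw [Real.exp_nat_mul]
        _ ≤ _ := by
            apply Real.exp_le_exp.2
            have : d / (1 - p) * (L / n) = L * a := by
              rw [ha, ← hpn]; field_simp
            rw [this]
            exact mul_le_mul_of_nonneg_right hω.le ha0
    rw [abs_sub_comm]
    refine le_trans ?_ (le_abs_self _)
    have : d ≤ n * a := by rw [← hpn, mul_comm]; gcongr
    linarith
  · have h3 : a ^ 3 ≤ (2 * p) ^ 3 := pow_le_pow_left₀ ha0 hap2 3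
    have h4 : (n : ℝ) * (n - 1) / 2 ≤ n ^ 2 / 2 := by nlinarith
    have : a ^ 3 * ((n : ℝ) * (n - 1) / 2) ≤ (2 * p) ^ 3 * (n ^ 2 / 2) := by
      calc a ^ 3 * ((n : ℝ) * (n - 1) / 2) ≤ a ^ 3 * (n ^ 2 / 2) := by gcongr
        _ ≤ _ := by gcongr
    have e : 16 * d ^ 3 / n = (2 * p) ^ 3 * (n ^ 2 / 2) / (1 / 2) ^ 2 := by
      rw [hp]; field_simp; ring
    rw [e]
    gcongr

end GreedyAux

/-- for every `ε > 0` there is `d₀` such that for every `d ≥ d₀`, whp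
as `n → ∞` the greedy algorithm applied to `G(n,d/n)` produces an independent set
of size at least `(1-ε)·(log d/d)·n` (roughly half optimal). -/
theorem greedy_independent_set_half_optimal (ε : ℝ) (hε : 0 < ε) :
    ∃ d₀ : ℝ, ∀ d : ℝ, d₀ ≤ d →
      Tendsto
        (fun n : ℕ =>
          erdosRenyi n (d / n)
            {ω | (1 - ε) * (Real.log d / d) * n ≤ ((greedyIndepSet n ω).card : ℝ)})
        atTop (𝓝 1) := by
  refine ⟨1, fun d hd => ?_⟩
  have hd0 : 0 < d := by linarith
  have hlog : 0 ≤ Real.log d := Real.log_nonneg hd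
  have hdn : Tendsto (fun n : ℕ => d / (n : ℝ)) atTop (𝓝 0) :=
    tendsto_const_div_atTop_nhds_zero_nat d
  have hlim : Tendsto (fun n : ℕ => Real.exp (d / (1 - d / n) * ((1 - ε) * (Real.log d / d))))
      atTop (𝓝 (Real.exp (d / (1 - 0) * ((1 - ε) * (Real.log d / d))))) := by
    apply (Real.continuous_exp.tendsto _).comp
    apply Tendsto.mul_const
    exact Tendsto.div tendsto_const_nhds (tendsto_const_nhds.sub hdn) (by norm_num)
  have hlt : Real.exp (d / (1 - 0) * ((1 - ε) * (Real.log d / d))) < d + 1 / 2 := by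
    have e : d / (1 - 0) * ((1 - ε) * (Real.log d / d)) = (1 - ε) * Real.log d := by
      field_simp; ring
    rw [e]
    calc Real.exp ((1 - ε) * Real.log d) ≤ Real.exp (Real.log d) := by
          apply Real.exp_le_exp.2; nlinarith
      _ = d := Real.exp_log hd0
      _ < _ := by linarith
  have hev : ∀ᶠ n : ℕ in atTop, 2 * d ≤ (n : ℝ) :=
    tendsto_natCast_atTop_atTop.eventually_ge_atTop (2 * d)
  have hzero : Tendsto (fun n : ℕ => (1 : ENNReal) - ENNReal.ofReal (16 * d ^ 3 / n))
      atTop (𝓝 1) := by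
    have h := ENNReal.tendsto_ofReal (tendsto_const_div_atTop_nhds_zero_nat (16 * d ^ 3))
    have h2 := ENNReal.Tendsto.sub (tendsto_const_nhds (x := (1 : ENNReal))) h
      (Or.inl ENNReal.one_ne_top)
    simpa using h2
  refine tendsto_of_tendsto_of_tendsto_of_le_of_le' hzero tendsto_const_nhds ?_ ?_
  · filter_upwards [hev, hlim.eventually_lt_const hlt] with n hn hlt'
    have hn0 : (0 : ℝ) < n := by linarith
    have hp1 : d / n ≤ 1 := by rw [div_le_one hn0]; linarith
    have := GreedyAux.isProb_er (by positivity) hp1 n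
    have hb := GreedyAux.prob_bad hd0 n hn ((1 - ε) * (Real.log d / d) * n) (by
      rw [mul_div_assoc, div_self hn0.ne', mul_one]
      exact hlt'.le)
    rw [tsub_le_iff_right]
    calc (1 : ENNReal) = erdosRenyi n (d / n) Set.univ := measure_univ.symm
      _ ≤ _ := by
        rw [← Set.union_compl_self
          {ω | (1 - ε) * (Real.log d / d) * n ≤ ((greedyIndepSet n ω).card : ℝ)}]
        exact (measure_union_le _ _).trans (add_le_add_right hb _)
  · filter_upwards [hev] with n hn
    have hn0 : (0 : ℝ) < n := by linarith
    have hp1 : d / n ≤ 1 := by rw [div_le_one hn0]; linarith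
    have := GreedyAux.isProb_er (by positivity) hp1 n
    exact prob_le_one
end

section
/- For every ε > 0 there exists K₀ such that for every K ≥ K₀ and every real c with 0 < c ≤ (1−ε)·2^K·log 2 (log denoting the natural logarithm), the probability that the random K-SAT formula Φ_{n,⌊cn⌋} is satisfiable tends to 1 as n → ∞. (Together with the first-moment upper bound, this shows that the satisfiability threshold satisfies c_{K,SAT} = 2^K·log 2·(1+o_K(1)).) -/
open MeasureTheory Filter Topology

/-- A sample of a random `K`-SAT formula with `n` variables and `m` clauses:
for each clause `j` and each of its `K` literal slots `k`, `(ω j k).1` is the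
chosen variable index and `(ω j k).2` is the negation sign of that occurrence.
Under `uniformMeasure` these choices are uniform and independent. -/
abbrev KSatSpace (n m K : ℕ) := Fin m → Fin K → Fin n × Bool

/-- An assignment `σ : Fin n → Bool` satisfies the formula `ω` if every clause
contains a literal evaluating to true, i.e. some slot `k` with
`σ (ω j k).1 ≠ (ω j k).2`. -/
def Satisfies {n m K : ℕ} (σ : Fin n → Bool) (ω : KSatSpace n m K) : Prop :=
  ∀ j : Fin m, ∃ k : Fin K, σ (ω j k).1 ≠ (ω j k).2

/-- A formula is satisfiable if some assignment satisfies it. -/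
def IsSatisfiable {n m K : ℕ} (ω : KSatSpace n m K) : Prop :=
  ∃ σ : Fin n → Bool, Satisfies σ ω

/-- closed form of the tail of the binomial expansion from degree three on -/
noncomputable def tailH (K : ℕ) (r : ℝ) : ℝ :=
  (1 + r) ^ K - 1 - K * r - (K * (K - 1) / 2 : ℝ) * r ^ 2

theorem tailH_succ (K : ℕ) (r : ℝ) :
    tailH (K + 1) r = (1 + r) * tailH K r + (K * (K - 1) / 2 : ℝ) * r ^ 3 := by
  unfold tailH; push_cast; ring

theorem tri_nonneg (K : ℕ) : (0 : ℝ) ≤ K * (K - 1) / 2 := by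
  rcases Nat.eq_zero_or_pos K with h | h
  · simp [h]
  · have : (1 : ℝ) ≤ K := by exact_mod_cast h
    have : (0 : ℝ) ≤ (K : ℝ) * (K - 1) := mul_nonneg (by positivity) (by linarith)
    linarith

theorem tailH_nonpos (K : ℕ) {r : ℝ} (h1 : -1 ≤ r) (h0 : r ≤ 0) : tailH K r ≤ 0 := by
  induction K with
  | zero => simp [tailH]
  | succ K ih =>
    rw [tailH_succ]
    have h3 : r ^ 3 ≤ 0 := Odd.pow_nonpos (by decide) h0
    have := tri_nonneg K
    nlinarith [mul_nonneg (by linarith : 0 ≤ 1 + r) (neg_nonneg.2 ih),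
      mul_nonneg this (neg_nonneg.2 h3)]

theorem tailH_le (K : ℕ) {r : ℝ} (h0 : 0 ≤ r) :
    tailH K r ≤ (K : ℝ) ^ 3 * r ^ 3 * (1 + r) ^ K := by
  induction K with
  | zero => simp [tailH]
  | succ K ih =>
    rw [tailH_succ]
    have h3 : 0 ≤ r ^ 3 := by positivity
    have hp : 1 ≤ (1 + r) ^ (K + 1) := one_le_pow₀ (by linarith)
    have hK : (0 : ℝ) ≤ K := by positivity
    have hc : (K : ℝ) * (K - 1) / 2 ≤ K ^ 2 := by nlinarith
    calc (1 + r) * tailH K r + (K * (K - 1) / 2 : ℝ) * r ^ 3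
        ≤ (1 + r) * ((K : ℝ) ^ 3 * r ^ 3 * (1 + r) ^ K) + (K : ℝ) ^ 2 * r ^ 3 * (1 + r) ^ (K + 1) := by
          apply add_le_add
          · exact mul_le_mul_of_nonneg_left ih (by linarith)
          · calc (K * (K - 1) / 2 : ℝ) * r ^ 3 ≤ (K : ℝ) ^ 2 * r ^ 3 :=
                  mul_le_mul_of_nonneg_right hc h3
              _ ≤ _ := le_mul_of_one_le_right (by positivity) hp
      _ = ((K : ℝ) ^ 3 + (K : ℝ) ^ 2) * (r ^ 3 * (1 + r) ^ (K + 1)) := by ring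
      _ ≤ ((K + 1 : ℕ) : ℝ) ^ 3 * (r ^ 3 * (1 + r) ^ (K + 1)) := by
          apply mul_le_mul_of_nonneg_right _ (by positivity)
          push_cast; nlinarith
      _ = _ := by ring

theorem tailH_le_two_pow (K : ℕ) {r : ℝ} (h0 : 0 ≤ r) (h1 : r ≤ 1) : tailH K r ≤ 2 ^ K := by
  have := tri_nonneg K
  have h2 : (1 + r) ^ K ≤ 2 ^ K := pow_le_pow_left₀ (by linarith) (by linarith) K
  have h3 : 0 ≤ (K * (K - 1) / 2 : ℝ) * r ^ 2 := by positivity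
  have h4 : 0 ≤ (K : ℝ) * r := by positivity
  unfold tailH; linarith

/-- sum over subsets of size at least three -/
theorem sum_big (K : ℕ) (r : ℝ) :
    ∑ S ∈ (Finset.univ : Finset (Finset (Fin K))).filter (fun S => 3 ≤ S.card), r ^ S.card
      = tailH K r := by
  rw [Finset.sum_filter, ← Finset.powerset_univ,
    Finset.sum_powerset_apply_card (fun j => if 3 ≤ j then r ^ j else 0)]
  have e : (1 + r) ^ K = ∑ j ∈ Finset.range (K + 1), (K.choose j : ℝ) * r ^ j := by
    rw [add_comm, add_pow]; simp [mul_comm]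
  have e2 : ∑ j ∈ Finset.range (K + 1), (K.choose j : ℝ) * (if j < 3 then r ^ j else 0)
      = 1 + K * r + (K * (K - 1) / 2 : ℝ) * r ^ 2 := by
    have : ∑ j ∈ Finset.range (K + 1), (K.choose j : ℝ) * (if j < 3 then r ^ j else 0)
        = ∑ j ∈ Finset.range (K + 3), (K.choose j : ℝ) * (if j < 3 then r ^ j else 0) := by
      apply Finset.sum_subset
      · intro x; simp; omega
      · intro x _ hx
        rw [Nat.choose_eq_zero_of_lt (by simpa using hx)]; simp
    rw [this, add_comm K 3, Finset.sum_range_add]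
    simp [Finset.sum_range_succ, Nat.cast_choose_two]
  unfold tailH
  rw [e, sub_sub, sub_sub, ← add_assoc, ← e2, ← Finset.sum_sub_distrib]
  simp only [Finset.card_univ, Fintype.card_fin, nsmul_eq_mul]
  refine Finset.sum_congr rfl fun j _ => ?_
  by_cases h : 3 ≤ j
  · simp [h, not_lt.2 h]
  · simp [h, not_le.1 h]

theorem abs_tailH_le (K : ℕ) {r : ℝ} (h : |r| ≤ 1) : |tailH K r| ≤ tailH K 1 := by
  rw [← sum_big, ← sum_big]
  refine (Finset.abs_sum_le_sum_abs _ _).trans (Finset.sum_le_sum fun S _ => ?_)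
  rw [abs_pow, one_pow]; exact pow_le_one₀ (abs_nonneg _) h

theorem choose_chernoff (n a : ℕ) (hn : 0 < n) (ha : a ≤ n) :
    (n.choose a : ℝ) / 2 ^ n ≤ Real.exp (-(n * (2 * a / n - 1 : ℝ) ^ 2 / 2)) := by
  set r : ℝ := 2 * a / n - 1 with hr
  have hn' : (n : ℝ) ≠ 0 := by positivity
  have h1 : (n.choose a : ℝ) * (Real.exp r ^ a * Real.exp (-r) ^ (n - a))
      ≤ (Real.exp r + Real.exp (-r)) ^ n := by
    rw [add_pow]
    refine le_trans (le_of_eq ?_) (Finset.single_le_sum (f := fun m =>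
      Real.exp r ^ m * Real.exp (-r) ^ (n - m) * (n.choose m : ℝ)) (fun i _ => by positivity)
      (Finset.mem_range.2 (Nat.lt_succ_of_le ha)))
    ring
  have h2 : Real.exp r ^ a * Real.exp (-r) ^ (n - a) = Real.exp (n * r ^ 2) := by
    rw [← Real.exp_nat_mul, ← Real.exp_nat_mul, ← Real.exp_add]
    congr 1
    rw [Nat.cast_sub ha]
    have : (2 * a : ℝ) = n * (r + 1) := by rw [hr]; field_simp; ring
    linear_combination r * this
  have h3 : (Real.exp r + Real.exp (-r)) ^ n ≤ 2 ^ n * Real.exp (n * (r ^ 2 / 2)) := by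
    have : Real.exp r + Real.exp (-r) = 2 * Real.cosh r := by rw [Real.cosh_eq]; ring
    rw [this, mul_pow, Real.exp_nat_mul]
    gcongr
    exact Real.cosh_le_exp_half_sq r
  rw [h2] at h1
  rw [div_le_iff₀ (by positivity), Real.exp_neg, ← div_eq_inv_mul, le_div_iff₀ (Real.exp_pos _)]
  have h4 : Real.exp (n * r ^ 2) = Real.exp (n * r ^ 2 / 2) * Real.exp (n * (r ^ 2 / 2)) := by
    rw [← Real.exp_add]; congr 1; ring
  have h5 := h1.trans h3
  rw [h4, ← mul_assoc] at h5
  exact le_of_mul_le_mul_right h5 (Real.exp_pos _)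

theorem choose_entropy (η : ℝ) (hη : 0 < η) (hη1 : η < 1) :
    ∃ x : ℝ, 0 < x ∧ x < 1 ∧ ∀ n a : ℕ, a ≤ n → (n - a : ℝ) ≤ x * n →
      (n.choose a : ℝ) ≤ Real.exp (n * η) := by
  set t := η / 2 with ht
  have ht0 : 0 < t := by positivity
  have hl : Real.log t < 0 := Real.log_neg ht0 (by linarith)
  refine ⟨t / (1 - Real.log t), div_pos ht0 (by linarith), ?_, ?_⟩
  · rw [div_lt_one (by linarith)]; linarith
  intro n a ha hx
  have h1 : (n.choose a : ℝ) * t ^ (n - a) ≤ (1 + t) ^ n := by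
    rw [add_pow]
    refine le_trans (le_of_eq ?_) (Finset.single_le_sum (f := fun m =>
      (1 : ℝ) ^ m * t ^ (n - m) * (n.choose m : ℝ)) (fun i _ => by positivity)
      (Finset.mem_range.2 (Nat.lt_succ_of_le ha)))
    simp [mul_comm]
  have h2 : (1 + t) ^ n ≤ Real.exp (n * t) := by
    rw [Real.exp_nat_mul]
    apply pow_le_pow_left₀ (by positivity)
    linarith [Real.add_one_le_exp t]
  have h3 : t ^ (n - a) = Real.exp ((n - a) * Real.log t) := by
    rw [← Nat.cast_sub ha, Real.exp_nat_mul, Real.exp_log ht0]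
  have h4 : Real.exp (-(n * t)) ≤ t ^ (n - a) := by
    rw [h3]; apply Real.exp_le_exp.2
    have h5 : (n - a : ℝ) * (1 - Real.log t) ≤ t * n := by
      calc _ ≤ t / (1 - Real.log t) * n * (1 - Real.log t) :=
            mul_le_mul_of_nonneg_right hx (by linarith)
        _ = t * n := by field_simp [(by linarith : (1 - Real.log t) ≠ 0)]
    have h6 : (0 : ℝ) ≤ n - a := by
      have : (a : ℝ) ≤ n := by exact_mod_cast ha
      linarith
    nlinarith
  have h7 : (n.choose a : ℝ) * Real.exp (-(n * t)) ≤ Real.exp (n * t) :=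
    (mul_le_mul_of_nonneg_left h4 (by positivity)).trans (h1.trans h2)
  have h8 : Real.exp (n * η) = Real.exp (n * t) / Real.exp (-(n * t)) := by
    rw [← Real.exp_sub]; congr 1; rw [ht]; ring
  rw [h8, le_div_iff₀ (Real.exp_pos _)]; exact h7

/-- spin of a Boolean -/
def spin (b : Bool) : ℝ := if b then 1 else -1

theorem spin_mul_self (b : Bool) : spin b * spin b = 1 := by cases b <;> simp [spin]

/-- literal value: `1` if the literal is false, `-1` if it is true -/
def litv {n : ℕ} (σ : Fin n → Bool) (p : Fin n × Bool) : ℝ := spin (σ p.1) * spin p.2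

/-- the large subsets of the slots -/
def bigSets (K : ℕ) : Finset (Finset (Fin K)) := Finset.univ.filter (fun S => 3 ≤ S.card)

theorem bigSets_card (K : ℕ) : ((bigSets K).card : ℝ) = tailH K 1 := by
  rw [← sum_big]; simp [bigSets]

/-- clause weight -/
noncomputable def cw (K : ℕ) (x : Fin K → ℝ) : ℝ :=
  1 - (tailH K 1)⁻¹ * ∑ S ∈ bigSets K, ∏ k ∈ S, x k

theorem cw_ones (K : ℕ) (hK : tailH K 1 ≠ 0) (x : Fin K → ℝ) (hx : ∀ k, x k = 1) :
    cw K x = 0 := by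
  simp only [cw, hx, Finset.prod_const_one, Finset.sum_const, nsmul_eq_mul, mul_one,
    bigSets_card]
  field_simp; ring

theorem sum_litv {n : ℕ} (σ : Fin n → Bool) : ∑ p, litv σ p = 0 := by
  simp [litv, Fintype.sum_prod_type, spin]

/-- overlap of two assignments -/
noncomputable def ovl {n : ℕ} (σ τ : Fin n → Bool) : ℝ := ∑ i, spin (σ i) * spin (τ i)

theorem sum_litv_mul {n : ℕ} (σ τ : Fin n → Bool) :
    ∑ p, litv σ p * litv τ p = 2 * ovl σ τ := by
  simp only [litv, Fintype.sum_prod_type, ovl, Finset.mul_sum]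
  refine Finset.sum_congr rfl fun i _ => ?_
  cases σ i <;> cases τ i <;> simp [spin] <;> norm_num

theorem sum_prod_subset {n K : ℕ} (f : Fin K → Fin n × Bool → ℝ) :
    ∑ y : Fin K → Fin n × Bool, ∏ k, f k (y k) = ∏ k, ∑ p, f k p :=
  (Fintype.prod_sum f).symm

theorem sum_char {n K : ℕ} (σ : Fin n → Bool) (S : Finset (Fin K)) (hS : S.Nonempty) :
    ∑ y : Fin K → Fin n × Bool, ∏ k ∈ S, litv σ (y k) = 0 := by
  have : ∀ y : Fin K → Fin n × Bool, ∏ k ∈ S, litv σ (y k)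
      = ∏ k, (fun k p => if k ∈ S then litv σ p else 1) k (y k) := by
    intro y
    simp only [Finset.prod_ite_mem, Finset.univ_inter]
  refine ((Finset.sum_congr rfl fun y _ => this y).trans (sum_prod_subset
    (fun k p => if k ∈ S then litv σ p else 1))).trans ?_
  obtain ⟨k, hk⟩ := hS
  apply Finset.prod_eq_zero (Finset.mem_univ k)
  simp [hk, sum_litv]

theorem sum_char_mul {n K : ℕ} (σ τ : Fin n → Bool) (S T : Finset (Fin K)) :
    ∑ y : Fin K → Fin n × Bool, (∏ k ∈ S, litv σ (y k)) * ∏ k ∈ T, litv τ (y k)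
      = if S = T then (2 * ovl σ τ) ^ S.card * (2 * n : ℝ) ^ (K - S.card) else 0 := by
  have : ∀ y : Fin K → Fin n × Bool, (∏ k ∈ S, litv σ (y k)) * ∏ k ∈ T, litv τ (y k)
      = ∏ k, (fun k p => (if k ∈ S then litv σ p else 1) * (if k ∈ T then litv τ p else 1))
          k (y k) := by
    intro y
    simp only [Finset.prod_mul_distrib, Finset.prod_ite_mem, Finset.univ_inter]
  refine ((Finset.sum_congr rfl fun y _ => this y).trans (sum_prod_subset
    (fun k p => (if k ∈ S then litv σ p else 1) * (if k ∈ T then litv τ p else 1)))).trans ?_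
  split_ifs with h
  · subst h
    have : ∀ k : Fin K, ∑ p : Fin n × Bool, (if k ∈ S then litv σ p else 1) * (if k ∈ S then litv τ p else 1)
        = if k ∈ S then 2 * ovl σ τ else (2 * n : ℝ) := by
      intro k
      by_cases hk : k ∈ S
      · simp [hk, sum_litv_mul]
      · simp [hk, mul_comm]
    simp only [this]
    rw [Finset.prod_ite, Finset.prod_const, Finset.prod_const]
    congr 2
    · simp
    · rw [Finset.filter_not]; simp [Finset.card_sdiff]
  · obtain ⟨k, hk⟩ : ∃ k, ¬ (k ∈ S ↔ k ∈ T) := by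
      by_contra hh; push Not at hh; exact h (Finset.ext hh)
    apply Finset.prod_eq_zero (Finset.mem_univ k)
    by_cases h1 : k ∈ S
    · have h2 : k ∉ T := by tauto
      simp [h1, h2, sum_litv]
    · have h2 : k ∈ T := by tauto
      simp [h1, h2, sum_litv]

theorem bigSets_nonempty {K : ℕ} {S : Finset (Fin K)} (hS : S ∈ bigSets K) : S.Nonempty := by
  simp [bigSets] at hS
  exact Finset.card_pos.1 (by omega)

theorem sum_bigchar {n K : ℕ} (σ : Fin n → Bool) :
    ∑ y : Fin K → Fin n × Bool, ∑ S ∈ bigSets K, ∏ k ∈ S, litv σ (y k) = 0 := by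
  rw [Finset.sum_comm]
  exact Finset.sum_eq_zero fun S hS => sum_char σ S (bigSets_nonempty hS)

theorem sum_cw {n K : ℕ} (σ : Fin n → Bool) :
    ∑ y : Fin K → Fin n × Bool, cw K (fun k => litv σ (y k)) = (2 * n : ℝ) ^ K := by
  simp only [cw, Finset.sum_sub_distrib, ← Finset.mul_sum, sum_bigchar]
  simp [mul_comm]

theorem sum_bigchar_mul {n K : ℕ} (hn : 0 < n) (σ τ : Fin n → Bool) :
    ∑ y : Fin K → Fin n × Bool, (∑ S ∈ bigSets K, ∏ k ∈ S, litv σ (y k)) *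
      (∑ S ∈ bigSets K, ∏ k ∈ S, litv τ (y k)) = (2 * n : ℝ) ^ K * tailH K (ovl σ τ / n) := by
  simp only [Finset.sum_mul_sum]
  rw [Finset.sum_comm]
  rw [← sum_big, Finset.mul_sum]
  refine Finset.sum_congr rfl fun S hS => ?_
  rw [Finset.sum_comm]
  simp only [sum_char_mul]
  rw [Finset.sum_ite_eq, if_pos (show S ∈ bigSets K from hS)]
  have hc : S.card ≤ K := by simpa using Finset.card_le_univ S
  have hn' : (n : ℝ) ≠ 0 := by positivity
  obtain ⟨d, hd⟩ := Nat.exists_eq_add_of_le hc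
  have : K - S.card = d := by omega
  rw [this]
  have hK : (2 * n : ℝ) ^ K = (2 * n : ℝ) ^ S.card * (2 * n : ℝ) ^ d := by
    rw [← pow_add, ← hd]
  rw [hK]
  have : (2 * ovl σ τ) ^ S.card = (2 * n : ℝ) ^ S.card * (ovl σ τ / n) ^ S.card := by
    rw [← mul_pow]; congr 1; field_simp
  rw [this]; ring

theorem sum_cw_mul {n K : ℕ} (hn : 0 < n) (σ τ : Fin n → Bool) :
    ∑ y : Fin K → Fin n × Bool, cw K (fun k => litv σ (y k)) * cw K (fun k => litv τ (y k))
      = (2 * n : ℝ) ^ K * (1 + ((tailH K 1) ^ 2)⁻¹ * tailH K (ovl σ τ / n)) := by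
  have : ∀ y : Fin K → Fin n × Bool, cw K (fun k => litv σ (y k)) * cw K (fun k => litv τ (y k))
     = cw K (fun k => litv σ (y k))
      - (tailH K 1)⁻¹ * (∑ S ∈ bigSets K, ∏ k ∈ S, litv τ (y k))
      + ((tailH K 1) ^ 2)⁻¹ * ((∑ S ∈ bigSets K, ∏ k ∈ S, litv σ (y k)) *
      (∑ S ∈ bigSets K, ∏ k ∈ S, litv τ (y k))) := by
    intro y; simp only [cw]; ring
  simp only [this, Finset.sum_add_distrib, Finset.sum_sub_distrib, ← Finset.mul_sum, sum_bigchar,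
    sum_bigchar_mul hn, sum_cw]
  ring

/-- overlap distribution -/
theorem sum_ovl {n : ℕ} (σ : Fin n → Bool) (F : ℝ → ℝ) :
    ∑ τ, F (ovl σ τ) = ∑ a ∈ Finset.range (n + 1), (n.choose a : ℝ) * F (2 * a - n) := by
  have h := Finset.sum_powerset_apply_card (fun a : ℕ => F (2 * a - n))
    (x := (Finset.univ : Finset (Fin n)))
  simp only [Finset.card_univ, Fintype.card_fin, nsmul_eq_mul, Finset.powerset_univ] at h
  rw [← h]
  symm
  refine Fintype.sum_equiv
    { toFun := fun S i => if i ∈ S then σ i else !(σ i)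
      invFun := fun τ => Finset.univ.filter (fun i => τ i = σ i)
      left_inv := ?_
      right_inv := ?_ } _ _ ?_
  · intro S; ext i; by_cases hi : i ∈ S <;> simp [hi]
  · intro τ; funext i; cases h1 : τ i <;> cases h2 : σ i <;> simp [h1, h2]
  · intro S
    congr 1
    simp only [ovl, Equiv.coe_fn_mk]
    have : ∀ i, spin (σ i) * spin (if i ∈ S then σ i else !(σ i))
        = 2 * (if i ∈ S then 1 else 0) - 1 := by
      intro i
      by_cases hi : i ∈ S <;> cases h2 : σ i <;> simp [hi, spin] <;> norm_num
    simp only [this, Finset.sum_sub_distrib, ← Finset.mul_sum]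
    simp

/-- weighted count of solutions -/
noncomputable def Zw {n m K : ℕ} (ω : Fin m → Fin K → Fin n × Bool) : ℝ :=
  ∑ σ : Fin n → Bool, ∏ j, cw K (fun k => litv σ (ω j k))

theorem sum_Zw (n m K : ℕ) :
    ∑ ω : Fin m → Fin K → Fin n × Bool, Zw ω = 2 ^ n * ((2 * n : ℝ) ^ K) ^ m := by
  simp only [Zw]
  rw [Finset.sum_comm]
  have : ∀ σ : Fin n → Bool, ∑ ω : Fin m → Fin K → Fin n × Bool,
      ∏ j, cw K (fun k => litv σ (ω j k)) = ((2 * n : ℝ) ^ K) ^ m := by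
    intro σ
    rw [← Fintype.prod_sum (fun (_ : Fin m) (y : Fin K → Fin n × Bool) => cw K (fun k => litv σ (y k)))]
    simp [sum_cw]
  simp only [this]; simp

/-- the normalized second moment -/
noncomputable def ratioR (n m K : ℕ) : ℝ :=
  ∑ a ∈ Finset.range (n + 1), (n.choose a : ℝ) / 2 ^ n *
    (1 + ((tailH K 1) ^ 2)⁻¹ * tailH K (2 * a / n - 1)) ^ m

theorem sum_Zw_sq (n m K : ℕ) (hn : 0 < n) :
    ∑ ω : Fin m → Fin K → Fin n × Bool, Zw ω ^ 2
      = (2 ^ n) ^ 2 * ((2 * n : ℝ) ^ K) ^ m * ratioR n m K := by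
  simp only [Zw, sq (∑ σ : Fin n → Bool, _), Finset.sum_mul_sum]
  rw [Finset.sum_comm]
  have : ∀ σ τ : Fin n → Bool, ∑ ω : Fin m → Fin K → Fin n × Bool,
      (∏ j, cw K (fun k => litv σ (ω j k))) * (∏ j, cw K (fun k => litv τ (ω j k)))
      = ((2 * n : ℝ) ^ K) ^ m * (1 + ((tailH K 1) ^ 2)⁻¹ * tailH K (ovl σ τ / n)) ^ m := by
    intro σ τ
    simp only [← Finset.prod_mul_distrib]
    rw [← Fintype.prod_sum (fun (_ : Fin m) (y : Fin K → Fin n × Bool) => cw K (fun k => litv σ (y k)) *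
      cw K (fun k => litv τ (y k)))]
    simp [sum_cw_mul hn, mul_pow]
  have h2 : ∀ σ : Fin n → Bool, ∑ ω : Fin m → Fin K → Fin n × Bool, ∑ τ : Fin n → Bool,
      (∏ j, cw K (fun k => litv σ (ω j k))) * (∏ j, cw K (fun k => litv τ (ω j k)))
      = 2 ^ n * ((2 * n : ℝ) ^ K) ^ m * ratioR n m K := by
    intro σ
    rw [Finset.sum_comm]
    simp only [this, ← Finset.mul_sum]
    rw [sum_ovl σ (fun x => (1 + ((tailH K 1) ^ 2)⁻¹ * tailH K (x / n)) ^ m)]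
    rw [ratioR, mul_comm (2 ^ n), mul_assoc]
    congr 1
    rw [Finset.mul_sum]
    refine Finset.sum_congr rfl fun a _ => ?_
    have hn' : (n : ℝ) ≠ 0 := by positivity
    rw [sub_div, div_self hn']
    field_simp
  simp only [h2]; simp; ring

theorem cheb {α : Type*} [Fintype α] [Nonempty α] (Z : α → ℝ) (μ R : ℝ) (hμ : μ ≠ 0)
    (h1 : ∑ x, Z x = Fintype.card α * μ) (h2 : ∑ x, Z x ^ 2 = Fintype.card α * μ ^ 2 * R)
    (A : Finset α) (hA : ∀ x, x ∉ A → Z x = 0) :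
    2 - R ≤ (A.card : ℝ) / Fintype.card α := by
  classical
  have h3 : ∑ x, (Z x - μ) ^ 2 = Fintype.card α * μ ^ 2 * (R - 1) := by
    have : ∀ x, (Z x - μ) ^ 2 = Z x ^ 2 - 2 * μ * Z x + μ ^ 2 := fun x => by ring
    simp only [this, Finset.sum_add_distrib, Finset.sum_sub_distrib, ← Finset.mul_sum, h1, h2]
    simp; ring
  have h4 : (Aᶜ.card : ℝ) * μ ^ 2 ≤ ∑ x, (Z x - μ) ^ 2 := by
    calc (Aᶜ.card : ℝ) * μ ^ 2 = ∑ x ∈ Aᶜ, (Z x - μ) ^ 2 := by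
          rw [Finset.sum_congr rfl (g := fun _ => μ ^ 2)]
          · simp
          · intro x hx; rw [hA x (by simpa using hx)]; ring
      _ ≤ _ := Finset.sum_le_univ_sum_of_nonneg (fun x => sq_nonneg _)
  have hc : (0 : ℝ) < Fintype.card α := by exact_mod_cast Fintype.card_pos
  have h5 : (Aᶜ.card : ℝ) = Fintype.card α - A.card := by
    rw [Finset.card_compl, Nat.cast_sub (Finset.card_le_univ A)]
  rw [h3, h5] at h4
  have h6 : (Fintype.card α - A.card : ℝ) ≤ Fintype.card α * (R - 1) := by
    have : 0 < μ ^ 2 := by positivity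
    nlinarith
  rw [le_div_iff₀ hc]; linarith

theorem ev_K (ε x : ℝ) (hε : 0 < ε) (hε1 : ε < 1) (hx : 0 < x) (hx1 : x < 1) :
    ∀ᶠ K : ℕ in atTop, 1 ≤ tailH K 1 ∧
      (1 - ε) * (2 ^ K) ^ 2 ≤ (1 - ε / 2) * (tailH K 1) ^ 2 ∧
      (K : ℝ) ^ 3 * (1 - x) ^ K ≤ 1 / 4 := by
  have l0 : Tendsto (fun K : ℕ => (K : ℝ) ^ 0 / 2 ^ K) atTop (𝓝 0) :=
    tendsto_pow_const_div_const_pow_of_one_lt 0 (by norm_num)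
  have l1 : Tendsto (fun K : ℕ => (K : ℝ) ^ 1 / 2 ^ K) atTop (𝓝 0) :=
    tendsto_pow_const_div_const_pow_of_one_lt 1 (by norm_num)
  have l2 : Tendsto (fun K : ℕ => (K : ℝ) ^ 2 / 2 ^ K) atTop (𝓝 0) :=
    tendsto_pow_const_div_const_pow_of_one_lt 2 (by norm_num)
  have l3 : Tendsto (fun K : ℕ => (K : ℝ) ^ 3 * (1 - x) ^ K) atTop (𝓝 0) :=
    tendsto_pow_const_mul_const_pow_of_abs_lt_one 3 (by rw [abs_lt]; constructor <;> linarith)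
  have l4 : Tendsto (fun K : ℕ => tailH K 1 / 2 ^ K) atTop (𝓝 1) := by
    have : (fun K : ℕ => tailH K 1 / 2 ^ K) = fun K : ℕ =>
        1 - (K : ℝ) ^ 0 / 2 ^ K - (K : ℝ) ^ 1 / 2 ^ K
          - ((K : ℝ) ^ 2 / 2 ^ K - (K : ℝ) ^ 1 / 2 ^ K) / 2 := by
      funext K
      have h2 : (2 : ℝ) ^ K ≠ 0 := by positivity
      unfold tailH
      rw [show (1 + 1 : ℝ) = 2 by norm_num]
      field_simp
    rw [this]
    have := ((l0.const_sub 1).sub l1).sub ((l2.sub l1).div_const 2)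
    simpa using this
  have l5 := (l4.pow 2).const_mul (1 - ε / 2)
  have l6 : Tendsto (fun K : ℕ => (2 : ℝ) ^ K) atTop atTop :=
    tendsto_pow_atTop_atTop_of_one_lt (by norm_num)
  filter_upwards [l3.eventually (ge_mem_nhds (show (0 : ℝ) < 1 / 4 by norm_num)),
    l5.eventually (lt_mem_nhds (show 1 - ε < (1 - ε / 2) * 1 ^ 2 by linarith)),
    l4.eventually (lt_mem_nhds (show (1 / 2 : ℝ) < 1 by norm_num)),
    l6.eventually_ge_atTop 2] with K h3 h5 h4 h6
  have hp : (0 : ℝ) < 2 ^ K := by positivity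
  refine ⟨?_, ?_, h3⟩
  · rw [lt_div_iff₀ hp] at h4; linarith
  · rw [div_pow, ← mul_div_assoc, lt_div_iff₀ (by positivity)] at h5; exact h5.le

set_option maxHeartbeats 1000000 in
theorem term_bound_s10 (ε x c t : ℝ) (K n m a : ℕ) (hε : 0 < ε) (hε1 : ε < 1)
    (hx : 0 < x) (hx1 : x < 1)
    (hent : ∀ n a : ℕ, a ≤ n → (n - a : ℝ) ≤ x * n →
      (n.choose a : ℝ) ≤ Real.exp (n * (ε / 4 * Real.log 2)))
    (hN : 1 ≤ tailH K 1)
    (hE2 : (1 - ε) * (2 ^ K) ^ 2 ≤ (1 - ε / 2) * (tailH K 1) ^ 2)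
    (hE3 : (K : ℝ) ^ 3 * (1 - x) ^ K ≤ 1 / 4)
    (hc : c ≤ (1 - ε) * 2 ^ K * Real.log 2) (hm : (m : ℝ) ≤ c * n)
    (hn : 0 < n) (ha : a ≤ n) (ht : 0 < t) :
    (n.choose a : ℝ) / 2 ^ n *
      (1 + ((tailH K 1) ^ 2)⁻¹ * tailH K (2 * a / n - 1)) ^ m
    ≤ (n.choose a : ℝ) / 2 ^ n * Real.exp (n * (K ^ 3 * t ^ 3))
      + Real.exp (-(n * t ^ 2 / 4)) + Real.exp (-(n * (ε / 4 * Real.log 2))) := by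
  have hn' : (0 : ℝ) < n := by exact_mod_cast hn
  have ha' : (a : ℝ) ≤ n := by exact_mod_cast ha
  have hch := choose_chernoff n a hn ha
  set r : ℝ := 2 * a / n - 1 with hr
  set P : ℝ := (n.choose a : ℝ) / 2 ^ n with hP
  have hP0 : 0 ≤ P := by positivity
  have hlog : 0 < Real.log 2 := Real.log_pos (by norm_num)
  have hlog1 : Real.log 2 < 1 := by linarith [Real.log_two_lt_d9]
  have hr1 : r ≤ 1 := by
    rw [hr]
    have : 2 * (a : ℝ) / n ≤ 2 := by rw [div_le_iff₀ hn']; linarith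
    linarith
  have hr0 : -1 ≤ r := by
    rw [hr]
    have : 0 ≤ 2 * (a : ℝ) / n := by positivity
    linarith
  have hN2 : 0 < (tailH K 1) ^ 2 := by positivity
  have hg0 : 0 ≤ 1 + ((tailH K 1) ^ 2)⁻¹ * tailH K r := by
    have h1 := (abs_le.1 (abs_tailH_le K (abs_le.2 ⟨hr0, hr1⟩))).1
    have h2 : -(tailH K 1) ^ 2 ≤ tailH K r := by nlinarith
    have h3 := mul_le_mul_of_nonneg_left h2 (inv_pos.2 hN2).le
    rw [mul_neg, inv_mul_cancel₀ hN2.ne'] at h3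
    linarith
  have hgexp : (1 + ((tailH K 1) ^ 2)⁻¹ * tailH K r) ^ m
      ≤ Real.exp (m * (((tailH K 1) ^ 2)⁻¹ * tailH K r)) := by
    rw [Real.exp_nat_mul]
    apply pow_le_pow_left₀ hg0
    linarith [Real.add_one_le_exp (((tailH K 1) ^ 2)⁻¹ * tailH K r)]
  have hexp1 : 1 ≤ Real.exp (n * (K ^ 3 * t ^ 3)) := Real.one_le_exp (by positivity)
  have e2 := (Real.exp_pos (-(n * t ^ 2 / 4))).le
  have e3 := (Real.exp_pos (-(n * (ε / 4 * Real.log 2)))).le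
  rcases le_or_gt r 0 with hneg | hpos
  · have hh := tailH_nonpos K hr0 hneg
    have hle : (1 + ((tailH K 1) ^ 2)⁻¹ * tailH K r) ^ m ≤ 1 := by
      apply pow_le_one₀ hg0
      have := mul_nonneg (inv_pos.2 hN2).le (neg_nonneg.2 hh)
      linarith
    have := mul_le_mul_of_nonneg_left (hle.trans hexp1) hP0
    linarith
  -- the density bound
  have h2K : (0 : ℝ) < 2 ^ K := by positivity
  have hbeta : (m : ℝ) * ((tailH K 1) ^ 2)⁻¹ ≤ n * ((1 - ε / 2) * Real.log 2 / 2 ^ K) := by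
    rw [← div_eq_mul_inv, div_le_iff₀ hN2]
    have h1 : (m : ℝ) ≤ (1 - ε) * 2 ^ K * Real.log 2 * n :=
      hm.trans (mul_le_mul_of_nonneg_right hc hn'.le)
    refine h1.trans ?_
    have h2 : (1 - ε) * 2 ^ K ≤ (1 - ε / 2) * (tailH K 1) ^ 2 / 2 ^ K := by
      rw [le_div_iff₀ h2K]; linarith
    have h3 := mul_le_mul_of_nonneg_right h2 (mul_nonneg hlog.le hn'.le)
    calc _ = (1 - ε) * 2 ^ K * (Real.log 2 * n) := by ring
      _ ≤ _ := h3
      _ = _ := by ring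
  have key : ∀ B : ℝ, 0 ≤ B → tailH K r ≤ 2 ^ K * B →
      (m : ℝ) * (((tailH K 1) ^ 2)⁻¹ * tailH K r) ≤ n * ((1 - ε / 2) * Real.log 2 * B) := by
    intro B hB hB2
    rw [← mul_assoc]
    calc _ ≤ (m : ℝ) * ((tailH K 1) ^ 2)⁻¹ * (2 ^ K * B) :=
          mul_le_mul_of_nonneg_left hB2 (by positivity)
      _ ≤ n * ((1 - ε / 2) * Real.log 2 / 2 ^ K) * (2 ^ K * B) :=
          mul_le_mul_of_nonneg_right hbeta (by positivity)
      _ = _ := by field_simp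
  have hco : (1 - ε / 2) * Real.log 2 ≤ 1 := by nlinarith
  have key1 : ∀ B : ℝ, 0 ≤ B → tailH K r ≤ 2 ^ K * B →
      (m : ℝ) * (((tailH K 1) ^ 2)⁻¹ * tailH K r) ≤ n * B := by
    intro B hB hB2
    refine (key B hB hB2).trans (mul_le_mul_of_nonneg_left ?_ hn'.le)
    nlinarith
  rcases le_or_gt r t with hrt | hrt
  · -- small overlap
    have hh : tailH K r ≤ 2 ^ K * (K ^ 3 * t ^ 3) := by
      refine (tailH_le K hpos.le).trans ?_
      have : (1 + r) ^ K ≤ 2 ^ K := pow_le_pow_left₀ (by linarith) (by linarith) K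
      calc (K : ℝ) ^ 3 * r ^ 3 * (1 + r) ^ K ≤ (K : ℝ) ^ 3 * t ^ 3 * 2 ^ K := by gcongr
        _ = _ := by ring
    have h1 := hgexp.trans (Real.exp_le_exp.2 (key1 _ (by positivity) hh))
    have := mul_le_mul_of_nonneg_left h1 hP0
    linarith
  rcases le_or_gt r (1 - 2 * x) with hrx | hrx
  · -- middle overlap
    have hh : tailH K r ≤ 2 ^ K * (r ^ 2 / 4) := by
      refine (tailH_le K hpos.le).trans ?_
      have : (1 + r) ^ K ≤ 2 ^ K * (1 - x) ^ K := by
        rw [← mul_pow]; exact pow_le_pow_left₀ (by linarith) (by linarith) K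
      calc (K : ℝ) ^ 3 * r ^ 3 * (1 + r) ^ K ≤ (K : ℝ) ^ 3 * r ^ 3 * (2 ^ K * (1 - x) ^ K) := by
            gcongr
        _ = 2 ^ K * r ^ 2 * (K ^ 3 * (1 - x) ^ K) * r := by ring
        _ ≤ 2 ^ K * r ^ 2 * (1 / 4) * 1 := by
            gcongr
        _ = _ := by ring
    have h1 := hgexp.trans (Real.exp_le_exp.2 (key1 _ (by positivity) hh))
    have h2 := mul_le_mul hch h1 (pow_nonneg hg0 m) (Real.exp_pos _).le
    rw [← Real.exp_add] at h2
    have h3 : Real.exp (-(n * r ^ 2 / 2) + n * (r ^ 2 / 4)) ≤ Real.exp (-(n * t ^ 2 / 4)) := by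
      apply Real.exp_le_exp.2
      have : t ^ 2 ≤ r ^ 2 := pow_le_pow_left₀ ht.le hrt.le 2
      have h4 := mul_le_mul_of_nonneg_left this hn'.le
      linarith
    have : 0 ≤ P * Real.exp (n * (K ^ 3 * t ^ 3)) := by positivity
    linarith
  · -- large overlap
    have hh : tailH K r ≤ 2 ^ K * 1 := by
      rw [mul_one]; exact tailH_le_two_pow K hpos.le hr1
    have h1 := hgexp.trans (Real.exp_le_exp.2 (key _ zero_le_one hh))
    have hxa : (n - a : ℝ) ≤ x * n := by
      have : (2 * a : ℝ) = n * (r + 1) := by rw [hr]; field_simp; ring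
      nlinarith
    have hC := hent n a ha hxa
    have h2n : (2 : ℝ) ^ n = Real.exp (n * Real.log 2) := by
      rw [Real.exp_nat_mul, Real.exp_log (by norm_num)]
    have hP1 : P ≤ Real.exp (n * (ε / 4 * Real.log 2) - n * Real.log 2) := by
      rw [hP, Real.exp_sub, ← h2n]; gcongr
    have h2 := mul_le_mul hP1 h1 (pow_nonneg hg0 m) (Real.exp_pos _).le
    rw [← Real.exp_add] at h2
    have h3 : n * (ε / 4 * Real.log 2) - n * Real.log 2 + n * ((1 - ε / 2) * Real.log 2 * 1)
        = -(n * (ε / 4 * Real.log 2)) := by ring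
    rw [h3] at h2
    have : 0 ≤ P * Real.exp (n * (K ^ 3 * t ^ 3)) := by positivity
    linarith

theorem sum_choose_div (n : ℕ) :
    ∑ a ∈ Finset.range (n + 1), (n.choose a : ℝ) / 2 ^ n = 1 := by
  rw [← Finset.sum_div, div_eq_one_iff_eq (by positivity)]
  exact_mod_cast Nat.sum_range_choose n

theorem tendsto_upper (ε : ℝ) (K : ℕ) (hε : 0 < ε) :
    Tendsto (fun n : ℕ => Real.exp (n * (K ^ 3 * ((n : ℝ) ^ (-(2 / 5) : ℝ)) ^ 3))
      + (n + 1) * Real.exp (-(n * ((n : ℝ) ^ (-(2 / 5) : ℝ)) ^ 2 / 4))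
      + (n + 1) * Real.exp (-(n * (ε / 4 * Real.log 2)))) atTop (𝓝 1) := by
  have hlog : 0 < Real.log 2 := Real.log_pos (by norm_num)
  have hcast : Tendsto (fun n : ℕ => (n : ℝ)) atTop atTop := tendsto_natCast_atTop_atTop
  have e1 : ∀ᶠ n : ℕ in atTop, (n : ℝ) * (K ^ 3 * ((n : ℝ) ^ (-(2 / 5) : ℝ)) ^ 3)
      = K ^ 3 * (n : ℝ) ^ (-(1 / 5) : ℝ) := by
    filter_upwards [eventually_gt_atTop 0] with n hn
    have hn' : (0 : ℝ) < n := by exact_mod_cast hn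
    rw [← Real.rpow_natCast ((n : ℝ) ^ (-(2 / 5) : ℝ)), ← Real.rpow_mul hn'.le]
    have : (n : ℝ) ^ (-(1 / 5) : ℝ) = n * (n : ℝ) ^ (-(2 / 5) * ((3 : ℕ) : ℝ) : ℝ) := by
      rw [← Real.rpow_one_add' hn'.le (by norm_num)]; norm_num
    rw [this]; ring
  have e2 : ∀ᶠ n : ℕ in atTop, (n : ℝ) * ((n : ℝ) ^ (-(2 / 5) : ℝ)) ^ 2 / 4
      = (n : ℝ) ^ (1 / 5 : ℝ) / 4 := by
    filter_upwards [eventually_gt_atTop 0] with n hn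
    have hn' : (0 : ℝ) < n := by exact_mod_cast hn
    rw [← Real.rpow_natCast, ← Real.rpow_mul hn'.le]
    have : (n : ℝ) ^ (1 / 5 : ℝ) = n * (n : ℝ) ^ (-(2 / 5) * ((2 : ℕ) : ℝ) : ℝ) := by
      rw [← Real.rpow_one_add' hn'.le (by norm_num)]; norm_num
    rw [this]
  have t1 : Tendsto (fun n : ℕ => Real.exp (n * (K ^ 3 * ((n : ℝ) ^ (-(2 / 5) : ℝ)) ^ 3)))
      atTop (𝓝 1) := by
    have h := ((tendsto_rpow_neg_atTop (show (0 : ℝ) < 1 / 5 by norm_num)).comp hcast).const_mul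
      ((K : ℝ) ^ 3)
    rw [mul_zero] at h
    have h2 := (Real.continuous_exp.tendsto 0).comp h
    rw [Real.exp_zero] at h2
    refine h2.congr' ?_
    filter_upwards [e1] with n hn
    simp [hn]
  have hlin : ∀ b : ℝ, 0 < b →
      Tendsto (fun y : ℝ => (y ^ 5 + 1) * Real.exp (-(b * y))) atTop (𝓝 0) := by
    intro b hb
    have h5 := Real.tendsto_pow_mul_exp_neg_atTop_nhds_zero 5
    have h0 := Real.tendsto_pow_mul_exp_neg_atTop_nhds_zero 0
    have hs : Tendsto (fun y : ℝ => b * y) atTop atTop := tendsto_id.const_mul_atTop hb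
    have := ((h5.comp hs).const_mul ((b ^ 5)⁻¹)).add (h0.comp hs)
    simp only [mul_zero, add_zero] at this
    refine this.congr fun y => ?_
    simp only [Function.comp]
    field_simp
  have t2 : Tendsto (fun n : ℕ => ((n : ℝ) + 1) *
      Real.exp (-(n * ((n : ℝ) ^ (-(2 / 5) : ℝ)) ^ 2 / 4))) atTop (𝓝 0) := by
    have h := (hlin (1 / 4) (by norm_num)).comp
      ((tendsto_rpow_atTop (show (0 : ℝ) < 1 / 5 by norm_num)).comp hcast)
    refine h.congr' ?_
    filter_upwards [e2] with n hn
    simp only [Function.comp]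
    rw [hn, ← Real.rpow_natCast, ← Real.rpow_mul (by positivity)]
    norm_num
    left; ring
  have t3 : Tendsto (fun n : ℕ => ((n : ℝ) + 1) *
      Real.exp (-(n * (ε / 4 * Real.log 2)))) atTop (𝓝 0) := by
    have hb : 0 < ε / 4 * Real.log 2 := by positivity
    have h := (hlin _ hb).comp hcast
    refine squeeze_zero (fun n => by positivity) (fun n => ?_) h
    simp only [Function.comp]
    rw [mul_comm (n : ℝ) (ε / 4 * Real.log 2)]
    gcongr
    rcases Nat.eq_zero_or_pos n with h | h
    · simp [h]
    · exact le_self_pow₀ (by exact_mod_cast h) (by norm_num)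
  simpa using (t1.add t2).add t3

theorem ratioR_le (ε x c t : ℝ) (K n m : ℕ) (hε : 0 < ε) (hε1 : ε < 1)
    (hx : 0 < x) (hx1 : x < 1)
    (hent : ∀ n a : ℕ, a ≤ n → (n - a : ℝ) ≤ x * n →
      (n.choose a : ℝ) ≤ Real.exp (n * (ε / 4 * Real.log 2)))
    (hN : 1 ≤ tailH K 1)
    (hE2 : (1 - ε) * (2 ^ K) ^ 2 ≤ (1 - ε / 2) * (tailH K 1) ^ 2)
    (hE3 : (K : ℝ) ^ 3 * (1 - x) ^ K ≤ 1 / 4)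
    (hc : c ≤ (1 - ε) * 2 ^ K * Real.log 2) (hm : (m : ℝ) ≤ c * n)
    (hn : 0 < n) (ht : 0 < t) :
    ratioR n m K ≤ Real.exp (n * (K ^ 3 * t ^ 3))
      + (n + 1) * Real.exp (-(n * t ^ 2 / 4))
      + (n + 1) * Real.exp (-(n * (ε / 4 * Real.log 2))) := by
  unfold ratioR
  refine (Finset.sum_le_sum fun a ha => term_bound_s10 ε x c t K n m a hε hε1 hx hx1 hent hN hE2 hE3
    hc hm hn (Nat.lt_succ_iff.1 (Finset.mem_range.1 ha)) ht).trans (le_of_eq ?_)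
  rw [Finset.sum_add_distrib, Finset.sum_add_distrib, ← Finset.sum_mul, sum_choose_div]
  simp

theorem unsat_Zw {n m K : ℕ} (hK : tailH K 1 ≠ 0) (ω : KSatSpace n m K)
    (h : ¬ IsSatisfiable ω) : Zw ω = 0 := by
  unfold Zw
  refine Finset.sum_eq_zero fun σ _ => ?_
  have h1 : ¬ Satisfies σ ω := fun hs => h ⟨σ, hs⟩
  simp only [Satisfies, not_forall, not_exists, not_not] at h1
  obtain ⟨j, hj⟩ := h1
  refine Finset.prod_eq_zero (Finset.mem_univ j) (cw_ones K hK _ fun k => ?_)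
  simp only [litv, hj k, spin_mul_self]

theorem measure_ge {n m K : ℕ} (hn : 0 < n) (hK : tailH K 1 ≠ 0) :
    ENNReal.ofReal (2 - ratioR n m K) ≤
      uniformMeasure (KSatSpace n m K) {ω | IsSatisfiable ω} := by
  classical
  haveI : Nonempty (Fin n) := ⟨⟨0, hn⟩⟩
  have hn' : (n : ℝ) ≠ 0 := by positivity
  set A : Finset (KSatSpace n m K) := Finset.univ.filter (fun ω => IsSatisfiable ω) with hA
  have hcard : (Fintype.card (KSatSpace n m K) : ℝ) = ((2 * n : ℝ) ^ K) ^ m := by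
    simp [KSatSpace, mul_comm]
  have hch := cheb (α := KSatSpace n m K) Zw (2 ^ n) (ratioR n m K) (by positivity)
    (by rw [hcard, mul_comm]; exact sum_Zw n m K)
    (by rw [hcard, mul_comm _ ((2 ^ n : ℝ) ^ 2)]; exact sum_Zw_sq n m K hn) A
    (fun ω hω => unsat_Zw hK ω (by simpa [hA] using hω))
  have hset : {ω : KSatSpace n m K | IsSatisfiable ω} = (A : Set (KSatSpace n m K)) := by
    ext; simp [hA]
  have hpos : (0 : ℝ) < Fintype.card (KSatSpace n m K) := by exact_mod_cast Fintype.card_pos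
  rw [hset, uniformMeasure, Measure.smul_apply, Measure.count_apply_finset, smul_eq_mul]
  refine (ENNReal.ofReal_le_ofReal hch).trans (le_of_eq ?_)
  rw [ENNReal.ofReal_div_of_pos hpos, ENNReal.ofReal_natCast, ENNReal.ofReal_natCast, mul_comm,
    div_eq_mul_inv]

theorem measure_le {n m K : ℕ} (s : Set (KSatSpace n m K)) :
    uniformMeasure (KSatSpace n m K) s ≤ 1 := by
  refine (measure_mono (Set.subset_univ s)).trans ?_
  rw [uniformMeasure, Measure.smul_apply, Measure.count_univ, smul_eq_mul]
  simp only [ENat.card_eq_coe_fintype_card]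
  exact ENNReal.inv_mul_le_one _

/-- for every `ε > 0` there is `K₀` such that for every `K ≥ K₀` and
every real `c` with `0 < c ≤ (1-ε)·2^K·log 2`, the probability that the random
`K`-SAT formula `Φ_{n,⌊cn⌋}` is satisfiable tends to `1` as `n → ∞`. -/
theorem random_ksat_sat_below_threshold (ε : ℝ) (hε : 0 < ε) :
    ∃ K₀ : ℕ, ∀ K : ℕ, K₀ ≤ K → ∀ c : ℝ,
      0 < c → c ≤ (1 - ε) * 2 ^ K * Real.log 2 →
      Tendsto
        (fun n : ℕ =>
          uniformMeasure (KSatSpace n ⌊c * n⌋₊ K) {ω | IsSatisfiable ω})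
        atTop (𝓝 1) := by
  have hlog : 0 < Real.log 2 := Real.log_pos (by norm_num)
  rcases le_or_gt 1 ε with h1 | hε1
  · refine ⟨0, fun K _ c hc hc2 => ?_⟩
    exfalso
    have : 0 ≤ (ε - 1) * (2 ^ K * Real.log 2) := mul_nonneg (by linarith) (by positivity)
    nlinarith
  have hlog1 : Real.log 2 < 1 := by linarith [Real.log_two_lt_d9]
  obtain ⟨x, hx, hx1, hent⟩ := choose_entropy (ε / 4 * Real.log 2) (by positivity) (by nlinarith)
  obtain ⟨K₀, hK₀⟩ := eventually_atTop.1 (ev_K ε x hε hε1 hx hx1)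
  refine ⟨K₀, fun K hK c hc0 hc => ?_⟩
  obtain ⟨hN, hE2, hE3⟩ := hK₀ K hK
  have hup := tendsto_upper ε K hε
  have hlow := ENNReal.tendsto_ofReal (hup.const_sub 2)
  rw [show (2 - 1 : ℝ) = 1 by norm_num, ENNReal.ofReal_one] at hlow
  refine tendsto_of_tendsto_of_tendsto_of_le_of_le' hlow tendsto_const_nhds ?_
    (Eventually.of_forall fun n => measure_le _)
  filter_upwards [eventually_gt_atTop 0] with n hn
  have hn' : (0 : ℝ) < n := by exact_mod_cast hn
  refine le_trans (ENNReal.ofReal_le_ofReal ?_) (measure_ge hn (by linarith))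
  have := ratioR_le ε x c ((n : ℝ) ^ (-(2 / 5) : ℝ)) K n ⌊c * n⌋₊ hε hε1 hx hx1 hent hN hE2 hE3 hc
    (Nat.floor_le (by positivity)) hn (Real.rpow_pos_of_pos hn' _)
  linarith
end

section
/- Let (X, dist) be a pseudometric space, let 0 ≤ ν₁ < ν₂ be reals, and let x₀, x₁, …, x_T be points of X such that dist(x₀, x_t) ∉ (ν₁, ν₂) for every 0 ≤ t ≤ T and dist(x₀, x_T) ≥ ν₂. Then there exists an index 0 ≤ τ < T with dist(x_τ, x_{τ+1}) ≥ ν₂ − ν₁. In particular, if dist(x_t, x_{t+1}) < ν₂ − ν₁ for all t (a 'stable' trajectory), no such sequence exists; this is the core argument showing the Overlap Gap Property obstructs stable algorithms. -/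
/-- the OGP obstruction to stable trajectories: in a pseudometric
space, if a sequence of points `x 0, x 1, …, x T` satisfies
`dist (x 0) (x t) ∉ (ν₁, ν₂)` for all `t ≤ T` and `dist (x 0) (x T) ≥ ν₂`, then
some consecutive pair of points is at distance at least `ν₂ - ν₁`. -/
theorem ogp_obstructs_stable_trajectories
    {X : Type*} [PseudoMetricSpace X] (ν₁ ν₂ : ℝ) (hν₁ : 0 ≤ ν₁) (hν : ν₁ < ν₂)
    (T : ℕ) (x : ℕ → X)
    (hgap : ∀ t ≤ T, dist (x 0) (x t) ∉ Set.Ioo ν₁ ν₂)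
    (hend : ν₂ ≤ dist (x 0) (x T)) :
    ∃ τ < T, ν₂ - ν₁ ≤ dist (x τ) (x (τ + 1)) := by
  by_contra! hcon
  have key : ∀ t ≤ T, dist (x 0) (x t) ≤ ν₁ := by
    intro t
    induction t with
    | zero => intro _; simpa using hν₁
    | succ t ih =>
      intro ht
      have h1 := ih (by omega)
      have h2 := hcon t (by omega)
      have h3 := dist_triangle (x 0) (x t) (x (t + 1))
      by_contra! h4
      exact hgap (t + 1) ht ⟨h4, by linarith⟩
  have := key T le_rfl
  linarith
end
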